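/- Let 0 < θ < 1/2, ℓ ∈ ℕ and σ > 0. There exists a constant C, depending only on Ω, θ, ℓ and σ, such that the following holds for every conforming triangulation 𝒯 of Ω with σ_𝒯 ≥ σ. Let w ∈ H¹(Ω) be continuous on the closure of Ω with w = 0 on ∂Ω and |w|_{1+θ,Ω} < ∞, let I_𝒯w be any element of V_𝒯 that agrees with w at every node of 𝒩_ℓ, and set w̃ := w − I_𝒯w. Then for every vertex z ∈ 𝒱 and all x, y ∈ ω_z: |w̃(x) − w̃(y)| ≤ C · |x − y|^θ · |w|_{1+θ, int ω_z}. Moreover, if c = w̃(x^z) for some x^z ∈ ω_z, then for every triangle T ∈ 𝒯 with z ∈ T and every edge E of 𝒯 with z ∈ E: ‖w̃ − c‖_{L²(T)} ≤ C · h_T^{1+θ} · |w|_{1+θ, int ω_z} and ‖w̃ − c‖_{L²(E)} ≤ C · h_E^{1/2+θ} · |w|_{1+θ, int ω_z}, where h_E is the length of E and the integral over E is with respect to the 1-dimensional Hausdorff measure. -/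

import Mathlib

open MeasureTheory Metric Set Filter
open scoped Topology NNReal ENNReal

noncomputable section

abbrev E2 := EuclideanSpace ℝ (Fin 2)

/-- Squared Gagliardo seminorm of order `s` on `G ⊆ ℝ²`. -/
def gagSq (s : ℝ) (G : Set E2) (v : E2 → ℝ) : ℝ :=
  ∫ x in G, ∫ y in G, (v x - v y) ^ 2 / dist x y ^ (2 + 2 * s)

/-- Gagliardo seminorm. -/
def gagSemi (s : ℝ) (G : Set E2) (v : E2 → ℝ) : ℝ := Real.sqrt (gagSq s G v)

/-- Finiteness of the Gagliardo seminorm. -/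
def GagFin (s : ℝ) (G : Set E2) (v : E2 → ℝ) : Prop :=
  Integrable (fun p : E2 × E2 => (v p.1 - v p.2) ^ 2 / dist p.1 p.2 ^ (2 + 2 * s))
    ((volume.restrict G).prod (volume.restrict G))

/-- Test functions: smooth compactly supported functions with support in `G`. -/
def IsTestFun (G : Set E2) (φ : E2 → ℝ) : Prop :=
  ContDiff ℝ (⊤ : ℕ∞) φ ∧ HasCompactSupport φ ∧ tsupport φ ⊆ G

/-- Partial derivative in the `i`-th coordinate direction. -/
def pd (i : Fin 2) (f : E2 → ℝ) (x : E2) : ℝ := fderiv ℝ f x (EuclideanSpace.single i 1)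

/-- Laplacian. -/
def lap (f : E2 → ℝ) (x : E2) : ℝ := ∑ i : Fin 2, pd i (pd i f) x

/-- Weak partial derivative on an open set. -/
def HasWeakPD (G : Set E2) (i : Fin 2) (v g : E2 → ℝ) : Prop :=
  ∀ φ : E2 → ℝ, IsTestFun G φ →
    (∫ x in G, v x * pd i φ x) = - ∫ x in G, g x * φ x

/-- Membership in `H_0^s`, `0 < s < 1`. -/
def MemH0 (s : ℝ) (Ω : Set E2) (v : E2 → ℝ) : Prop :=
  MemLp v 2 (volume.restrict Ω) ∧
  ∃ φ : ℕ → E2 → ℝ, (∀ n, IsTestFun Ω (φ n)) ∧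
    Tendsto (fun n => Real.sqrt ((∫ x in Ω, (v x - φ n x) ^ 2) +
      gagSq s Ω fun x => v x - φ n x)) atTop (nhds 0)

/-- Lipschitz boundary: near every boundary point the set is the region above
the graph of a Lipschitz function in some direction `ν`. -/
def HasLipschitzBoundary (G : Set E2) : Prop :=
  ∀ x ∈ frontier G, ∃ (ν : E2) (L : NNReal) (γ : E2 → ℝ) (U : Set E2),
    ‖ν‖ = 1 ∧ LipschitzWith L γ ∧ IsOpen U ∧ x ∈ U ∧
    G ∩ U = {y ∈ U | γ (y - (inner ℝ y ν : ℝ) • ν) < (inner ℝ y ν : ℝ)}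

/-- Polygonal set: the boundary is a finite union of segments. -/
def IsPolygonal (Ω : Set E2) : Prop :=
  ∃ S : Finset (E2 × E2), frontier Ω = ⋃ p ∈ S, segment ℝ p.1 p.2

/-- The closed triangle spanned by three points. -/
def triSet (t : Fin 3 → E2) : Set E2 := convexHull ℝ (Set.range t)

/-- The edge of a triangle opposite to the vertex `t j`. -/
def edgeSeg (t : Fin 3 → E2) (j : Fin 3) : Set E2 := segment ℝ (t (j + 1)) (t (j + 2))

/-- All interior angles of the triangle `t` are at least `σ`. -/
def angleLB (σ : ℝ) (t : Fin 3 → E2) : Prop :=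
  ∀ i : Fin 3, σ ≤ EuclideanGeometry.angle (t (i + 1)) (t i) (t (i + 2))

/-- A conforming triangulation of `Ω`. -/
structure Triangulation (Ω : Set E2) where
  tris : Finset (Fin 3 → E2)
  nondeg : ∀ t ∈ tris, AffineIndependent ℝ t
  cover : (⋃ t ∈ tris, triSet t) = closure Ω
  conform : ∀ t₁ ∈ tris, ∀ t₂ ∈ tris, t₁ ≠ t₂ →
    triSet t₁ ∩ triSet t₂ = ∅ ∨
    (∃ i j : Fin 3, t₁ i = t₂ j ∧ triSet t₁ ∩ triSet t₂ = {t₁ i}) ∨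
    (∃ i j : Fin 3, edgeSeg t₁ i = edgeSeg t₂ j ∧ triSet t₁ ∩ triSet t₂ = edgeSeg t₁ i)

/-- Minimum-angle condition for a triangulation. -/
def Triangulation.angleGE {Ω : Set E2} (𝒯 : Triangulation Ω) (σ : ℝ) : Prop :=
  ∀ t ∈ 𝒯.tris, angleLB σ t

/-- Local mesh size `h_T = |T|^{1/2}`. -/
def hT (t : Fin 3 → E2) : ℝ := Real.sqrt (volume (triSet t)).toReal

/-- Evaluation of a polynomial in two variables. -/
def pfun (p : MvPolynomial (Fin 2) ℝ) (x : E2) : ℝ := MvPolynomial.eval (fun i => x i) p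

/-- The finite element space `V_𝒯` of continuous piecewise polynomials of degree `≤ ℓ`
vanishing on the boundary. -/
def MemV (Ω : Set E2) (𝒯 : Triangulation Ω) (ℓ : ℕ) (V : E2 → ℝ) : Prop :=
  ContinuousOn V (closure Ω) ∧ (∀ x ∈ frontier Ω, V x = 0) ∧
  ∀ t ∈ 𝒯.tris, ∃ p : MvPolynomial (Fin 2) ℝ, p.totalDegree ≤ ℓ ∧
    ∀ x ∈ triSet t, V x = pfun p x

/-- A Galerkin solution for the point sources `(xs j, α j)`. -/
def IsGalerkin (Ω : Set E2) (𝒯 : Triangulation Ω) (ℓ : ℕ) {N : ℕ}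
    (xs : Fin N → E2) (α : Fin N → ℝ) (U : E2 → ℝ) : Prop :=
  MemV Ω 𝒯 ℓ U ∧ ∀ V : E2 → ℝ, MemV Ω 𝒯 ℓ V →
    (∫ x in Ω, ∑ i : Fin 2, pd i U x * pd i V x) = ∑ j, α j * V (xs j)

/-- The exact solution of `-Δu = Σ α_j δ_{x_j}` in `H_0^s(Ω)`. -/
def IsExact (Ω : Set E2) (s : ℝ) {N : ℕ} (xs : Fin N → E2) (α : Fin N → ℝ)
    (u : E2 → ℝ) : Prop :=
  MemH0 s Ω u ∧ ∀ φ : E2 → ℝ, IsTestFun Ω φ →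
    (∫ x in Ω, u x * (-(lap φ x))) = ∑ j, α j * φ (xs j)

/-- A family of polynomials representing a piecewise polynomial `U` on the triangulation. -/
def PolyRep (Ω : Set E2) (𝒯 : Triangulation Ω) (ℓ : ℕ) (U : E2 → ℝ)
    (P : (Fin 3 → E2) → MvPolynomial (Fin 2) ℝ) : Prop :=
  ∀ t ∈ 𝒯.tris, (P t).totalDegree ≤ ℓ ∧ ∀ x ∈ triSet t, U x = pfun (P t) x

/-- Laplacian of a polynomial. -/
def lapP (p : MvPolynomial (Fin 2) ℝ) : E2 → ℝ :=
  pfun (MvPolynomial.pderiv (0 : Fin 2) (MvPolynomial.pderiv (0 : Fin 2) p) +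
        MvPolynomial.pderiv (1 : Fin 2) (MvPolynomial.pderiv (1 : Fin 2) p))

/-- Gradient of a polynomial. -/
def gradP (p : MvPolynomial (Fin 2) ℝ) (x : E2) : E2 :=
  EuclideanSpace.single 0 (pfun (MvPolynomial.pderiv (0 : Fin 2) p) x) +
  EuclideanSpace.single 1 (pfun (MvPolynomial.pderiv (1 : Fin 2) p) x)

/-- Rotation by 90 degrees. -/
def rot (v : E2) : E2 := EuclideanSpace.single 0 (v 1) - EuclideanSpace.single 1 (v 0)

/-- Outward unit normal of the edge `[a,b]` of the triangle `[a,b,c]`, pointing away from `c`. -/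
def nrml (a b c : E2) : E2 :=
  if (inner ℝ (‖rot (b - a)‖⁻¹ • rot (b - a)) (c - a) : ℝ) ≤ 0 then
    ‖rot (b - a)‖⁻¹ • rot (b - a)
  else -(‖rot (b - a)‖⁻¹ • rot (b - a))

open Classical in
/-- The squared `L²` norm over the edge `edgeSeg t j` of the jump of the normal flux of the
piecewise polynomial with pieces `P`. -/
def jumpSqInt (𝒯 : Finset (Fin 3 → E2)) (P : (Fin 3 → E2) → MvPolynomial (Fin 2) ℝ)
    (t : Fin 3 → E2) (j : Fin 3) : ℝ :=
  if h : ∃ t', t' ∈ 𝒯 ∧ t' ≠ t ∧ triSet t ∩ triSet t' = edgeSeg t j then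
    ∫ x in edgeSeg t j,
      (inner ℝ (gradP (P t) x - gradP (P h.choose) x)
        (‖rot (t (j + 2) - t (j + 1))‖⁻¹ • rot (t (j + 2) - t (j + 1))) : ℝ) ^ 2 ∂(μH[1])
  else 0

/-- Squared error indicator `η_{T,θ}²`. -/
def etaSq (θ : ℝ) {Ω : Set E2} (𝒯 : Triangulation Ω)
    (P : (Fin 3 → E2) → MvPolynomial (Fin 2) ℝ) (t : Fin 3 → E2) : ℝ :=
  hT t ^ (2 + 2 * θ) * (∫ x in triSet t, (lapP (P t) x) ^ 2) +
  hT t ^ (1 + 2 * θ) * ∑ j : Fin 3, jumpSqInt 𝒯.tris P t j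

/-- The vertices of a triangulation. -/
def Triangulation.verts {Ω : Set E2} (𝒯 : Triangulation Ω) : Finset E2 :=
  letI := Classical.decEq E2
  𝒯.tris.biUnion fun t => {t 0, t 1, t 2}

/-- The star `ω_z` around a vertex `z`. -/
def starZ {Ω : Set E2} (𝒯 : Triangulation Ω) (z : E2) : Set E2 :=
  ⋃ t ∈ 𝒯.tris, ⋃ (_ : ∃ i, t i = z), triSet t

/-- The hat function `λ_z`: continuous, piecewise affine, `1` at `z`, `0` at other vertices. -/
def IsHat (Ω : Set E2) (𝒯 : Triangulation Ω) (z : E2) (lam : E2 → ℝ) : Prop :=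
  ContinuousOn lam (closure Ω) ∧
  (∀ t ∈ 𝒯.tris, ∃ f : E2 →ᵃ[ℝ] ℝ, ∀ x ∈ triSet t, lam x = f x) ∧
  lam z = 1 ∧ ∀ z' ∈ 𝒯.verts, z' ≠ z → lam z' = 0

/-- Lagrange nodes of order `ℓ` of a triangle. -/
def lagNodes (ℓ : ℕ) (t : Fin 3 → E2) : Set E2 :=
  {x | ∃ a : Fin 3 → ℕ, (∑ i, a i) = ℓ ∧ x = (ℓ : ℝ)⁻¹ • ∑ i, (a i : ℝ) • t i}

/-- The nodes `𝒩_ℓ` lying in `Ω`. -/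
def nodes (Ω : Set E2) (𝒯 : Triangulation Ω) (ℓ : ℕ) : Set E2 :=
  {x ∈ Ω | ∃ t ∈ 𝒯.tris, x ∈ lagNodes ℓ t}

/-- `N̂_ℓ = 𝒩_ℓ ∪ ∂Ω`. -/
def nodesHat (Ω : Set E2) (𝒯 : Triangulation Ω) (ℓ : ℕ) : Set E2 :=
  nodes Ω 𝒯 ℓ ∪ frontier Ω

open Classical in
/-- `A_z^+`. -/
def Aplus (Ω : Set E2) (𝒯 : Triangulation Ω) (ℓ : ℕ) {N : ℕ}
    (xs : Fin N → E2) (α : Fin N → ℝ) (z : E2) : Finset (Fin N) :=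
  Finset.univ.filter fun j => xs j ∈ starZ 𝒯 z \ nodes Ω 𝒯 ℓ ∧ 0 < α j

open Classical in
/-- `A_z^-`. -/
def Aminus (Ω : Set E2) (𝒯 : Triangulation Ω) (ℓ : ℕ) {N : ℕ}
    (xs : Fin N → E2) (α : Fin N → ℝ) (z : E2) : Finset (Fin N) :=
  Finset.univ.filter fun j => xs j ∈ starZ 𝒯 z \ nodes Ω 𝒯 ℓ ∧ α j < 0

/-- `σ^+_{z,j}`. -/
def sigPlus (Ω : Set E2) (𝒯 : Triangulation Ω) (ℓ : ℕ) (θ : ℝ) {N : ℕ}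
    (xs : Fin N → E2) (α : Fin N → ℝ) (z : E2) (j : Fin N) : ℝ :=
  if h : (Aminus Ω 𝒯 ℓ xs α z).Nonempty then
    min (infDist (xs j) (nodesHat Ω 𝒯 ℓ) ^ θ +
          (Aminus Ω 𝒯 ℓ xs α z).sup' h fun i => infDist (xs i) (nodesHat Ω 𝒯 ℓ) ^ θ)
        ((Aminus Ω 𝒯 ℓ xs α z).sup' h fun i => dist (xs j) (xs i) ^ θ)
  else 0

/-- `σ^-_{z,j}`. -/
def sigMinus (Ω : Set E2) (𝒯 : Triangulation Ω) (ℓ : ℕ) (θ : ℝ) {N : ℕ}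
    (xs : Fin N → E2) (α : Fin N → ℝ) (z : E2) (j : Fin N) : ℝ :=
  if h : (Aplus Ω 𝒯 ℓ xs α z).Nonempty then
    min (infDist (xs j) (nodesHat Ω 𝒯 ℓ) ^ θ +
          (Aplus Ω 𝒯 ℓ xs α z).sup' h fun i => infDist (xs i) (nodesHat Ω 𝒯 ℓ) ^ θ)
        ((Aplus Ω 𝒯 ℓ xs α z).sup' h fun i => dist (xs j) (xs i) ^ θ)
  else 0

open Classical in
/-- Local oscillation `ξ_θ(z)`, given the family `Λ` of hat functions. -/
def xiZ (Ω : Set E2) (𝒯 : Triangulation Ω) (ℓ : ℕ) (θ : ℝ) {N : ℕ}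
    (xs : Fin N → E2) (α : Fin N → ℝ) (Λ : E2 → E2 → ℝ) (z : E2) : ℝ :=
  if z ∈ frontier Ω then
    ∑ j, infDist (xs j) (nodesHat Ω 𝒯 ℓ) ^ θ * |α j| * Λ z (xs j)
  else
    min (∑ j ∈ Aplus Ω 𝒯 ℓ xs α z, sigPlus Ω 𝒯 ℓ θ xs α z j * |α j| * Λ z (xs j))
        (∑ j ∈ Aminus Ω 𝒯 ℓ xs α z, sigMinus Ω 𝒯 ℓ θ xs α z j * |α j| * Λ z (xs j))

/-- Global oscillation `ξ_θ`. -/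
def xiGlob (Ω : Set E2) (𝒯 : Triangulation Ω) (ℓ : ℕ) (θ : ℝ) {N : ℕ}
    (xs : Fin N → E2) (α : Fin N → ℝ) (Λ : E2 → E2 → ℝ) : ℝ :=
  Real.sqrt (∑ z ∈ 𝒯.verts, (xiZ Ω 𝒯 ℓ θ xs α Λ z) ^ 2)

/-!
On a convex domain of bounded aspect ratio, a function whose gradient has finite Gagliardo energy
`S²` of order `θ` is close to an affine function: its gradient deviates from its average by
`≲ S r^θ` in the mean over similar subdomains of size `r`, and summing over shrinking subdomains
(Morrey's argument) shows that `w` minus an affine function is `θ`-Hölder with constant `≲ S`.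
On one triangle, Lagrange interpolation reproduces that affine function, and a polynomial of degree
`ℓ` is controlled by its nodal values, so the interpolation error is `θ`-Hölder there as well.

The estimate passes from triangles to the star `ω_z` by chaining. The interior cones of the
Lipschitz boundary connect two points near `z` by a path of two segments of comparable length
inside the star, which crosses boundedly many triangles. Arbitrary `x, y ∈ ω_z` are first moved
near `z` by a dilation with factor `s`; truncating its inverse so that each triangle is mapped to
itself gives a piecewise Lipschitz map with constant `≲ s⁻¹`, which carries the path back. Chaining
along such paths also shows that all triangles of a star have comparable diameters, so integrating
the Hölder estimate gives the `L²` estimates.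
-/

open AffineMap (lineMap)
open ProbabilityTheory (cond)

section GagliardoEnergy

variable {H : Type*} [NormedAddCommGroup H]

lemma sq_lintegral_le_lintegral_sq {α : Type*} [MeasurableSpace α] (μ : Measure α)
    [IsProbabilityMeasure μ] {f : α → ℝ≥0∞} (hf : AEMeasurable f μ) :
    (∫⁻ a, f a ∂μ) ^ 2 ≤ ∫⁻ a, f a ^ 2 ∂μ := by
  have holder := ENNReal.lintegral_mul_le_Lp_mul_Lq μ Real.HolderConjugate.two_two hf
    (aemeasurable_const (b := 1))
  simp only [Pi.mul_apply, mul_one, ENNReal.rpow_two, one_pow, lintegral_const, measure_univ,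
    ENNReal.one_rpow] at holder
  calc (∫⁻ a, f a ∂μ) ^ 2 ≤ ((∫⁻ a, f a ^ 2 ∂μ) ^ (1 / 2 : ℝ)) ^ 2 := by gcongr
    _ = ∫⁻ a, f a ^ 2 ∂μ := by
      rw [← ENNReal.rpow_natCast, ← ENNReal.rpow_mul]; norm_num

lemma lintegral_comp_lineMap_le {K : Set E2} (hK : Convex ℝ K) (hKm : MeasurableSet K) {x : E2}
    (hx : x ∈ K) {s : ℝ} (hs0 : 0 < s) (hs1 : s ≤ 1) {φ : E2 → ℝ≥0∞} (hφ : Measurable φ) :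
    ∫⁻ y in K, φ (lineMap x y s) ≤ ENNReal.ofReal (s ^ 2)⁻¹ * ∫⁻ y in K, φ y := by
  rw [← lintegral_indicator hKm, ← lintegral_indicator hKm]
  set ψ := K.indicator φ
  have hψm : Measurable ψ := hφ.indicator hKm
  calc ∫⁻ y, K.indicator (fun y ↦ φ (lineMap x y s)) y
      ≤ ∫⁻ y, ψ (x + s • (y - x)) := by
        refine lintegral_mono (indicator_le fun y hy ↦ ?_)
        have hmem := hK.lineMap_mem hx hy ⟨hs0.le, hs1⟩
        rw [AffineMap.lineMap_apply_module', add_comm] at hmem ⊢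
        exact (indicator_of_mem hmem φ).ge
    _ = ∫⁻ u, ψ (x + s • u) := lintegral_sub_right_eq_self (fun u ↦ ψ (x + s • u)) x
    _ = ∫⁻ v, ψ (x + v) ∂(Measure.map (fun u : E2 ↦ s • u) volume) := by
        rw [lintegral_map (by fun_prop) (by fun_prop)]
    _ = ENNReal.ofReal (s ^ 2)⁻¹ * ∫⁻ v, ψ (x + v) := by
        rw [Measure.map_addHaar_smul volume hs0.ne', lintegral_smul_measure]
        simp [abs_of_pos hs0]
    _ = ENNReal.ofReal (s ^ 2)⁻¹ * ∫⁻ v, ψ v := by rw [lintegral_add_left_eq_self]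

/-- The integrand of the squared Gagliardo seminorm of order `θ` in the plane. -/
def gagliardoKernel (θ : ℝ) (f : E2 → H) (x y : E2) : ℝ :=
  ‖f x - f y‖ ^ 2 / dist x y ^ (2 + 2 * θ)

/-- The squared Gagliardo seminorm of order `θ` on `G` of a vector-valued function, as an
extended nonnegative number, so that no integrability is presupposed. -/
def gagliardoEnergy (θ : ℝ) (G : Set E2) (f : E2 → H) : ℝ≥0∞ :=
  ∫⁻ x in G, ∫⁻ y in G, ENNReal.ofReal (gagliardoKernel θ f x y)

lemma measurable_gagliardoKernel (θ : ℝ) {f : E2 → H} (hf : StronglyMeasurable f) :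
    Measurable fun p : E2 × E2 ↦ gagliardoKernel θ f p.1 p.2 :=
  (((hf.comp_measurable measurable_fst).sub
    (hf.comp_measurable measurable_snd)).norm.measurable.pow_const 2).div
    ((measurable_fst.dist measurable_snd).pow_const _)

lemma sq_norm_sub_le_mul_gagliardoKernel {θ : ℝ} (hθ : 0 < θ) (f : E2 → H) {a b : E2} {d : ℝ}
    (hd : dist a b ≤ d) : ‖f a - f b‖ ^ 2 ≤ d ^ (2 + 2 * θ) * gagliardoKernel θ f a b := by
  rcases eq_or_ne a b with rfl | hab
  · simp [gagliardoKernel]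
  · have hdist : 0 < dist a b := dist_pos.2 hab
    calc ‖f a - f b‖ ^ 2 = dist a b ^ (2 + 2 * θ) * gagliardoKernel θ f a b :=
          (mul_div_cancel₀ _ (Real.rpow_pos_of_pos hdist _).ne').symm
      _ ≤ d ^ (2 + 2 * θ) * gagliardoKernel θ f a b := by
          have : 0 ≤ gagliardoKernel θ f a b := by unfold gagliardoKernel; positivity
          gcongr

lemma gagliardoEnergy_mono {θ : ℝ} {G G' : Set E2} (h : G ⊆ G') (f : E2 → H) :
    gagliardoEnergy θ G f ≤ gagliardoEnergy θ G' f :=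
  (lintegral_mono fun _ ↦ lintegral_mono_set h).trans (lintegral_mono_set h)

lemma gagliardoEnergy_congr {θ : ℝ} {G : Set E2} {f f' : E2 → H}
    (h : f =ᵐ[volume.restrict G] f') : gagliardoEnergy θ G f = gagliardoEnergy θ G f' := by
  refine lintegral_congr_ae (h.mono fun x hx ↦ lintegral_congr_ae (h.mono fun y hy ↦ ?_))
  simp only [gagliardoKernel, hx, hy]

/-- A compact convex planar set whose area is at least `c` times its squared diameter. -/
structure IsFatConvexBody (c : ℝ) (K : Set E2) : Prop where
  convex : Convex ℝ K
  isCompact : IsCompact K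
  diam_pos : 0 < diam K
  fatness_pos : 0 < c
  mul_sq_diam_le : c * diam K ^ 2 ≤ volume.real K

namespace IsFatConvexBody

variable {c θ : ℝ} {K : Set E2}

lemma volume_pos (hK : IsFatConvexBody c K) : 0 < volume.real K := by
  have := hK.diam_pos
  have := hK.fatness_pos
  exact lt_of_lt_of_le (by positivity) hK.mul_sq_diam_le

lemma isProbabilityMeasure_cond (hK : IsFatConvexBody c K) :
    IsProbabilityMeasure (cond volume K) :=
  ProbabilityTheory.cond_isProbabilityMeasure_of_finite
    (fun h ↦ hK.volume_pos.ne' (by simp [Measure.real, h])) hK.isCompact.measure_ne_top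

lemma dist_le_diam (hK : IsFatConvexBody c K) {x y : E2} (hx : x ∈ K) (hy : y ∈ K) :
    dist x y ≤ diam K :=
  dist_le_diam_of_mem hK.isCompact.isBounded hx hy

lemma dist_lineMap_le (hK : IsFatConvexBody c K) {x y y' : E2} (hx : x ∈ K) (hy : y ∈ K)
    (hy' : y' ∈ K) {s t : ℝ} (hs : 0 ≤ s) (ht : 0 < t) (hst : s ≤ t) :
    dist (lineMap x y s) (lineMap x y' t) ≤ t * diam K := by
  have hmem : lineMap x y (s / t) ∈ K :=
    hK.convex.lineMap_mem hx hy ⟨by positivity, (div_le_one ht).2 hst⟩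
  have hscale : lineMap x y s - lineMap x y' t = t • (lineMap x y (s / t) - y') := by
    simp only [AffineMap.lineMap_apply_module']
    match_scalars <;> field_simp
    ring
  rw [dist_eq_norm, hscale, norm_smul, Real.norm_of_nonneg ht.le, ← dist_eq_norm]
  gcongr
  exact hK.dist_le_diam hmem hy'

lemma ae_cond_mem (hK : IsFatConvexBody c K) : ∀ᵐ y ∂(cond volume K), y ∈ K :=
  ProbabilityTheory.ae_cond_mem hK.isCompact.measurableSet

lemma lintegral_cond_comp_lineMap_le (hK : IsFatConvexBody c K) {x : E2} (hx : x ∈ K) {s : ℝ}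
    (hs0 : 0 < s) (hs1 : s ≤ 1) {φ : E2 → ℝ≥0∞} (hφ : Measurable φ) :
    ∫⁻ y, φ (lineMap x y s) ∂(cond volume K) ≤
      ENNReal.ofReal (s ^ 2)⁻¹ * ∫⁻ y, φ y ∂(cond volume K) := by
  simp only [ProbabilityTheory.cond, lintegral_smul_measure, smul_eq_mul]
  rw [mul_left_comm]
  gcongr
  exact lintegral_comp_lineMap_le hK.convex hK.isCompact.measurableSet hx hs0 hs1 hφ

lemma lintegral_cond_gagliardoKernel (hK : IsFatConvexBody c K) (F : E2 → H) :
    ∫⁻ y, ∫⁻ y', ENNReal.ofReal (gagliardoKernel θ F y y') ∂(cond volume K) ∂(cond volume K) =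
      ENNReal.ofReal (volume.real K ^ 2)⁻¹ * gagliardoEnergy θ K F := by
  have hV : (volume K)⁻¹ ≠ ⊤ := by
    rw [ENNReal.inv_ne_top]
    exact fun h ↦ hK.volume_pos.ne' (by simp [Measure.real, h])
  simp only [ProbabilityTheory.cond, lintegral_smul_measure, smul_eq_mul]
  rw [lintegral_const_mul' _ _ hV, ← mul_assoc, gagliardoEnergy, ← inv_pow,
    ENNReal.ofReal_pow (by positivity), ENNReal.ofReal_inv_of_pos hK.volume_pos,
    ofReal_measureReal hK.isCompact.measure_ne_top, sq]

lemma lintegral_lintegral_comp_lineMap_le (hK : IsFatConvexBody c K) {x : E2} (hx : x ∈ K)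
    {s t : ℝ} (hs : 0 < s) (hs1 : s ≤ 1) (ht : 0 < t) (ht1 : t ≤ 1) {k : E2 → E2 → ℝ≥0∞}
    (hk : Measurable (Function.uncurry k)) :
    ∫⁻ y, ∫⁻ y', k (lineMap x y s) (lineMap x y' t) ∂(cond volume K) ∂(cond volume K) ≤
      ENNReal.ofReal (t ^ 2)⁻¹ * (ENNReal.ofReal (s ^ 2)⁻¹ *
        ∫⁻ y, ∫⁻ y', k y y' ∂(cond volume K) ∂(cond volume K)) := by
  set μ := cond volume K
  have : IsProbabilityMeasure μ := hK.isProbabilityMeasure_cond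
  calc ∫⁻ y, ∫⁻ y', k (lineMap x y s) (lineMap x y' t) ∂μ ∂μ
      ≤ ∫⁻ y, ENNReal.ofReal (t ^ 2)⁻¹ * ∫⁻ y', k (lineMap x y s) y' ∂μ ∂μ :=
        lintegral_mono fun y ↦ hK.lintegral_cond_comp_lineMap_le hx ht ht1 hk.of_uncurry_left
    _ = ENNReal.ofReal (t ^ 2)⁻¹ * ∫⁻ y, ∫⁻ y', k (lineMap x y s) y' ∂μ ∂μ :=
        lintegral_const_mul' _ _ ENNReal.ofReal_ne_top
    _ ≤ _ := by
        gcongr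
        exact hK.lintegral_cond_comp_lineMap_le hx hs hs1
          (φ := fun a ↦ ∫⁻ y', k a y' ∂μ) hk.lintegral_prod_right'

lemma lintegral_sq_sub_lineMap_le (hK : IsFatConvexBody c K) (hθ : 0 < θ) {x : E2} (hx : x ∈ K)
    {s t : ℝ} (hs : 0 < s) (hst : s ≤ t) (ht1 : t ≤ 1) {F : E2 → H} (hF : StronglyMeasurable F) :
    ∫⁻ y, ∫⁻ y', ‖F (lineMap x y s) - F (lineMap x y' t)‖ₑ ^ 2
        ∂(cond volume K) ∂(cond volume K) ≤
      ENNReal.ofReal ((t * diam K) ^ (2 + 2 * θ) * (s ^ 2)⁻¹ * (t ^ 2)⁻¹ *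
        (volume.real K ^ 2)⁻¹) * gagliardoEnergy θ K F := by
  have ht : 0 < t := hs.trans_le hst
  have hdiam := hK.diam_pos
  set μ := cond volume K
  set d := ENNReal.ofReal ((t * diam K) ^ (2 + 2 * θ))
  set k := fun a b ↦ ENNReal.ofReal (gagliardoKernel θ F a b)
  have hk : Measurable (Function.uncurry k) := (measurable_gagliardoKernel θ hF).ennreal_ofReal
  calc ∫⁻ y, ∫⁻ y', ‖F (lineMap x y s) - F (lineMap x y' t)‖ₑ ^ 2 ∂μ ∂μ
      ≤ ∫⁻ y, ∫⁻ y', d * k (lineMap x y s) (lineMap x y' t) ∂μ ∂μ := by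
        refine lintegral_mono_ae (hK.ae_cond_mem.mono fun y hy ↦
          lintegral_mono_ae (hK.ae_cond_mem.mono fun y' hy' ↦ ?_))
        rw [← ofReal_norm, ← ENNReal.ofReal_pow (norm_nonneg _),
          ← ENNReal.ofReal_mul (by positivity)]
        exact ENNReal.ofReal_le_ofReal (sq_norm_sub_le_mul_gagliardoKernel hθ F
          (hK.dist_lineMap_le hx hy hy' hs.le ht hst))
    _ = d * ∫⁻ y, ∫⁻ y', k (lineMap x y s) (lineMap x y' t) ∂μ ∂μ := by
        simp only [lintegral_const_mul' _ _ (show d ≠ ⊤ from ENNReal.ofReal_ne_top)]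
    _ ≤ d * (ENNReal.ofReal (t ^ 2)⁻¹ * (ENNReal.ofReal (s ^ 2)⁻¹ *
          (ENNReal.ofReal (volume.real K ^ 2)⁻¹ * gagliardoEnergy θ K F))) := by
        rw [← hK.lintegral_cond_gagliardoKernel]
        gcongr
        exact hK.lintegral_lintegral_comp_lineMap_le hx hs (hst.trans ht1) ht ht1 hk
    _ = ENNReal.ofReal ((t * diam K) ^ (2 + 2 * θ) * (s ^ 2)⁻¹ * (t ^ 2)⁻¹ *
          (volume.real K ^ 2)⁻¹) * gagliardoEnergy θ K F := by
        rw [← mul_assoc, ← mul_assoc, ← mul_assoc, ← ENNReal.ofReal_mul (by positivity),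
          ← ENNReal.ofReal_mul (by positivity), ← ENNReal.ofReal_mul (by positivity)]
        congr 2
        ring

lemma scaling_const_le (hK : IsFatConvexBody c K) {s t : ℝ} (hs : 0 < s) (hst : s ≤ t)
    (hts : t ≤ 2 * s) :
    (t * diam K) ^ (2 + 2 * θ) * (s ^ 2)⁻¹ * (t ^ 2)⁻¹ * (volume.real K ^ 2)⁻¹ ≤
      (2 / c * (t * diam K) ^ (θ - 1)) ^ 2 := by
  have hc := hK.fatness_pos
  have hh := hK.diam_pos
  have ht : 0 < t := hs.trans_le hst
  set r := (t * diam K) ^ (θ - 1) with hr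
  have hpow : (t * diam K) ^ (2 + 2 * θ) = (t * diam K) ^ 4 * r ^ 2 := by
    rw [hr, ← Real.rpow_natCast, ← Real.rpow_natCast, ← Real.rpow_mul (by positivity),
      ← Real.rpow_add (by positivity)]
    congr 1
    push_cast
    ring
  have hvol : (volume.real K ^ 2)⁻¹ ≤ ((c * diam K ^ 2) ^ 2)⁻¹ := by
    gcongr
    exact hK.mul_sq_diam_le
  calc (t * diam K) ^ (2 + 2 * θ) * (s ^ 2)⁻¹ * (t ^ 2)⁻¹ * (volume.real K ^ 2)⁻¹
      ≤ (t * diam K) ^ 4 * r ^ 2 * ((t / 2) ^ 2)⁻¹ * (t ^ 2)⁻¹ * ((c * diam K ^ 2) ^ 2)⁻¹ := by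
        rw [hpow]
        gcongr
        linarith
    _ = (2 / c * r) ^ 2 := by
        field_simp

lemma lintegral_sub_lineMap_le (hK : IsFatConvexBody c K) (hθ : 0 < θ) {x : E2} (hx : x ∈ K)
    {s t : ℝ} (hs : 0 < s) (hst : s ≤ t) (hts : t ≤ 2 * s) (ht1 : t ≤ 1) {F : E2 → H}
    (hF : StronglyMeasurable F) {M : ℝ} (hM : 0 ≤ M)
    (hE : gagliardoEnergy θ K F ≤ ENNReal.ofReal (M ^ 2)) :
    ∫⁻ y, ∫⁻ y', ‖F (lineMap x y s) - F (lineMap x y' t)‖ₑ ∂(cond volume K) ∂(cond volume K) ≤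
      ENNReal.ofReal (2 / c * (t * diam K) ^ (θ - 1) * M) := by
  have hc := hK.fatness_pos
  have hh := hK.diam_pos
  have ht : 0 < t := hs.trans_le hst
  set μ := cond volume K
  have : IsProbabilityMeasure μ := hK.isProbabilityMeasure_cond
  have hmeas : Measurable fun p : E2 × E2 ↦
      ‖F (lineMap x p.1 s) - F (lineMap x p.2 t)‖ₑ := by
    have hline (r : ℝ) : Measurable fun y ↦ lineMap x y r := by
      simp only [AffineMap.lineMap_apply_module']
      fun_prop
    exact ((hF.comp_measurable ((hline s).comp measurable_fst)).sub
      (hF.comp_measurable ((hline t).comp measurable_snd))).enorm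
  rw [← ENNReal.pow_le_pow_left_iff two_ne_zero, ← ENNReal.ofReal_pow (by positivity), mul_pow]
  calc (∫⁻ y, ∫⁻ y', ‖F (lineMap x y s) - F (lineMap x y' t)‖ₑ ∂μ ∂μ) ^ 2
      ≤ ∫⁻ y, ∫⁻ y', ‖F (lineMap x y s) - F (lineMap x y' t)‖ₑ ^ 2 ∂μ ∂μ :=
        (sq_lintegral_le_lintegral_sq μ hmeas.lintegral_prod_right'.aemeasurable).trans
          (lintegral_mono fun y ↦ sq_lintegral_le_lintegral_sq μ
            (hmeas.comp measurable_prodMk_left).aemeasurable)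
    _ ≤ ENNReal.ofReal ((2 / c * (t * diam K) ^ (θ - 1)) ^ 2) * ENNReal.ofReal (M ^ 2) := by
        refine (hK.lintegral_sq_sub_lineMap_le hθ hx hs hst ht1 hF).trans ?_
        gcongr
        exact hK.scaling_const_le hs hst hts
    _ = ENNReal.ofReal ((2 / c * (t * diam K) ^ (θ - 1)) ^ 2 * M ^ 2) :=
        (ENNReal.ofReal_mul (by positivity)).symm

end IsFatConvexBody

end GagliardoEnergy

/-- The constant in the bound for averages, over shrinking homothetic copies of a convex body of
fatness `c`, of a function of mean zero; the factor `(1 - 2 ^ (θ - 1))⁻¹` sums a dyadic series. -/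
def averageConst (θ c : ℝ) : ℝ := 4 / (c * (1 - 2 ^ (θ - 1)))

lemma averageConst_pos {θ c : ℝ} (hθ1 : θ < 1) (hc : 0 < c) : 0 < averageConst θ c := by
  have : (2 : ℝ) ^ (θ - 1) < 1 := Real.rpow_lt_one_of_one_lt_of_neg one_lt_two (by linarith)
  have : 0 < 1 - (2 : ℝ) ^ (θ - 1) := by linarith
  unfold averageConst
  positivity

lemma averageConst_add_mul_le {θ c : ℝ} (hθ1 : θ < 1) (hc : 0 < c) :
    (averageConst θ c + 2 / c) * 2 ^ (θ - 1) ≤ averageConst θ c := by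
  have hq : (2 : ℝ) ^ (θ - 1) < 1 := Real.rpow_lt_one_of_one_lt_of_neg one_lt_two (by linarith)
  have hgap : 0 < 1 - (2 : ℝ) ^ (θ - 1) := by linarith
  have hsum : averageConst θ c * (1 - 2 ^ (θ - 1)) = 4 / c := by
    unfold averageConst
    field_simp
  have : 2 / c * 2 ^ (θ - 1) ≤ 4 / c := by
    calc 2 / c * 2 ^ (θ - 1) ≤ 2 / c * 2 := by gcongr; linarith
      _ = 4 / c := by ring
  linarith

lemma four_div_le_averageConst {θ c : ℝ} (hθ1 : θ < 1) (hc : 0 < c) : 4 / c ≤ averageConst θ c := by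
  have hq : (2 : ℝ) ^ (θ - 1) < 1 := Real.rpow_lt_one_of_one_lt_of_neg one_lt_two (by linarith)
  have hq0 : (0 : ℝ) < 2 ^ (θ - 1) := by positivity
  unfold averageConst
  have : 0 < c * (1 - 2 ^ (θ - 1)) := by
    have : 0 < 1 - (2 : ℝ) ^ (θ - 1) := by linarith
    positivity
  gcongr
  nlinarith

namespace IsFatConvexBody

variable {H : Type*} [NormedAddCommGroup H] {c θ : ℝ} {K : Set E2} {x : E2} {F : E2 → H} {M : ℝ}

lemma lintegral_lineMap_le_add (hK : IsFatConvexBody c K) (hθ : 0 < θ) (hx : x ∈ K)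
    {s t : ℝ} (hs : 0 < s) (hst : s ≤ t) (hts : t ≤ 2 * s) (ht1 : t ≤ 1)
    (hF : StronglyMeasurable F) (hM : 0 ≤ M)
    (hE : gagliardoEnergy θ K F ≤ ENNReal.ofReal (M ^ 2)) :
    ∫⁻ y, ‖F (lineMap x y s)‖ₑ ∂(cond volume K) ≤
      (∫⁻ y, ‖F (lineMap x y t)‖ₑ ∂(cond volume K)) +
        ENNReal.ofReal (2 / c * (t * diam K) ^ (θ - 1) * M) := by
  set μ := cond volume K
  have : IsProbabilityMeasure μ := hK.isProbabilityMeasure_cond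
  have hmeas : Measurable fun y' ↦ ‖F (lineMap x y' t)‖ₑ := by
    refine (hF.comp_measurable ?_).enorm
    simp only [AffineMap.lineMap_apply_module']
    fun_prop
  calc ∫⁻ y, ‖F (lineMap x y s)‖ₑ ∂μ
      = ∫⁻ y, ∫⁻ _, ‖F (lineMap x y s)‖ₑ ∂μ ∂μ := by simp
    _ ≤ ∫⁻ y, ∫⁻ y', (‖F (lineMap x y' t)‖ₑ +
          ‖F (lineMap x y s) - F (lineMap x y' t)‖ₑ) ∂μ ∂μ := by
        gcongr with y y'
        simpa using enorm_add_le (F (lineMap x y' t)) (F (lineMap x y s) - F (lineMap x y' t))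
    _ = (∫⁻ y', ‖F (lineMap x y' t)‖ₑ ∂μ) +
          ∫⁻ y, ∫⁻ y', ‖F (lineMap x y s) - F (lineMap x y' t)‖ₑ ∂μ ∂μ := by
        simp only [lintegral_add_left hmeas]
        rw [lintegral_add_left measurable_const]
        simp
    _ ≤ _ := by
        gcongr
        exact hK.lintegral_sub_lineMap_le hθ hx hs hst hts ht1 hF hM hE

variable [NormedSpace ℝ H] [CompleteSpace H]

lemma lintegral_enorm_le_of_integral_eq_zero (hK : IsFatConvexBody c K) (hθ : 0 < θ) (hx : x ∈ K)
    (hF : StronglyMeasurable F) (hFi : Integrable F (cond volume K))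
    (hF0 : ∫ y, F y ∂(cond volume K) = 0) (hM : 0 ≤ M)
    (hE : gagliardoEnergy θ K F ≤ ENNReal.ofReal (M ^ 2)) :
    ∫⁻ y, ‖F y‖ₑ ∂(cond volume K) ≤ ENNReal.ofReal (2 / c * diam K ^ (θ - 1) * M) := by
  have hpair := hK.lintegral_sub_lineMap_le hθ hx one_pos le_rfl (by norm_num) le_rfl hF hM hE
  simp only [AffineMap.lineMap_apply_one, one_mul] at hpair
  have : IsProbabilityMeasure (cond volume K) := hK.isProbabilityMeasure_cond
  refine (lintegral_mono fun y ↦ ?_).trans hpair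
  calc ‖F y‖ₑ = ‖∫ y', (F y - F y') ∂(cond volume K)‖ₑ := by
        rw [integral_sub (integrable_const _) hFi, hF0]
        simp
    _ ≤ ∫⁻ y', ‖F y - F y'‖ₑ ∂(cond volume K) := enorm_integral_le_lintegral_enorm _

-- Halving `t` costs `2 / c * (t * diam K) ^ (θ - 1) * M`, a geometric series in `2 ^ (θ - 1) < 1`.
lemma lintegral_enorm_lineMap_le (hK : IsFatConvexBody c K) (hθ : 0 < θ) (hθ1 : θ < 1)
    (hx : x ∈ K) (hF : StronglyMeasurable F) (hFi : Integrable F (cond volume K))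
    (hF0 : ∫ y, F y ∂(cond volume K) = 0) (hM : 0 ≤ M)
    (hE : gagliardoEnergy θ K F ≤ ENNReal.ofReal (M ^ 2)) {t : ℝ} (ht : 0 < t) (ht1 : t ≤ 1) :
    ∫⁻ y, ‖F (lineMap x y t)‖ₑ ∂(cond volume K) ≤
      ENNReal.ofReal (averageConst θ c * (t * diam K) ^ (θ - 1) * M) := by
  have hc := hK.fatness_pos
  have hh := hK.diam_pos
  have hA := averageConst_pos hθ1 hc
  obtain ⟨n, hn⟩ := exists_pow_lt_of_lt_one ht (by norm_num : (1 / 2 : ℝ) < 1)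
  induction n generalizing t with
  | zero => linarith [pow_zero (1 / 2 : ℝ)]
  | succ n ih =>
    rcases le_or_gt t (1 / 2) with hhalf | hhalf
    · have hdouble := ih (t := 2 * t) (by linarith) (by linarith)
        (by rw [pow_succ] at hn; linarith)
      refine (hK.lintegral_lineMap_le_add hθ hx ht (by linarith) le_rfl (by linarith)
        hF hM hE).trans ?_
      refine (add_le_add_left hdouble _).trans ?_
      rw [← ENNReal.ofReal_add (by positivity) (by positivity)]
      refine ENNReal.ofReal_le_ofReal ?_
      rw [← add_mul, ← add_mul, mul_assoc 2 t, Real.mul_rpow zero_le_two (by positivity),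
        ← mul_assoc]
      gcongr
      exact averageConst_add_mul_le hθ1 hc
    · refine (hK.lintegral_lineMap_le_add hθ hx ht ht1 (by linarith) le_rfl hF hM hE).trans ?_
      simp only [AffineMap.lineMap_apply_one, one_mul]
      refine (add_le_add_left
        (hK.lintegral_enorm_le_of_integral_eq_zero hθ hx hF hFi hF0 hM hE) _).trans ?_
      rw [← ENNReal.ofReal_add (by positivity) (by positivity)]
      refine ENNReal.ofReal_le_ofReal ?_
      have hscale : diam K ^ (θ - 1) ≤ (t * diam K) ^ (θ - 1) :=
        Real.rpow_le_rpow_of_nonpos (by positivity) (mul_le_of_le_one_left hh.le ht1)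
          (by linarith)
      calc 2 / c * diam K ^ (θ - 1) * M + 2 / c * diam K ^ (θ - 1) * M
          = 4 / c * diam K ^ (θ - 1) * M := by ring
        _ ≤ averageConst θ c * (t * diam K) ^ (θ - 1) * M := by
          gcongr
          exact four_div_le_averageConst hθ1 hc

end IsFatConvexBody

lemma enorm_sub_lineMap_le_lintegral {v : E2 → ℝ} (hv : ContDiff ℝ 1 v) (p q : E2) {a b : ℝ}
    (hab : a ≤ b) :
    ‖v (lineMap p q b) - v (lineMap p q a)‖ₑ ≤
      ∫⁻ τ in Icc a b, ‖fderiv ℝ v (lineMap p q τ)‖ₑ * ‖q - p‖ₑ := by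
  have hderiv (τ : ℝ) : HasDerivAt (fun τ ↦ v (lineMap p q τ))
      (fderiv ℝ v (lineMap p q τ) (q - p)) τ :=
    ((hv.differentiable one_ne_zero) _).hasFDerivAt.comp_hasDerivAt τ
      AffineMap.hasDerivAt_lineMap
  have hsmooth : ContDiff ℝ 1 fun τ : ℝ ↦ v (lineMap p q τ) := by
    simp only [AffineMap.lineMap_apply_module']
    fun_prop
  refine (enorm_sub_le_lintegral_deriv_of_contDiffOn_Icc hsmooth.contDiffOn hab).trans ?_
  refine lintegral_mono fun τ ↦ ?_
  rw [(hderiv τ).deriv]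
  exact ContinuousLinearMap.le_opENorm _ _

lemma lintegral_enorm_sub_lineMap_le {μ : Measure E2} [SFinite μ] {v : E2 → ℝ}
    (hv : ContDiff ℝ 1 v) {p q : E2 → E2} (hp : Continuous p) (hq : Continuous q) {d ρ : ℝ}
    (hρ : 0 ≤ ρ) (hd : ∀ᵐ y ∂μ, ‖q y - p y‖ ≤ d) {B : ℝ → ℝ≥0∞}
    (hB : ∀ τ ∈ Ioc 0 ρ, ∫⁻ y, ‖fderiv ℝ v (lineMap (p y) (q y) τ)‖ₑ ∂μ ≤ B τ) :
    ∫⁻ y, ‖v (lineMap (p y) (q y) ρ) - v (p y)‖ₑ ∂μ ≤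
      ∫⁻ τ in Icc 0 ρ, B τ * ENNReal.ofReal d := by
  have hjoint : Measurable (Function.uncurry fun (y : E2) (τ : ℝ) ↦
      ‖fderiv ℝ v (lineMap (p y) (q y) τ)‖ₑ) := by
    have := hv.continuous_fderiv one_ne_zero
    simp only [AffineMap.lineMap_apply_module', Function.uncurry_def]
    exact (by fun_prop : Continuous fun a : E2 × ℝ ↦
      ‖fderiv ℝ v (a.2 • (q a.1 - p a.1) + p a.1)‖ₑ).measurable
  calc ∫⁻ y, ‖v (lineMap (p y) (q y) ρ) - v (p y)‖ₑ ∂μ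
      ≤ ∫⁻ y, (∫⁻ τ in Icc 0 ρ, ‖fderiv ℝ v (lineMap (p y) (q y) τ)‖ₑ) *
          ENNReal.ofReal d ∂μ := by
        refine lintegral_mono_ae (hd.mono fun y hy ↦ ?_)
        have hline := enorm_sub_lineMap_le_lintegral hv (p y) (q y) hρ
        rw [AffineMap.lineMap_apply_zero, lintegral_mul_const' _ _ enorm_ne_top] at hline
        refine hline.trans ?_
        gcongr
        rw [← ofReal_norm]
        exact ENNReal.ofReal_le_ofReal hy
    _ = ∫⁻ τ in Icc 0 ρ, (∫⁻ y, ‖fderiv ℝ v (lineMap (p y) (q y) τ)‖ₑ ∂μ) *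
          ENNReal.ofReal d := by
        rw [lintegral_mul_const' _ _ ENNReal.ofReal_ne_top,
          lintegral_mul_const' _ _ ENNReal.ofReal_ne_top,
          lintegral_lintegral_swap hjoint.aemeasurable]
    _ ≤ ∫⁻ τ in Icc 0 ρ, B τ * ENNReal.ofReal d := by
        rw [← restrict_Ioc_eq_restrict_Icc]
        refine setLIntegral_mono' measurableSet_Ioc fun τ hτ ↦ ?_
        gcongr
        exact hB τ hτ

lemma enorm_sub_le_lintegral_add {α : Type*} [MeasurableSpace α] {μ : Measure α}
    [IsProbabilityMeasure μ] {f g : α → ℝ} (hf : Measurable f) (hg : Measurable g) (a b : ℝ) :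
    ‖a - b‖ₑ ≤ (∫⁻ y, ‖f y - a‖ₑ ∂μ) + (∫⁻ y, ‖f y - g y‖ₑ ∂μ) + ∫⁻ y, ‖g y - b‖ₑ ∂μ := by
  have hfa : Measurable fun y ↦ ‖f y - a‖ₑ := (hf.sub_const a).enorm
  have hsum : Measurable fun y ↦ ‖f y - a‖ₑ + ‖f y - g y‖ₑ := hfa.add (hf.sub hg).enorm
  rw [← lintegral_add_left hfa, ← lintegral_add_left hsum]
  calc ‖a - b‖ₑ = ∫⁻ _, ‖a - b‖ₑ ∂μ := by simp
    _ ≤ ∫⁻ y, (‖f y - a‖ₑ + ‖f y - g y‖ₑ + ‖g y - b‖ₑ) ∂μ := by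
        refine lintegral_mono fun y ↦ ?_
        simp only [← edist_eq_enorm_sub]
        rw [edist_comm (f y) a]
        exact edist_triangle4 _ _ _ _

lemma lintegral_rpow_sub_one_le {θ B d ρ : ℝ} (hθ : 0 < θ) (hB : 0 ≤ B) (hd : 0 ≤ d)
    (hρ : 0 ≤ ρ) :
    ∫⁻ τ in Icc 0 ρ, ENNReal.ofReal (B * (τ * d) ^ (θ - 1)) * ENNReal.ofReal d ≤
      ENNReal.ofReal (B / θ * (ρ * d) ^ θ) := by
  rcases hd.eq_or_lt with rfl | hd
  · simp
  have hint : IntegrableOn (fun τ : ℝ ↦ τ ^ (θ - 1)) (Ioc 0 ρ) :=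
    (intervalIntegrable_iff_integrableOn_Ioc_of_le hρ).1
      (intervalIntegral.intervalIntegrable_rpow' (by linarith))
  have hpos : 0 ≤ᵐ[volume.restrict (Ioc 0 ρ)] fun τ : ℝ ↦ B * d ^ θ * τ ^ (θ - 1) := by
    filter_upwards [self_mem_ae_restrict measurableSet_Ioc] with τ hτ
    have := hτ.1
    positivity
  calc ∫⁻ τ in Icc 0 ρ, ENNReal.ofReal (B * (τ * d) ^ (θ - 1)) * ENNReal.ofReal d
      = ∫⁻ τ in Ioc 0 ρ, ENNReal.ofReal (B * d ^ θ * τ ^ (θ - 1)) := by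
        rw [← restrict_Ioc_eq_restrict_Icc]
        refine setLIntegral_congr_fun measurableSet_Ioc fun τ hτ ↦ ?_
        have hτ0 : 0 < τ := hτ.1
        rw [← ENNReal.ofReal_mul (by positivity), Real.mul_rpow hτ0.le hd.le,
          Real.rpow_sub_one hd.ne']
        congr 1
        field_simp
    _ = ENNReal.ofReal (B * d ^ θ * (ρ ^ θ / θ)) := by
        rw [← ofReal_integral_eq_lintegral_ofReal (hint.const_mul _) hpos, integral_const_mul,
          ← intervalIntegral.integral_of_le hρ, integral_rpow (Or.inl (by linarith))]
        simp [hθ.ne']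
    _ ≤ ENNReal.ofReal (B / θ * (ρ * d) ^ θ) := by
        rw [Real.mul_rpow hρ hd.le]
        exact ENNReal.ofReal_le_ofReal (le_of_eq (by ring))

/-- The constant in Morrey's inequality on a convex body of fatness `c`: the summand `2 / θ`
compares the two point values with averages, the summand `1` compares these averages. -/
def morreyConst (θ c : ℝ) : ℝ := averageConst θ c * (2 / θ + 1)

lemma morreyConst_pos {θ c : ℝ} (hθ : 0 < θ) (hθ1 : θ < 1) (hc : 0 < c) : 0 < morreyConst θ c := by
  have := averageConst_pos hθ1 hc
  unfold morreyConst
  positivity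

lemma gagliardoEnergy_sub_const {H : Type*} [NormedAddCommGroup H] (θ : ℝ) (G : Set E2)
    (f : E2 → H) (a : H) : gagliardoEnergy θ G (fun x ↦ f x - a) = gagliardoEnergy θ G f := by
  simp only [gagliardoEnergy, gagliardoKernel, sub_sub_sub_cancel_right]

namespace IsFatConvexBody

variable {c θ : ℝ} {K : Set E2} {x x' : E2} {v : E2 → ℝ} {M : ℝ}

lemma integrable_cond (hK : IsFatConvexBody c K) {H : Type*} [NormedAddCommGroup H] {f : E2 → H}
    (hf : Continuous f) : Integrable f (cond volume K) := by
  refine (hf.continuousOn.integrableOn_compact hK.isCompact).smul_measure ?_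
  rw [ENNReal.inv_ne_top]
  exact fun h ↦ hK.volume_pos.ne' (by simp [Measure.real, h])

lemma lintegral_enorm_sub_average_le (hK : IsFatConvexBody c K) (hθ : 0 < θ) (hθ1 : θ < 1)
    (hx : x ∈ K) (hv : ContDiff ℝ 1 v) (hv0 : ∫ y, fderiv ℝ v y ∂(cond volume K) = 0)
    (hM : 0 ≤ M) (hE : gagliardoEnergy θ K (fderiv ℝ v) ≤ ENNReal.ofReal (M ^ 2)) {ρ : ℝ}
    (hρ0 : 0 ≤ ρ) (hρ1 : ρ ≤ 1) :
    ∫⁻ y, ‖v (lineMap x y ρ) - v x‖ₑ ∂(cond volume K) ≤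
      ENNReal.ofReal (averageConst θ c * M / θ * (ρ * diam K) ^ θ) := by
  have hA := averageConst_pos hθ1 hK.fatness_pos
  have hgrad : Continuous (fderiv ℝ v) := hv.continuous_fderiv one_ne_zero
  have : IsProbabilityMeasure (cond volume K) := hK.isProbabilityMeasure_cond
  refine (lintegral_enorm_sub_lineMap_le hv (continuous_const (y := x)) continuous_id hρ0
    (hK.ae_cond_mem.mono fun y hy ↦ by simpa [dist_eq_norm] using hK.dist_le_diam hy hx)
    (B := fun τ ↦ ENNReal.ofReal (averageConst θ c * M * (τ * diam K) ^ (θ - 1)))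
    fun τ hτ ↦ ?_).trans (lintegral_rpow_sub_one_le hθ (by positivity) diam_nonneg hρ0)
  rw [mul_right_comm]
  exact hK.lintegral_enorm_lineMap_le hθ hθ1 hx hgrad.stronglyMeasurable
    (hK.integrable_cond hgrad) hv0 hM hE hτ.1 (hτ.2.trans hρ1)

lemma lintegral_enorm_average_sub_average_le (hK : IsFatConvexBody c K) (hθ : 0 < θ)
    (hθ1 : θ < 1) (hx : x ∈ K) (hx' : x' ∈ K) (hv : ContDiff ℝ 1 v)
    (hv0 : ∫ y, fderiv ℝ v y ∂(cond volume K) = 0) (hM : 0 ≤ M)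
    (hE : gagliardoEnergy θ K (fderiv ℝ v) ≤ ENNReal.ofReal (M ^ 2)) {ρ : ℝ}
    (hρ0 : 0 < ρ) (hρ1 : ρ ≤ 1) :
    ∫⁻ y, ‖v (lineMap x y ρ) - v (lineMap x' y ρ)‖ₑ ∂(cond volume K) ≤
      ENNReal.ofReal (averageConst θ c * (ρ * diam K) ^ (θ - 1) * M * dist x x') := by
  have hA := averageConst_pos hθ1 hK.fatness_pos
  have hgrad : Continuous (fderiv ℝ v) := hv.continuous_fderiv one_ne_zero
  have : IsProbabilityMeasure (cond volume K) := hK.isProbabilityMeasure_cond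
  have hline (z : E2) : Continuous fun y : E2 ↦ lineMap z y ρ := by
    simp only [AffineMap.lineMap_apply_module']
    fun_prop
  have hshift (y : E2) : ‖lineMap x y ρ - lineMap x' y ρ‖ ≤ dist x x' := by
    have : lineMap x y ρ - lineMap x' y ρ = (1 - ρ) • (x - x') := by
      simp only [AffineMap.lineMap_apply_module']
      match_scalars <;> ring
    rw [this, norm_smul, Real.norm_of_nonneg (by linarith), ← dist_eq_norm]
    exact mul_le_of_le_one_left dist_nonneg (by linarith)
  have hmove (y : E2) (τ : ℝ) : lineMap (lineMap x' y ρ) (lineMap x y ρ) τ =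
      lineMap (lineMap x' x τ) y ρ := by
    simp only [AffineMap.lineMap_apply_module']
    match_scalars <;> ring
  have hmain := lintegral_enorm_sub_lineMap_le (μ := cond volume K) hv (hline x') (hline x)
    zero_le_one (.of_forall hshift)
    (B := fun _ ↦ ENNReal.ofReal (averageConst θ c * (ρ * diam K) ^ (θ - 1) * M)) fun τ hτ ↦ by
      simp only [hmove]
      exact hK.lintegral_enorm_lineMap_le hθ hθ1 (hK.convex.lineMap_mem hx' hx ⟨hτ.1.le, hτ.2⟩)
        hgrad.stronglyMeasurable (hK.integrable_cond hgrad) hv0 hM hE hρ0 hρ1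
  rw [setLIntegral_const, Real.volume_Icc, sub_zero, ENNReal.ofReal_one, mul_one,
    ← ENNReal.ofReal_mul (by have := hK.diam_pos; positivity)] at hmain
  simpa only [AffineMap.lineMap_apply_one] using hmain

lemma abs_sub_le_of_integral_fderiv_eq_zero (hK : IsFatConvexBody c K) (hθ : 0 < θ)
    (hθ1 : θ < 1) (hx : x ∈ K) (hx' : x' ∈ K) (hv : ContDiff ℝ 1 v)
    (hv0 : ∫ y, fderiv ℝ v y ∂(cond volume K) = 0) (hM : 0 ≤ M)
    (hE : gagliardoEnergy θ K (fderiv ℝ v) ≤ ENNReal.ofReal (M ^ 2)) :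
    |v x - v x'| ≤ morreyConst θ c * dist x x' ^ θ * M := by
  have hA := averageConst_pos hθ1 hK.fatness_pos
  have hC := morreyConst_pos hθ hθ1 hK.fatness_pos
  rcases eq_or_ne x x' with rfl | hne
  · simpa using by positivity
  have hdist : 0 < dist x x' := dist_pos.2 hne
  have hh := hK.diam_pos
  set ρ := dist x x' / diam K
  have hρh : ρ * diam K = dist x x' := div_mul_cancel₀ _ hh.ne'
  have hρ0 : 0 < ρ := by positivity
  have hρ1 : ρ ≤ 1 := (div_le_one hh).2 (hK.dist_le_diam hx hx')
  have : IsProbabilityMeasure (cond volume K) := hK.isProbabilityMeasure_cond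
  have havg_x := hK.lintegral_enorm_sub_average_le hθ hθ1 hx hv hv0 hM hE hρ0.le hρ1
  have havg_x' := hK.lintegral_enorm_sub_average_le hθ hθ1 hx' hv hv0 hM hE hρ0.le hρ1
  have havg := hK.lintegral_enorm_average_sub_average_le hθ hθ1 hx hx' hv hv0 hM hE hρ0 hρ1
  rw [hρh] at havg_x havg_x' havg
  have hmeas (z : E2) : Measurable fun y ↦ v (lineMap z y ρ) := by
    simp only [AffineMap.lineMap_apply_module']
    have := hv.continuous
    fun_prop
  rw [← Real.norm_eq_abs, ← ENNReal.ofReal_le_ofReal_iff (by positivity), ofReal_norm]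
  calc ‖v x - v x'‖ₑ
      ≤ ENNReal.ofReal (averageConst θ c * M / θ * dist x x' ^ θ) +
          ENNReal.ofReal (averageConst θ c * dist x x' ^ (θ - 1) * M * dist x x') +
          ENNReal.ofReal (averageConst θ c * M / θ * dist x x' ^ θ) :=
        (enorm_sub_le_lintegral_add (hmeas x) (hmeas x') _ _).trans (by gcongr)
    _ = ENNReal.ofReal (morreyConst θ c * dist x x' ^ θ * M) := by
        rw [← ENNReal.ofReal_add (by positivity) (by positivity),
          ← ENNReal.ofReal_add (by positivity) (by positivity), Real.rpow_sub_one hdist.ne',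
          morreyConst]
        congr 1
        field_simp
        ring

lemma exists_abs_sub_sub_le_of_contDiff (hK : IsFatConvexBody c K) (hθ : 0 < θ) (hθ1 : θ < 1)
    (hv : ContDiff ℝ 1 v) (hM : 0 ≤ M)
    (hE : gagliardoEnergy θ K (fderiv ℝ v) ≤ ENNReal.ofReal (M ^ 2)) :
    ∃ a : E2 →L[ℝ] ℝ, ∀ x ∈ K, ∀ x' ∈ K,
      |v x - v x' - a (x - x')| ≤ morreyConst θ c * dist x x' ^ θ * M := by
  set a := ∫ y, fderiv ℝ v y ∂(cond volume K)
  have : IsProbabilityMeasure (cond volume K) := hK.isProbabilityMeasure_cond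
  have hfderiv (y : E2) : fderiv ℝ (fun y ↦ v y - a y) y = fderiv ℝ v y - a := by
    rw [fderiv_fun_sub (hv.differentiable one_ne_zero y) a.differentiableAt, a.fderiv]
  have hmean : ∫ y, fderiv ℝ (fun y ↦ v y - a y) y ∂(cond volume K) = 0 := by
    simp only [hfderiv]
    rw [integral_sub (hK.integrable_cond (hv.continuous_fderiv one_ne_zero))
      (integrable_const _), integral_const, probReal_univ, one_smul]
    exact sub_self a
  have henergy : gagliardoEnergy θ K (fderiv ℝ fun y ↦ v y - a y) ≤ ENNReal.ofReal (M ^ 2) := by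
    rw [funext hfderiv]
    exact (gagliardoEnergy_sub_const θ K (fderiv ℝ v) a).trans_le hE
  refine ⟨a, fun x hx x' hx' ↦ ?_⟩
  have hmorrey := hK.abs_sub_le_of_integral_fderiv_eq_zero hθ hθ1 hx hx'
    (hv.sub a.contDiff) hmean hM henergy
  rwa [sub_sub_sub_comm, ← map_sub] at hmorrey

end IsFatConvexBody

section Mollification

open scoped Convolution

lemma setLIntegral_comp_sub_le {K G : Set E2} (hK : MeasurableSet K) (hG : MeasurableSet G)
    {t : E2} (hKG : ∀ a ∈ K, a - t ∈ G) (q : E2 → ℝ≥0∞) :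
    ∫⁻ a in K, q (a - t) ≤ ∫⁻ a in G, q a := by
  rw [← lintegral_indicator hK, ← lintegral_indicator hG,
    ← lintegral_sub_right_eq_self (G.indicator q) t]
  exact lintegral_mono (indicator_le fun a ha ↦ (indicator_of_mem (hKG a ha) q).ge)

variable {H : Type*} [NormedAddCommGroup H] [NormedSpace ℝ H]

lemma ofReal_gagliardoKernel_average_le {ν : Measure E2} [IsProbabilityMeasure ν] (θ : ℝ)
    {F : E2 → H} (hF : StronglyMeasurable F) {a b : E2}
    (ha : Integrable (fun t ↦ F (a - t)) ν) (hb : Integrable (fun t ↦ F (b - t)) ν) :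
    ENNReal.ofReal (gagliardoKernel θ (fun x ↦ ∫ t, F (x - t) ∂ν) a b) ≤
      ∫⁻ t, ENNReal.ofReal (gagliardoKernel θ F (a - t) (b - t)) ∂ν := by
  have hmeas : Measurable fun t ↦ ‖F (a - t) - F (b - t)‖ₑ :=
    ((hF.comp_measurable (measurable_const_sub a)).sub
      (hF.comp_measurable (measurable_const_sub b))).enorm
  simp only [gagliardoKernel, dist_sub_right, div_eq_mul_inv, ENNReal.ofReal_mul (sq_nonneg _),
    ENNReal.ofReal_pow (norm_nonneg _), ofReal_norm]
  rw [lintegral_mul_const' _ _ ENNReal.ofReal_ne_top, ← integral_sub ha hb]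
  gcongr
  calc ‖∫ t, F (a - t) - F (b - t) ∂ν‖ₑ ^ 2
      ≤ (∫⁻ t, ‖F (a - t) - F (b - t)‖ₑ ∂ν) ^ 2 := by
        gcongr
        exact enorm_integral_le_lintegral_enorm _
    _ ≤ ∫⁻ t, ‖F (a - t) - F (b - t)‖ₑ ^ 2 ∂ν :=
        sq_lintegral_le_lintegral_sq ν hmeas.aemeasurable

lemma gagliardoEnergy_average_le {ν : Measure E2} [IsProbabilityMeasure ν] (θ : ℝ)
    {K G : Set E2} (hK : MeasurableSet K) (hG : MeasurableSet G)
    (hKG : ∀ᵐ t ∂ν, ∀ a ∈ K, a - t ∈ G) {F : E2 → H} (hF : StronglyMeasurable F)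
    (hint : ∀ a ∈ K, Integrable (fun t ↦ F (a - t)) ν) :
    gagliardoEnergy θ K (fun x ↦ ∫ t, F (x - t) ∂ν) ≤ gagliardoEnergy θ G F := by
  have hmeas : Measurable fun p : E2 × E2 × E2 ↦
      ENNReal.ofReal (gagliardoKernel θ F (p.1 - p.2.2) (p.2.1 - p.2.2)) :=
    ((measurable_gagliardoKernel θ hF).comp (f := fun p : E2 × E2 × E2 ↦
      (p.1 - p.2.2, p.2.1 - p.2.2)) (by fun_prop)).ennreal_ofReal
  calc gagliardoEnergy θ K (fun x ↦ ∫ t, F (x - t) ∂ν)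
      ≤ ∫⁻ a in K, ∫⁻ b in K, ∫⁻ t, ENNReal.ofReal (gagliardoKernel θ F (a - t) (b - t)) ∂ν :=
        setLIntegral_mono' hK fun a ha ↦ setLIntegral_mono' hK fun b hb ↦
          ofReal_gagliardoKernel_average_le θ hF (hint a ha) (hint b hb)
    _ = ∫⁻ a in K, ∫⁻ t, (∫⁻ b in K,
          ENNReal.ofReal (gagliardoKernel θ F (a - t) (b - t))) ∂ν :=
        lintegral_congr fun a ↦ lintegral_lintegral_swap
          (hmeas.comp measurable_prodMk_left).aemeasurable
    _ = ∫⁻ t, (∫⁻ a in K, ∫⁻ b in K,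
          ENNReal.ofReal (gagliardoKernel θ F (a - t) (b - t))) ∂ν :=
        lintegral_lintegral_swap (Measurable.lintegral_prod_right' (f := fun q : (E2 × E2) × E2 ↦
          ENNReal.ofReal (gagliardoKernel θ F (q.1.1 - q.1.2) (q.2 - q.1.2)))
          (hmeas.comp (f := fun q : (E2 × E2) × E2 ↦ (q.1.1, q.2, q.1.2))
            (by fun_prop))).aemeasurable
    _ ≤ ∫⁻ _, gagliardoEnergy θ G F ∂ν := by
        refine lintegral_mono_ae (hKG.mono fun t ht ↦ ?_)
        refine le_trans (lintegral_mono fun a ↦ setLIntegral_comp_sub_le hK hG ht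
          fun b ↦ ENNReal.ofReal (gagliardoKernel θ F (a - t) b)) ?_
        exact setLIntegral_comp_sub_le hK hG ht
          fun a ↦ ∫⁻ b in G, ENNReal.ofReal (gagliardoKernel θ F a b)
    _ = gagliardoEnergy θ G F := by simp

/-- The probability measure whose density is the normalized bump function `φ`. -/
def bumpMeasure (φ : ContDiffBump (0 : E2)) : Measure E2 :=
  volume.withDensity fun t ↦ ENNReal.ofReal (φ.normed volume t)

variable (φ : ContDiffBump (0 : E2))

lemma measurable_ofReal_normed : Measurable fun t ↦ ENNReal.ofReal (φ.normed volume t) :=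
  φ.continuous_normed.measurable.ennreal_ofReal

instance isProbabilityMeasure_bumpMeasure : IsProbabilityMeasure (bumpMeasure φ) := by
  refine ⟨?_⟩
  rw [bumpMeasure, withDensity_apply _ .univ, setLIntegral_univ,
    ← ofReal_integral_eq_lintegral_ofReal φ.integrable_normed (.of_forall φ.nonneg_normed),
    φ.integral_normed, ENNReal.ofReal_one]

lemma ae_bumpMeasure_norm_lt : ∀ᵐ t ∂bumpMeasure φ, ‖t‖ < φ.rOut := by
  refine (ae_withDensity_iff (measurable_ofReal_normed φ)).2 (.of_forall fun t ht ↦ ?_)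
  have : t ∈ Function.support (φ.normed volume) := fun h0 ↦ ht (by simp [h0])
  rw [φ.support_normed_eq] at this
  simpa using this

lemma integral_bumpMeasure (f : E2 → H) :
    ∫ t, f t ∂bumpMeasure φ = ∫ t, φ.normed volume t • f t := by
  rw [bumpMeasure, integral_withDensity_eq_integral_toReal_smul (measurable_ofReal_normed φ)
    (.of_forall fun _ ↦ ENNReal.ofReal_lt_top)]
  simp only [ENNReal.toReal_ofReal (φ.nonneg_normed _)]

lemma integrable_comp_sub_bumpMeasure {f : E2 → H} (hf : Integrable f) (x : E2) :
    Integrable (fun t ↦ f (x - t)) (bumpMeasure φ) := by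
  rw [bumpMeasure, integrable_withDensity_iff_integrable_smul' (measurable_ofReal_normed φ)
    (.of_forall fun _ ↦ ENNReal.ofReal_lt_top)]
  simp only [ENNReal.toReal_ofReal (φ.nonneg_normed _)]
  exact φ.hasCompactSupport_normed.convolutionExists_left (ContinuousLinearMap.lsmul ℝ ℝ)
    φ.continuous_normed hf.locallyIntegrable x

/-- The gradient with components `g i`, as a field of linear forms. -/
def gradientForm (g : Fin 2 → E2 → ℝ) (x : E2) : E2 →L[ℝ] ℝ :=
  innerSL ℝ (WithLp.toLp 2 fun i ↦ g i x)

lemma gradientForm_single (g : Fin 2 → E2 → ℝ) (x : E2) (i : Fin 2) :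
    gradientForm g x (EuclideanSpace.single i 1) = g i x := by
  simp [gradientForm, EuclideanSpace.inner_single_right]

lemma sq_norm_gradientForm_sub (g : Fin 2 → E2 → ℝ) (x y : E2) :
    ‖gradientForm g x - gradientForm g y‖ ^ 2 = ∑ i, (g i x - g i y) ^ 2 := by
  rw [gradientForm, gradientForm, ← map_sub, innerSL_apply_norm, EuclideanSpace.norm_sq_eq]
  simp

lemma stronglyMeasurable_gradientForm {g : Fin 2 → E2 → ℝ} (hg : ∀ i, Measurable (g i)) :
    StronglyMeasurable (gradientForm g) :=
  (innerSL ℝ).continuous.comp_stronglyMeasurable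
    ((WithLp.measurable_toLp 2 _).comp (measurable_pi_lambda _ hg)).stronglyMeasurable

lemma integrableOn_gradientForm {g : Fin 2 → E2 → ℝ} {G : Set E2}
    (hg : ∀ i, IntegrableOn (g i) G) : IntegrableOn (gradientForm g) G :=
  (innerSL ℝ).integrable_comp
    ((PiLp.continuousLinearEquiv 2 ℝ fun _ : Fin 2 ↦ ℝ).symm.toContinuousLinearMap.integrable_comp
      (Integrable.of_eval hg))

lemma isTestFun_normed_sub {G : Set E2} {x : E2} (hx : closedBall x φ.rOut ⊆ G) :
    IsTestFun G fun y ↦ φ.normed volume (x - y) := by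
  refine ⟨φ.contDiff_normed.comp (contDiff_const.sub contDiff_id),
    φ.hasCompactSupport_normed.comp_homeomorph (Homeomorph.subLeft x), ?_⟩
  have htsupport : tsupport (fun y ↦ φ.normed volume (x - y)) =
      Homeomorph.subLeft x ⁻¹' tsupport (φ.normed volume) :=
    tsupport_comp_eq_preimage (φ.normed volume) (Homeomorph.subLeft x)
  rw [htsupport, φ.tsupport_normed_eq]
  refine fun y hy ↦ hx ?_
  simpa [dist_eq_norm, norm_sub_rev] using hy

lemma pd_normed_sub (x y : E2) (i : Fin 2) :
    pd i (fun y ↦ φ.normed volume (x - y)) y =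
      -fderiv ℝ (φ.normed volume) (x - y) (EuclideanSpace.single i 1) := by
  have hφ : ContDiff ℝ 1 (φ.normed volume) := φ.contDiff_normed
  have hderiv : HasFDerivAt (fun y ↦ φ.normed volume (x - y)) _ y :=
    (hφ.differentiable one_ne_zero (x - y)).hasFDerivAt.comp y ((hasFDerivAt_id y).const_sub x)
  rw [pd, hderiv.fderiv]
  simp

lemma pd_normed_convolution {G : Set E2} (hG : MeasurableSet G) {w g : E2 → ℝ} {i : Fin 2}
    (hw : IntegrableOn w G) (hweak : HasWeakPD G i w g) {x : E2}
    (hx : closedBall x φ.rOut ⊆ G) :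
    pd i (φ.normed volume ⋆[ContinuousLinearMap.lsmul ℝ ℝ, volume] G.indicator w) x =
      ∫ t, G.indicator g (x - t) ∂bumpMeasure φ := by
  have hφ : ContDiff ℝ 1 (φ.normed volume) := φ.contDiff_normed
  have hcs := φ.hasCompactSupport_normed (μ := volume)
  have hwi : LocallyIntegrable (G.indicator w) volume :=
    ((integrable_indicator_iff hG).2 hw).locallyIntegrable
  have hexists := ((hcs.fderiv ℝ).convolutionExists_left
    ((ContinuousLinearMap.lsmul ℝ ℝ).precompL E2) (hφ.continuous_fderiv one_ne_zero) hwi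
    x).integrable_swap
  have hintegrand (y : E2) : ((ContinuousLinearMap.lsmul ℝ ℝ).precompL E2
      (fderiv ℝ (φ.normed volume) (x - y))) (G.indicator w y) (EuclideanSpace.single i 1) =
      -G.indicator (fun y ↦ w y * pd i (fun y ↦ φ.normed volume (x - y)) y) y := by
    by_cases hy : y ∈ G
    · simp [hy, pd_normed_sub, ContinuousLinearMap.precompL_apply, mul_comm]
    · simp [hy]
  rw [pd, (hcs.hasFDerivAt_convolution_left _ hφ hwi x).fderiv, convolution_eq_swap,
    ContinuousLinearMap.integral_apply hexists]
  simp only [hintegrand]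
  rw [integral_neg, integral_indicator hG, hweak _ (isTestFun_normed_sub φ hx), neg_neg,
    integral_bumpMeasure, ← integral_indicator hG, ← integral_sub_left_eq_self _ volume x]
  refine integral_congr_ae (.of_forall fun t ↦ ?_)
  by_cases ht : x - t ∈ G <;> simp [ht, mul_comm]

lemma fderiv_normed_convolution {G : Set E2} (hG : MeasurableSet G) {w : E2 → ℝ}
    {g : Fin 2 → E2 → ℝ} (hw : IntegrableOn w G) (hg : ∀ i, IntegrableOn (g i) G)
    (hweak : ∀ i, HasWeakPD G i w (g i)) {x : E2} (hx : closedBall x φ.rOut ⊆ G) :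
    fderiv ℝ (φ.normed volume ⋆[ContinuousLinearMap.lsmul ℝ ℝ, volume] G.indicator w) x =
      ∫ t, G.indicator (gradientForm g) (x - t) ∂bumpMeasure φ := by
  have hint : Integrable (fun t ↦ G.indicator (gradientForm g) (x - t)) (bumpMeasure φ) :=
    integrable_comp_sub_bumpMeasure φ
      ((integrable_indicator_iff hG).2 (integrableOn_gradientForm hg)) x
  refine ContinuousLinearMap.coe_injective
    ((EuclideanSpace.basisFun (Fin 2) ℝ).toBasis.ext fun i ↦ ?_)
  simp only [OrthonormalBasis.coe_toBasis, EuclideanSpace.basisFun_apply,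
    ContinuousLinearMap.coe_coe]
  rw [ContinuousLinearMap.integral_apply hint]
  refine (pd_normed_convolution φ hG hw (hweak i) hx).trans (integral_congr_ae (.of_forall
    fun t ↦ ?_))
  by_cases ht : x - t ∈ G <;> simp [ht, gradientForm_single]

lemma gagliardoEnergy_fderiv_normed_convolution_le {K G : Set E2} (hK : MeasurableSet K)
    (hG : MeasurableSet G) (hKG : ∀ x ∈ K, closedBall x φ.rOut ⊆ G) (θ : ℝ) {w : E2 → ℝ}
    {g : Fin 2 → E2 → ℝ} (hw : IntegrableOn w G) (hgm : ∀ i, Measurable (g i))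
    (hg : ∀ i, IntegrableOn (g i) G) (hweak : ∀ i, HasWeakPD G i w (g i)) :
    gagliardoEnergy θ K
        (fderiv ℝ (φ.normed volume ⋆[ContinuousLinearMap.lsmul ℝ ℝ, volume] G.indicator w)) ≤
      gagliardoEnergy θ G (gradientForm g) := by
  have hderiv : ∀ᵐ x ∂volume.restrict K,
      fderiv ℝ (φ.normed volume ⋆[ContinuousLinearMap.lsmul ℝ ℝ, volume] G.indicator w) x =
        ∫ t, G.indicator (gradientForm g) (x - t) ∂bumpMeasure φ := by
    filter_upwards [self_mem_ae_restrict hK] with x hx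
    exact fderiv_normed_convolution φ hG hw hg hweak (hKG x hx)
  rw [gagliardoEnergy_congr hderiv,
    gagliardoEnergy_congr ((indicator_ae_eq_restrict hG (f := gradientForm g)).symm)]
  refine gagliardoEnergy_average_le θ hK hG ?_ ((stronglyMeasurable_gradientForm hgm).indicator hG)
    fun a _ ↦ integrable_comp_sub_bumpMeasure φ
      ((integrable_indicator_iff hG).2 (integrableOn_gradientForm hg)) a
  filter_upwards [ae_bumpMeasure_norm_lt φ] with t ht a ha
  exact hKG a ha (by simpa [dist_eq_norm] using ht.le)

lemma exists_contDiff_approx {K G : Set E2} (hK : IsCompact K) (hG : IsOpen G) (hKG : K ⊆ G)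
    (θ : ℝ) {w : E2 → ℝ} {g : Fin 2 → E2 → ℝ} (hwc : ContinuousOn w G) (hw : IntegrableOn w G)
    (hgm : ∀ i, Measurable (g i)) (hg : ∀ i, IntegrableOn (g i) G)
    (hweak : ∀ i, HasWeakPD G i w (g i)) {ε : ℝ} (hε : 0 < ε) :
    ∃ u : E2 → ℝ, ContDiff ℝ 1 u ∧ (∀ x ∈ K, |u x - w x| ≤ ε) ∧
      gagliardoEnergy θ K (fderiv ℝ u) ≤ gagliardoEnergy θ G (gradientForm g) := by
  obtain ⟨r, hr, hrG⟩ := hK.exists_cthickening_subset_open hG hKG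
  obtain ⟨δ, hδ, hδw⟩ := Metric.uniformContinuousOn_iff.1
    (hK.cthickening.uniformContinuousOn_of_continuous (hwc.mono hrG)) ε hε
  set ρ := min r δ
  have hρ : 0 < ρ := lt_min hr hδ
  let φ : ContDiffBump (0 : E2) := ⟨ρ / 2, ρ, half_pos hρ, half_lt_self hρ⟩
  have hball (a : E2) (ha : a ∈ K) : closedBall a φ.rOut ⊆ cthickening r K := fun y hy ↦
    mem_cthickening_of_dist_le y a r K ha ((mem_closedBall.1 hy).trans (min_le_left r δ))
  have hwi : Integrable (G.indicator w) := (integrable_indicator_iff hG.measurableSet).2 hw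
  refine ⟨_, φ.hasCompactSupport_normed.contDiff_convolution_left (n := 1)
    (ContinuousLinearMap.lsmul ℝ ℝ) φ.contDiff_normed hwi.locallyIntegrable, fun x hx ↦ ?_,
    gagliardoEnergy_fderiv_normed_convolution_le φ hK.measurableSet hG.measurableSet
      (fun a ha ↦ (hball a ha).trans hrG) θ hw hgm hg hweak⟩
  have hclose := φ.dist_normed_convolution_le (μ := volume) (g := G.indicator w) (x₀ := x)
    (ε := ε) hwi.aestronglyMeasurable fun y hy ↦ ?_
  · rwa [indicator_of_mem (hKG hx), Real.dist_eq] at hclose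
  · have hy' := hball x hx (ball_subset_closedBall hy)
    rw [indicator_of_mem (hrG hy'), indicator_of_mem (hKG hx)]
    exact (hδw y hy' x (self_subset_cthickening K hx)
      ((mem_ball.1 hy).trans_le (min_le_right r δ))).le

end Mollification

section Morrey

lemma exists_norm_le_of_tendsto {E : Type*} [NormedAddCommGroup E] [NormedSpace ℝ E]
    [CompleteSpace E] {T : Set E} {x₀ : E} (hx₀ : x₀ ∈ interior T) {w : E → ℝ}
    {u : ℕ → E → ℝ} (hu : ∀ x ∈ T, Tendsto (fun n ↦ u n x) atTop (𝓝 (w x)))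
    {β : E → E → ℝ} {ε : ℕ → ℝ} (hε : Tendsto ε atTop (𝓝 0)) {a : ℕ → E →L[ℝ] ℝ}
    (ha : ∀ n, ∀ x ∈ T, ∀ x' ∈ T, |u n x - u n x' - a n (x - x')| ≤ β x x' + ε n) :
    ∃ C, ∀ n, ‖a n‖ ≤ C := by
  refine banach_steinhaus fun z ↦ ?_
  have hcont : ContinuousAt (fun s : ℝ ↦ x₀ + s • z) 0 := by fun_prop
  obtain ⟨s, hsT, hs⟩ : ∃ s : ℝ, x₀ + s • z ∈ T ∧ 0 < s :=
    (((hcont.eventually (by simpa using mem_interior_iff_mem_nhds.1 hx₀)).filter_mono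
      nhdsWithin_le_nhds).and self_mem_nhdsWithin).exists (f := 𝓝[>] 0)
  have hx₀T := interior_subset hx₀
  obtain ⟨C, hC⟩ : BddAbove (range fun n ↦
      β (x₀ + s • z) x₀ + ε n + |u n (x₀ + s • z)| + |u n x₀|) :=
    (((tendsto_const_nhds.add hε).add (hu _ hsT).abs).add (hu _ hx₀T).abs).bddAbove_range
  refine ⟨C / s, fun n ↦ ?_⟩
  have hCn := hC (mem_range_self n)
  have han := abs_le.1 (ha n _ hsT _ hx₀T)
  rw [add_sub_cancel_left, map_smul, smul_eq_mul] at han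
  suffices |s * a n z| ≤ C by rwa [abs_mul, abs_of_pos hs, ← le_div_iff₀' hs] at this
  rw [abs_le]
  have hle₁ := abs_le.1 (le_refl |u n (x₀ + s • z)|)
  have hle₂ := abs_le.1 (le_refl |u n x₀|)
  constructor <;> linarith [han.1, han.2, hle₁.1, hle₁.2, hle₂.1, hle₂.2]

lemma exists_abs_sub_sub_le_of_tendsto {E : Type*} [NormedAddCommGroup E] [NormedSpace ℝ E]
    [FiniteDimensional ℝ E] {T : Set E} {x₀ : E} (hx₀ : x₀ ∈ interior T) {w : E → ℝ}
    {u : ℕ → E → ℝ} (hu : ∀ x ∈ T, Tendsto (fun n ↦ u n x) atTop (𝓝 (w x)))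
    {β : E → E → ℝ} {ε : ℕ → ℝ} (hε : Tendsto ε atTop (𝓝 0))
    (h : ∀ n, ∃ a : E →L[ℝ] ℝ, ∀ x ∈ T, ∀ x' ∈ T,
      |u n x - u n x' - a (x - x')| ≤ β x x' + ε n) :
    ∃ a : E →L[ℝ] ℝ, ∀ x ∈ T, ∀ x' ∈ T, |w x - w x' - a (x - x')| ≤ β x x' := by
  have : CompleteSpace E := FiniteDimensional.complete ℝ E
  have : ProperSpace (E →L[ℝ] ℝ) := FiniteDimensional.proper ℝ _
  choose a ha using h
  obtain ⟨C, hC⟩ := exists_norm_le_of_tendsto hx₀ hu hε ha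
  obtain ⟨a', -, φ, hφ, hlim⟩ := tendsto_subseq_of_bounded
    (isBounded_closedBall (x := (0 : E →L[ℝ] ℝ)) (r := C))
    fun n ↦ mem_closedBall_zero_iff.2 (hC n)
  refine ⟨a', fun x hx x' hx' ↦ ?_⟩
  have heval : Tendsto (fun n ↦ a (φ n) (x - x')) atTop (𝓝 (a' (x - x'))) :=
    ((ContinuousLinearMap.apply ℝ ℝ (x - x')).continuous.tendsto a').comp hlim
  have hbound := (hε.comp hφ.tendsto_atTop).const_add (β x x')
  rw [add_zero] at hbound
  exact le_of_tendsto_of_tendsto' ((((hu x hx).comp hφ.tendsto_atTop).sub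
    ((hu x' hx').comp hφ.tendsto_atTop)).sub heval).abs hbound fun n ↦ ha (φ n) x hx x' hx'

namespace IsFatConvexBody

variable {c θ M : ℝ} {T : Set E2}

lemma interior_nonempty (hT : IsFatConvexBody c T) : (interior T).Nonempty := by
  by_contra h
  have hzero := hT.convex.addHaar_frontier volume
  rw [hT.isCompact.isClosed.frontier_eq, not_nonempty_iff_eq_empty.1 h, sdiff_empty] at hzero
  exact hT.volume_pos.ne' (by simp [Measure.real, hzero])

lemma homothety_image (hT : IsFatConvexBody c T) (x : E2) {s : ℝ} (hs : 0 < s) :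
    IsFatConvexBody c (AffineMap.homothety x s '' T) := by
  have hdist (y z : E2) : dist (AffineMap.homothety x s y) (AffineMap.homothety x s z) =
      s * dist y z := by
    simp [AffineMap.homothety_apply, dist_smul₀, abs_of_pos hs]
  have hcompact : IsCompact (AffineMap.homothety x s '' T) :=
    hT.isCompact.image (AffineMap.homothety_continuous x s)
  have hdiam : diam (AffineMap.homothety x s '' T) ≤ s * diam T := by
    refine diam_le_of_forall_dist_le (mul_nonneg hs.le diam_nonneg) ?_
    rintro _ ⟨y, hy, rfl⟩ _ ⟨z, hz, rfl⟩
    rw [hdist]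
    exact mul_le_mul_of_nonneg_left (hT.dist_le_diam hy hz) hs.le
  have hvol : volume.real (AffineMap.homothety x s '' T) = s ^ 2 * volume.real T := by
    simp [Measure.real, Measure.addHaar_image_homothety, sq_nonneg]
  have hnontrivial : T.Nontrivial :=
    not_subsingleton_iff.1 fun h ↦ hT.diam_pos.ne' (diam_subsingleton h)
  refine ⟨hT.convex.affine_image _, hcompact,
    Metric.diam_pos (hnontrivial.image (AffineMap.homothety_injective x hs.ne')) hcompact.isBounded,
    hT.fatness_pos, ?_⟩
  have := hT.fatness_pos
  calc c * diam (AffineMap.homothety x s '' T) ^ 2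
      ≤ c * (s * diam T) ^ 2 := by gcongr
    _ = s ^ 2 * (c * diam T ^ 2) := by ring
    _ ≤ volume.real (AffineMap.homothety x s '' T) := by
        rw [hvol]
        exact mul_le_mul_of_nonneg_left hT.mul_sq_diam_le (sq_nonneg s)

lemma exists_abs_sub_sub_le_homothety (hT : IsFatConvexBody c T) (hθ : 0 < θ) (hθ1 : θ < 1)
    {w : E2 → ℝ} {g : Fin 2 → E2 → ℝ} (hw : ContinuousOn w T)
    (hgm : ∀ i, Measurable (g i)) (hg : ∀ i, IntegrableOn (g i) (interior T))
    (hweak : ∀ i, HasWeakPD (interior T) i w (g i)) (hM : 0 ≤ M)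
    (hE : gagliardoEnergy θ (interior T) (gradientForm g) ≤ ENNReal.ofReal (M ^ 2))
    {x₀ : E2} (hx₀ : x₀ ∈ interior T) {s : ℝ} (hs : 0 < s) (hs1 : s < 1) {ε : ℝ} (hε : 0 < ε) :
    ∃ a : E2 →L[ℝ] ℝ, ∀ x ∈ T, ∀ x' ∈ T,
      |w (lineMap x₀ x s) - w (lineMap x₀ x' s) - a (x - x')| ≤
        morreyConst θ c * dist x x' ^ θ * M + 2 * ε := by
  have hK := hT.homothety_image x₀ hs
  have hKT : AffineMap.homothety x₀ s '' T ⊆ interior T := by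
    rintro _ ⟨y, hy, rfl⟩
    convert hT.convex.add_smul_sub_mem_interior hy hx₀ (t := 1 - s)
      ⟨by linarith, by linarith⟩ using 1
    rw [AffineMap.homothety_apply, vsub_eq_sub, vadd_eq_add]
    match_scalars <;> ring
  obtain ⟨u, hu, huw, huE⟩ := exists_contDiff_approx hK.isCompact isOpen_interior hKT θ
    (hw.mono interior_subset) ((hw.integrableOn_compact hT.isCompact).mono_set interior_subset)
    hgm hg hweak hε
  obtain ⟨a, ha⟩ := hK.exists_abs_sub_sub_le_of_contDiff hθ hθ1 hu hM (huE.trans hE)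
  have hmem {x : E2} (hx : x ∈ T) : lineMap x₀ x s ∈ AffineMap.homothety x₀ s '' T :=
    ⟨x, hx, AffineMap.homothety_eq_lineMap x₀ s x⟩
  refine ⟨s • a, fun x hx x' hx' ↦ ?_⟩
  have hsub : lineMap x₀ x s - lineMap x₀ x' s = s • (x - x') := by
    simp only [AffineMap.lineMap_apply_module']
    match_scalars <;> ring
  have hdist : dist (lineMap x₀ x s) (lineMap x₀ x' s) ≤ dist x x' := by
    rw [dist_eq_norm, hsub, norm_smul, Real.norm_of_nonneg hs.le, ← dist_eq_norm]
    exact mul_le_of_le_one_left dist_nonneg hs1.le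
  have hmorrey := (ha _ (hmem hx) _ (hmem hx')).trans
    (show _ ≤ morreyConst θ c * dist x x' ^ θ * M by
      have := morreyConst_pos hθ hθ1 hT.fatness_pos
      gcongr)
  rw [hsub, map_smul] at hmorrey
  have hux := abs_le.1 (huw _ (hmem hx))
  have hux' := abs_le.1 (huw _ (hmem hx'))
  rw [abs_le] at hmorrey ⊢
  simp only [smul_apply]
  constructor <;> linarith [hmorrey.1, hmorrey.2, hux.1, hux.2, hux'.1, hux'.2]

theorem exists_abs_sub_sub_le (hT : IsFatConvexBody c T) (hθ : 0 < θ) (hθ1 : θ < 1)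
    {w : E2 → ℝ} {g : Fin 2 → E2 → ℝ} (hw : ContinuousOn w T)
    (hgm : ∀ i, Measurable (g i)) (hg : ∀ i, IntegrableOn (g i) (interior T))
    (hweak : ∀ i, HasWeakPD (interior T) i w (g i)) (hM : 0 ≤ M)
    (hE : gagliardoEnergy θ (interior T) (gradientForm g) ≤ ENNReal.ofReal (M ^ 2)) :
    ∃ a : E2 →L[ℝ] ℝ, ∀ x ∈ T, ∀ x' ∈ T,
      |w x - w x' - a (x - x')| ≤ morreyConst θ c * dist x x' ^ θ * M := by
  obtain ⟨x₀, hx₀⟩ := hT.interior_nonempty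
  obtain ⟨s, -, hs, hs_lim⟩ := exists_seq_strictMono_tendsto' (zero_lt_one (α := ℝ))
  obtain ⟨ε, -, hε, hε_lim⟩ := exists_seq_strictAnti_tendsto (0 : ℝ)
  refine exists_abs_sub_sub_le_of_tendsto hx₀ (u := fun n x ↦ w (lineMap x₀ x (s n)))
    (ε := fun n ↦ 2 * ε n) (fun x hx ↦ ?_) (by simpa using hε_lim.const_mul 2) fun n ↦
      hT.exists_abs_sub_sub_le_homothety hθ hθ1 hw hgm hg hweak hM hE hx₀ (hs n).1 (hs n).2 (hε n)
  have hline : Tendsto (fun n ↦ lineMap x₀ x (s n)) atTop (𝓝 x) := by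
    have hcont : Continuous fun τ : ℝ ↦ lineMap x₀ x τ := AffineMap.lineMap_continuous
    simpa [Function.comp_def] using (hcont.tendsto 1).comp hs_lim
  exact (hw x hx).tendsto.comp (tendsto_nhdsWithin_iff.2 ⟨hline, .of_forall fun n ↦
    hT.convex.lineMap_mem (interior_subset hx₀) hx ⟨(hs n).1.le, (hs n).2.le⟩⟩)

end IsFatConvexBody

end Morrey

section PrincipalLattice

variable {ι : Type*}

-- The combinatorial Nullstellensatz, on the grid `∏ᵢ {0, 1/ℓ, …, tᵢ/ℓ}` of a leading monomial `t`.
lemma exists_eval_natCast_div_ne_zero [Fintype ι] {ℓ : ℕ} (hℓ : ℓ ≠ 0) {p : MvPolynomial ι ℝ}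
    (hp : p.totalDegree ≤ ℓ) (hp₀ : p ≠ 0) :
    ∃ n : ι → ℕ, ∑ i, n i ≤ ℓ ∧ MvPolynomial.eval (fun i ↦ (n i : ℝ) / ℓ) p ≠ 0 := by
  classical
  obtain ⟨t, ht, htdeg⟩ := p.support.exists_mem_eq_sup (MvPolynomial.support_nonempty.2 hp₀)
    fun s ↦ s.degree
  have htotal : p.totalDegree = t.degree := by
    rw [← htdeg]; rfl
  have hinj : Function.Injective fun r : ℕ ↦ (r : ℝ) / ℓ := fun r r' h ↦
    Nat.cast_injective ((div_left_inj' (Nat.cast_ne_zero.2 hℓ)).1 h)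
  obtain ⟨s, hs, hps⟩ := MvPolynomial.combinatorial_nullstellensatz_exists_eval_nonzero p t
    (MvPolynomial.mem_support_iff.1 ht) htotal
    (fun i ↦ (Finset.range (t i + 1)).image fun r : ℕ ↦ (r : ℝ) / ℓ)
    (fun i ↦ by rw [Finset.card_image_of_injective _ hinj]; simp)
  simp only [Finset.mem_image, Finset.mem_range] at hs
  choose n hn hns using hs
  refine ⟨n, ?_, by rwa [funext hns]⟩
  calc ∑ i, n i ≤ ∑ i, t i := Finset.sum_le_sum fun i _ ↦ Nat.lt_succ_iff.1 (hn i)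
    _ = p.totalDegree := by rw [htotal, Finsupp.degree_eq_sum]
    _ ≤ ℓ := hp

lemma exists_dist_eval_le [Fintype ι] (p : MvPolynomial ι ℝ) {K : Set (ι → ℝ)}
    (hK : IsCompact K) : ∃ L : ℝ≥0, ∀ s ∈ K, ∀ s' ∈ K,
      |MvPolynomial.eval s p - MvPolynomial.eval s' p| ≤ L * dist s s' := by
  have hsmooth : ContDiff ℝ 1 fun s : ι → ℝ ↦ MvPolynomial.eval s p := by
    refine AnalyticOnNhd.contDiff ?_
    simpa [MvPolynomial.aeval_eq_eval] using AnalyticOnNhd.eval_mvPolynomial (𝕜 := ℝ) p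
  obtain ⟨L, hL⟩ := hsmooth.locallyLipschitz.locallyLipschitzOn.exists_lipschitzOnWith_of_compact hK
  exact ⟨L, fun s hs s' hs' ↦ hL.dist_le_mul s hs s' hs'⟩

-- The Lagrange basis comes from a left inverse of the evaluation map at the lattice points.
lemma exists_lagrange_basis [Fintype ι] [DecidableEq ι] {ℓ : ℕ} (hℓ : ℓ ≠ 0) :
    ∃ b : {n : ι → Fin (ℓ + 1) // ∑ i, (n i : ℕ) ≤ ℓ} → MvPolynomial ι ℝ,
      ∀ p : MvPolynomial ι ℝ, p.totalDegree ≤ ℓ →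
        p = ∑ n, MvPolynomial.eval (fun i ↦ ((n.1 i : ℕ) : ℝ) / ℓ) p • b n := by
  let Q := MvPolynomial.restrictTotalDegree ι ℝ ℓ
  let ev : Q →ₗ[ℝ] ({n : ι → Fin (ℓ + 1) // ∑ i, (n i : ℕ) ≤ ℓ} → ℝ) :=
    LinearMap.pi fun n ↦
      (MvPolynomial.aeval (fun i ↦ ((n.1 i : ℕ) : ℝ) / ℓ)).toLinearMap ∘ₗ Q.subtype
  have hev : LinearMap.ker ev = ⊥ := by
    refine LinearMap.ker_eq_bot'.2 fun q hq ↦ ?_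
    by_contra hq₀
    obtain ⟨n, hnℓ, hn⟩ := exists_eval_natCast_div_ne_zero hℓ
      ((MvPolynomial.mem_restrictTotalDegree _ _ _).1 q.2) fun h ↦ hq₀ (Subtype.ext h)
    have hlt i : n i < ℓ + 1 := Nat.lt_succ_of_le <|
      (Finset.single_le_sum (fun j _ ↦ Nat.zero_le (n j)) (Finset.mem_univ i)).trans hnℓ
    exact hn (congrFun hq ⟨fun i ↦ ⟨n i, hlt i⟩, hnℓ⟩)
  obtain ⟨S, hS⟩ := ev.exists_leftInverse_of_injective hev
  refine ⟨fun n ↦ S fun m ↦ if n = m then 1 else 0, fun p hp ↦ ?_⟩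
  have h := congrArg Subtype.val
    (LinearMap.congr_fun hS ⟨p, (MvPolynomial.mem_restrictTotalDegree _ _ _).2 hp⟩)
  rw [LinearMap.comp_apply, LinearMap.pi_apply_eq_sum_univ S] at h
  simpa [ev, MvPolynomial.aeval_eq_eval] using h.symm

theorem exists_abs_eval_sub_eval_le [Fintype ι] {ℓ : ℕ} (hℓ : ℓ ≠ 0) {K : Set (ι → ℝ)}
    (hK : IsCompact K) : ∃ C > 0, ∀ p : MvPolynomial ι ℝ, p.totalDegree ≤ ℓ → ∀ B : ℝ,
      (∀ n : ι → ℕ, ∑ i, n i ≤ ℓ → |MvPolynomial.eval (fun i ↦ (n i : ℝ) / ℓ) p| ≤ B) →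
      ∀ s ∈ K, ∀ s' ∈ K,
        |MvPolynomial.eval s p - MvPolynomial.eval s' p| ≤ C * B * dist s s' := by
  classical
  obtain ⟨b, hb⟩ := exists_lagrange_basis (ι := ι) hℓ
  choose L hL using fun n ↦ exists_dist_eval_le (b n) hK
  refine ⟨∑ n, (L n : ℝ) + 1, by positivity, fun p hp B hB s hs s' hs' ↦ ?_⟩
  have hB₀ : 0 ≤ B := (abs_nonneg _).trans (hB 0 (by simp))
  have hexpand s : MvPolynomial.eval s p =
      ∑ n, MvPolynomial.eval (fun i ↦ ((n.1 i : ℕ) : ℝ) / ℓ) p * MvPolynomial.eval s (b n) := by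
    conv_lhs => rw [hb p hp]
    simp only [map_sum, MvPolynomial.smul_eval]
  calc |MvPolynomial.eval s p - MvPolynomial.eval s' p|
      = |∑ n, MvPolynomial.eval (fun i ↦ ((n.1 i : ℕ) : ℝ) / ℓ) p *
          (MvPolynomial.eval s (b n) - MvPolynomial.eval s' (b n))| := by
        simp only [mul_sub, Finset.sum_sub_distrib, ← hexpand]
    _ ≤ ∑ n, B * (L n * dist s s') := by
        refine (Finset.abs_sum_le_sum_abs _ _).trans (Finset.sum_le_sum fun n _ ↦ ?_)
        rw [abs_mul]
        exact mul_le_mul (hB _ n.2) (hL n s hs s' hs') (abs_nonneg _) hB₀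
    _ = (∑ n, (L n : ℝ)) * B * dist s s' := by
        rw [← Finset.mul_sum, ← Finset.sum_mul]; ring
    _ ≤ (∑ n, (L n : ℝ) + 1) * B * dist s s' := by gcongr; simp

end PrincipalLattice

section BarycentricCoordinates

/-- The vertices of a nondegenerate triangle, as an affine basis of the plane. -/
def triangleBasis {t : Fin 3 → E2} (ht : AffineIndependent ℝ t) : AffineBasis (Fin 3) ℝ E2 :=
  ⟨t, ht, by rw [ht.affineSpan_eq_top_iff_card_eq_finrank_add_one]; simp⟩

open Classical in
/-- The barycentric coordinate of the triangle `t` with respect to its vertex `t i`, as an affine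
function on the plane; set to zero if `t` is degenerate. -/
def baryCoord (t : Fin 3 → E2) (i : Fin 3) : E2 →ᵃ[ℝ] ℝ :=
  if ht : AffineIndependent ℝ t then (triangleBasis ht).coord i else 0

variable {t : Fin 3 → E2}

lemma baryCoord_eq (ht : AffineIndependent ℝ t) (i : Fin 3) :
    baryCoord t i = (triangleBasis ht).coord i :=
  dif_pos ht

lemma sum_baryCoord (ht : AffineIndependent ℝ t) (x : E2) : ∑ i, baryCoord t i x = 1 := by
  simp only [baryCoord_eq ht, AffineBasis.sum_coord_apply_eq_one]

lemma sum_baryCoord_smul (ht : AffineIndependent ℝ t) (x : E2) :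
    ∑ i, baryCoord t i x • t i = x := by
  simp only [baryCoord_eq ht]
  exact (triangleBasis ht).linear_combination_coord_eq_self x

lemma baryCoord_vertex (ht : AffineIndependent ℝ t) (i j : Fin 3) :
    baryCoord t i (t j) = if i = j then 1 else 0 := by
  rw [baryCoord_eq ht]
  exact (triangleBasis ht).coord_apply i j

lemma baryCoord_sum_smul (ht : AffineIndependent ℝ t) {a : Fin 3 → ℝ} (ha : ∑ j, a j = 1)
    (i : Fin 3) : baryCoord t i (∑ j, a j • t j) = a i := by
  rw [← Finset.affineCombination_eq_linear_combination Finset.univ t a ha, baryCoord_eq ht]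
  exact (triangleBasis ht).coord_apply_combination_of_mem (Finset.mem_univ i) ha

lemma vertex_mem_triSet (t : Fin 3 → E2) (i : Fin 3) : t i ∈ triSet t :=
  subset_convexHull ℝ _ (mem_range_self i)

lemma convex_triSet (t : Fin 3 → E2) : Convex ℝ (triSet t) := convex_convexHull ℝ _

lemma isCompact_triSet (t : Fin 3 → E2) : IsCompact (triSet t) :=
  (finite_range t).isCompact_convexHull ℝ

lemma mem_triSet_iff (ht : AffineIndependent ℝ t) {x : E2} :
    x ∈ triSet t ↔ ∀ i, 0 ≤ baryCoord t i x := by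
  simp only [baryCoord_eq ht]
  exact Set.ext_iff.1 (triangleBasis ht).convexHull_eq_nonneg_coord x

lemma mem_interior_triSet_iff (ht : AffineIndependent ℝ t) {x : E2} :
    x ∈ interior (triSet t) ↔ ∀ i, 0 < baryCoord t i x := by
  simp only [baryCoord_eq ht]
  exact Set.ext_iff.1 (triangleBasis ht).interior_convexHull x

lemma baryCoord_le_one (ht : AffineIndependent ℝ t) {x : E2} (hx : x ∈ triSet t) (i : Fin 3) :
    baryCoord t i x ≤ 1 :=
  (Finset.single_le_sum (fun j _ ↦ (mem_triSet_iff ht).1 hx j) (Finset.mem_univ i)).trans_eq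
    (sum_baryCoord ht x)

lemma dist_le_diam_triSet {x y : E2} (hx : x ∈ triSet t) (hy : y ∈ triSet t) :
    dist x y ≤ diam (triSet t) :=
  dist_le_diam_of_mem (isCompact_triSet t).isBounded hx hy

lemma diam_triSet_le {r : ℝ} (hr : ∀ i j, dist (t i) (t j) ≤ r) : diam (triSet t) ≤ r := by
  rw [triSet, convexHull_diam]
  refine diam_le_of_forall_dist_le (dist_nonneg.trans (hr 0 0)) ?_
  rintro _ ⟨i, rfl⟩ _ ⟨j, rfl⟩
  exact hr i j

lemma diam_triSet_pos (ht : AffineIndependent ℝ t) : 0 < diam (triSet t) :=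
  (dist_pos.2 (ht.injective.ne (by decide : (0 : Fin 3) ≠ 1))).trans_le
    (dist_le_diam_triSet (vertex_mem_triSet t 0) (vertex_mem_triSet t 1))

end BarycentricCoordinates

section ShapeRegularity

/-- Shape regularity of a triangle: each of its heights, which is the reciprocal of the Lipschitz
constant of the corresponding barycentric coordinate, is at least `κ` times its diameter. -/
structure IsShapeRegular (κ : ℝ) (t : Fin 3 → E2) : Prop where
  affineIndependent : AffineIndependent ℝ t
  pos : 0 < κ
  mul_abs_sub_le : ∀ i x y,
    κ * diam (triSet t) * |baryCoord t i x - baryCoord t i y| ≤ dist x y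

namespace IsShapeRegular

variable {κ : ℝ} {t : Fin 3 → E2}

lemma diam_pos (ht : IsShapeRegular κ t) : 0 < diam (triSet t) :=
  diam_triSet_pos ht.affineIndependent

lemma mul_diam_le_dist (ht : IsShapeRegular κ t) {i j : Fin 3} (hij : i ≠ j) :
    κ * diam (triSet t) ≤ dist (t i) (t j) := by
  simpa [baryCoord_vertex ht.affineIndependent, hij] using ht.mul_abs_sub_le i (t i) (t j)

lemma le_one (ht : IsShapeRegular κ t) : κ ≤ 1 := by
  refine le_of_mul_le_mul_right ?_ ht.diam_pos
  calc κ * diam (triSet t) ≤ dist (t 0) (t 1) := ht.mul_diam_le_dist (by decide)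
    _ ≤ 1 * diam (triSet t) := by
        rw [one_mul]
        exact dist_le_diam_triSet (vertex_mem_triSet t 0) (vertex_mem_triSet t 1)

lemma abs_sub_le (ht : IsShapeRegular κ t) (i : Fin 3) (x y : E2) :
    |baryCoord t i x - baryCoord t i y| ≤ κ⁻¹ * (dist x y / diam (triSet t)) := by
  have := ht.pos
  have := ht.diam_pos
  rw [← div_eq_inv_mul, div_div, le_div_iff₀ (by positivity), mul_comm, mul_comm (diam _)]
  exact ht.mul_abs_sub_le i x y

lemma ball_subset (ht : IsShapeRegular κ t) :
    ball (∑ i, (3 : ℝ)⁻¹ • t i) (κ * diam (triSet t) / 3) ⊆ triSet t := by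
  have := ht.pos
  have := ht.diam_pos
  intro x hx
  refine (mem_triSet_iff ht.affineIndependent).2 fun i ↦ ?_
  have hcenter : baryCoord t i (∑ i, (3 : ℝ)⁻¹ • t i) = 3⁻¹ :=
    baryCoord_sum_smul (a := fun _ ↦ 3⁻¹) ht.affineIndependent (by simp) i
  have hlip := (ht.mul_abs_sub_le i x _).trans_lt (mem_ball.1 hx)
  rw [hcenter, div_eq_mul_inv, mul_lt_mul_iff_right₀ (by positivity)] at hlip
  linarith [abs_lt.1 hlip]

lemma isFatConvexBody (ht : IsShapeRegular κ t) :
    IsFatConvexBody (Real.pi * (κ / 3) ^ 2) (triSet t) where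
  convex := convex_triSet t
  isCompact := isCompact_triSet t
  diam_pos := ht.diam_pos
  fatness_pos := by have := ht.pos; positivity
  mul_sq_diam_le := by
    have := ht.pos
    have := ht.diam_pos
    calc Real.pi * (κ / 3) ^ 2 * diam (triSet t) ^ 2
        = volume.real (ball (∑ i, (3 : ℝ)⁻¹ • t i) (κ * diam (triSet t) / 3)) := by
          rw [Measure.real, EuclideanSpace.volume_ball_fin_two, ENNReal.toReal_mul,
            ENNReal.toReal_pow, ENNReal.toReal_ofReal (by positivity)]
          rw [ENNReal.toReal_ofReal Real.pi_pos.le]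
          ring
      _ ≤ volume.real (triSet t) :=
          measureReal_mono ht.ball_subset (isCompact_triSet t).measure_ne_top

end IsShapeRegular

lemma sin_min_one_le_sin {σ α : ℝ} (hσ : 0 < σ) (hα : σ ≤ α) (hα' : α ≤ Real.pi - σ) :
    Real.sin (min σ 1) ≤ Real.sin α := by
  have hmin : min σ 1 ≤ σ := min_le_left _ _
  have hmin₀ : -(Real.pi / 2) ≤ min σ 1 := by linarith [lt_min hσ one_pos, Real.pi_pos]
  rcases le_total α (Real.pi / 2) with h | h
  · exact Real.sin_le_sin_of_le_of_le_pi_div_two hmin₀ h (hmin.trans hα)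
  · rw [← Real.sin_pi_sub α]
    exact Real.sin_le_sin_of_le_of_le_pi_div_two hmin₀ (by linarith) (by linarith)

lemma sin_min_one_pos {σ : ℝ} (hσ : 0 < σ) : 0 < Real.sin (min σ 1) :=
  Real.sin_pos_of_pos_of_lt_pi (lt_min hσ one_pos)
    ((min_le_right _ _).trans_lt (by linarith [Real.pi_gt_three]))

lemma abs_areaForm_eq {E : Type*} [NormedAddCommGroup E] [InnerProductSpace ℝ E]
    [Fact (Module.finrank ℝ E = 2)] (o : Orientation ℝ E (Fin 2)) (u v : E) :
    |o.areaForm u v| = Real.sin (InnerProductGeometry.angle u v) * (‖u‖ * ‖v‖) := by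
  rw [InnerProductGeometry.sin_angle_mul_norm_mul_norm, ← Real.sqrt_sq_eq_abs]
  congr 1
  have := o.inner_sq_add_areaForm_sq u v
  rw [real_inner_self_eq_norm_sq, real_inner_self_eq_norm_sq]
  nlinarith

instance fact_finrank_E2 : Fact (Module.finrank ℝ E2 = 2) := ⟨by simp⟩

variable {σ : ℝ} {t : Fin 3 → E2}

lemma sum_univ_three_cyclic {M : Type*} [AddCommMonoid M] (f : Fin 3 → M) (i : Fin 3) :
    ∑ j, f j = f i + f (i + 1) + f (i + 2) := by
  fin_cases i
  · exact Fin.sum_univ_three f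
  · exact (Fin.sum_univ_three f).trans (add_rotate _ _ _)
  · exact (Fin.sum_univ_three f).trans ((add_rotate _ _ _).trans (add_rotate _ _ _))

namespace angleLB

lemma le_angle (h : angleLB σ t) {i j k : Fin 3} (hij : i ≠ j) (hjk : j ≠ k) (hki : k ≠ i) :
    σ ≤ EuclideanGeometry.angle (t i) (t j) (t k) := by
  obtain ⟨rfl, rfl⟩ | ⟨rfl, rfl⟩ : (i = j + 1 ∧ k = j + 2) ∨ (i = j + 2 ∧ k = j + 1) := by
    revert i j k; decide
  · exact h j
  · rw [EuclideanGeometry.angle_comm]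
    exact h j

lemma sin_le_sin_angle (h : angleLB σ t) (hσ : 0 < σ) (ht : AffineIndependent ℝ t) {i j k : Fin 3}
    (hij : i ≠ j) (hjk : j ≠ k) (hki : k ≠ i) :
    Real.sin (min σ 1) ≤ Real.sin (EuclideanGeometry.angle (t i) (t j) (t k)) := by
  have hsum := EuclideanGeometry.angle_add_angle_add_angle_eq_pi (t k) (ht.injective.ne hij.symm)
  have hnonneg := EuclideanGeometry.angle_nonneg (t k) (t i) (t j)
  exact sin_min_one_le_sin hσ (h.le_angle hij hjk hki) (by linarith [h.le_angle hjk hki hij])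

-- The law of sines.
lemma sin_mul_dist_le_dist (h : angleLB σ t) (hσ : 0 < σ) (ht : AffineIndependent ℝ t)
    {i j k : Fin 3} (hij : i ≠ j) (hjk : j ≠ k) (hki : k ≠ i) :
    Real.sin (min σ 1) * dist (t i) (t j) ≤ dist (t j) (t k) :=
  calc Real.sin (min σ 1) * dist (t i) (t j)
      ≤ Real.sin (EuclideanGeometry.angle (t k) (t i) (t j)) * dist (t i) (t j) := by
        gcongr
        exact h.sin_le_sin_angle hσ ht hki hij hjk
    _ = Real.sin (EuclideanGeometry.angle (t j) (t k) (t i)) * dist (t j) (t k) :=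
        EuclideanGeometry.law_sin _ _ _
    _ ≤ dist (t j) (t k) := mul_le_of_le_one_left dist_nonneg (Real.sin_le_one _)

lemma sin_mul_diam_le_dist (h : angleLB σ t) (hσ : 0 < σ) (ht : AffineIndependent ℝ t)
    {j k : Fin 3} (hjk : j ≠ k) :
    Real.sin (min σ 1) * diam (triSet t) ≤ dist (t j) (t k) := by
  have hS := sin_min_one_pos hσ
  rw [← le_div_iff₀' hS]
  refine diam_triSet_le fun i l ↦ (le_div_iff₀' hS).2 ?_
  have hself : Real.sin (min σ 1) * dist (t j) (t k) ≤ dist (t j) (t k) :=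
    mul_le_of_le_one_left dist_nonneg (Real.sin_le_one _)
  obtain rfl | ⟨rfl, rfl⟩ | ⟨rfl, rfl⟩ | ⟨rfl, hij, hki⟩ | ⟨rfl, hlj, hkl⟩ | ⟨rfl, hij, hki⟩ |
      ⟨rfl, hlj, hkl⟩ : i = l ∨ (i = j ∧ l = k) ∨ (i = k ∧ l = j) ∨ (l = j ∧ i ≠ j ∧ k ≠ i) ∨
      (i = j ∧ l ≠ j ∧ k ≠ l) ∨ (l = k ∧ i ≠ j ∧ k ≠ i) ∨ (i = k ∧ l ≠ j ∧ k ≠ l) := by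
    clear hself
    revert i j k l; decide
  · simp
  · exact hself
  · rwa [dist_comm (t i)]
  · exact h.sin_mul_dist_le_dist hσ ht hij hjk hki
  · rw [dist_comm]
    exact h.sin_mul_dist_le_dist hσ ht hlj hjk hkl
  · rw [dist_comm (t j)]
    exact h.sin_mul_dist_le_dist hσ ht hki.symm hjk.symm hij.symm
  · rw [dist_comm, dist_comm (t j)]
    exact h.sin_mul_dist_le_dist hσ ht hkl.symm hjk.symm hlj.symm

end angleLB

-- Both sides are the signed area spanned by the side opposite to `t i` and the increment `x - y`.
lemma areaForm_sub_eq (ht : AffineIndependent ℝ t) (o : Orientation ℝ E2 (Fin 2)) (i : Fin 3)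
    (x y : E2) : o.areaForm (x - y) (t (i + 2) - t (i + 1)) =
      (baryCoord t i x - baryCoord t i y) *
        o.areaForm (t i - t (i + 1)) (t (i + 2) - t (i + 1)) := by
  have hsum (p : E2) : baryCoord t (i + 1) p = 1 - baryCoord t i p - baryCoord t (i + 2) p := by
    rw [← sum_baryCoord ht p, sum_univ_three_cyclic _ i]
    ring
  have hsub : x - y = (baryCoord t i x - baryCoord t i y) • (t i - t (i + 1)) +
      (baryCoord t (i + 2) x - baryCoord t (i + 2) y) • (t (i + 2) - t (i + 1)) := by
    conv_lhs => rw [← sum_baryCoord_smul ht x, ← sum_baryCoord_smul ht y,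
      sum_univ_three_cyclic _ i, sum_univ_three_cyclic _ i, hsum x, hsum y]
    module
  rw [hsub, LinearMap.map_add₂, LinearMap.map_smul₂, LinearMap.map_smul₂, o.areaForm_apply_self]
  simp

theorem angleLB.isShapeRegular (h : angleLB σ t) (hσ : 0 < σ) (ht : AffineIndependent ℝ t) :
    IsShapeRegular (Real.sin (min σ 1) ^ 2) t where
  affineIndependent := ht
  pos := pow_pos (sin_min_one_pos hσ) 2
  mul_abs_sub_le i x y := by
    let o : Orientation ℝ E2 (Fin 2) := (EuclideanSpace.basisFun (Fin 2) ℝ).toBasis.orientation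
    obtain ⟨hij, hjk, hki⟩ : i ≠ i + 1 ∧ i + 1 ≠ i + 2 ∧ i + 2 ≠ i := by revert i; decide
    have hS := sin_min_one_pos hσ
    refine le_of_mul_le_mul_right ?_ (dist_pos.2 (ht.injective.ne hjk.symm))
    calc Real.sin (min σ 1) ^ 2 * diam (triSet t) * |baryCoord t i x - baryCoord t i y| *
          dist (t (i + 2)) (t (i + 1))
        = |baryCoord t i x - baryCoord t i y| * (Real.sin (min σ 1) *
            ((Real.sin (min σ 1) * diam (triSet t)) * dist (t (i + 2)) (t (i + 1)))) := by ring
      _ ≤ |baryCoord t i x - baryCoord t i y| *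
            (Real.sin (EuclideanGeometry.angle (t i) (t (i + 1)) (t (i + 2))) *
              (dist (t i) (t (i + 1)) * dist (t (i + 2)) (t (i + 1)))) := by
          have hsin := h.sin_le_sin_angle hσ ht hij hjk hki
          gcongr
          · exact hS.le.trans hsin
          · exact h.sin_mul_diam_le_dist hσ ht hij
      _ = |o.areaForm (x - y) (t (i + 2) - t (i + 1))| := by
          rw [areaForm_sub_eq ht, abs_mul, abs_areaForm_eq, ← dist_eq_norm, ← dist_eq_norm]
          rfl
      _ ≤ dist x y * dist (t (i + 2)) (t (i + 1)) := by
          rw [dist_eq_norm, dist_eq_norm]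
          exact o.abs_areaForm_le _ _

end ShapeRegularity

section TriangleEstimate

lemma totalDegree_bind₁_le {ι τ R : Type*} [CommSemiring R] {f : ι → MvPolynomial τ R}
    (hf : ∀ i, (f i).totalDegree ≤ 1) (p : MvPolynomial ι R) :
    (MvPolynomial.bind₁ f p).totalDegree ≤ p.totalDegree := by
  rw [MvPolynomial.bind₁, MvPolynomial.aeval_def, MvPolynomial.eval₂_eq]
  refine MvPolynomial.totalDegree_finsetSum_le fun d hd ↦ ?_
  calc _ ≤ 0 + ∑ i ∈ d.support, d i * 1 := by
        refine (MvPolynomial.totalDegree_mul _ _).trans (add_le_add (by simp) ?_)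
        refine (MvPolynomial.totalDegree_finsetProd _ _).trans (Finset.sum_le_sum fun i _ ↦ ?_)
        exact (MvPolynomial.totalDegree_pow _ _).trans (Nat.mul_le_mul_left _ (hf i))
    _ = d.sum fun _ e ↦ e := by simp [Finsupp.sum]
    _ ≤ p.totalDegree := MvPolynomial.le_totalDegree hd

lemma totalDegree_affine_le {τ R : Type*} [Fintype τ] [CommSemiring R] [Nontrivial R]
    (b : R) (m : τ → R) :
    (MvPolynomial.C b + ∑ j, MvPolynomial.C (m j) * MvPolynomial.X j).totalDegree ≤ 1 := by
  refine (MvPolynomial.totalDegree_add _ _).trans (max_le (by simp) ?_)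
  refine MvPolynomial.totalDegree_finsetSum_le fun j _ ↦ ?_
  exact (MvPolynomial.totalDegree_mul _ _).trans (by simp)

lemma exists_eval_eq_pfun_sub {ℓ : ℕ} (hℓ : ℓ ≠ 0) {p : MvPolynomial (Fin 2) ℝ}
    (hp : p.totalDegree ≤ ℓ) (a : E2 →L[ℝ] ℝ) (b : ℝ) (z : E2) (u : Fin 2 → E2) :
    ∃ q : MvPolynomial (Fin 2) ℝ, q.totalDegree ≤ ℓ ∧ ∀ s : Fin 2 → ℝ,
      MvPolynomial.eval s q = pfun p (z + ∑ j, s j • u j) - (b + a (∑ j, s j • u j)) := by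
  refine ⟨MvPolynomial.bind₁
      (fun i ↦ MvPolynomial.C (z i) + ∑ j, MvPolynomial.C (u j i) * MvPolynomial.X j) p -
      (MvPolynomial.C b + ∑ j, MvPolynomial.C (a (u j)) * MvPolynomial.X j), ?_, fun s ↦ ?_⟩
  · refine (MvPolynomial.totalDegree_sub _ _).trans (max_le ?_ ?_)
    · exact (totalDegree_bind₁_le (fun i ↦ totalDegree_affine_le _ _) p).trans hp
    · exact (totalDegree_affine_le _ _).trans (Nat.one_le_iff_ne_zero.2 hℓ)
  · rw [map_sub, MvPolynomial.eval, MvPolynomial.eval₂Hom_bind₁]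
    simp [pfun, mul_comm]

lemma lagNodes_subset_triSet {ℓ : ℕ} (hℓ : ℓ ≠ 0) (t : Fin 3 → E2) :
    lagNodes ℓ t ⊆ triSet t := by
  rintro _ ⟨a, ha, rfl⟩
  simp only [Finset.smul_sum, smul_smul]
  refine (convex_triSet t).sum_mem (fun i _ ↦ by positivity) ?_ fun i _ ↦ vertex_mem_triSet t i
  rw [← Finset.mul_sum, ← Nat.cast_sum, ha, inv_mul_cancel₀ (Nat.cast_ne_zero.2 hℓ)]

lemma eq_add_sum_baryCoord_smul {t : Fin 3 → E2} (ht : AffineIndependent ℝ t) (x : E2) :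
    x = t 0 + ∑ j : Fin 2, baryCoord t j.succ x • (t j.succ - t 0) := by
  have hsum := sum_baryCoord ht x
  rw [Fin.sum_univ_succ] at hsum
  conv_lhs => rw [← sum_baryCoord_smul ht x, Fin.sum_univ_succ, eq_sub_of_add_eq hsum]
  simp only [smul_sub, Finset.sum_sub_distrib, ← Finset.sum_smul]
  module

lemma exists_lagNode_baryCoord_eq {ℓ : ℕ} (hℓ : ℓ ≠ 0) {t : Fin 3 → E2}
    (ht : AffineIndependent ℝ t) {n : Fin 2 → ℕ} (hn : ∑ j, n j ≤ ℓ) :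
    ∃ x ∈ lagNodes ℓ t, ∀ j : Fin 2, baryCoord t j.succ x = (n j : ℝ) / ℓ := by
  let a : Fin 3 → ℕ := Fin.cons (ℓ - ∑ j, n j) n
  have ha : ∑ i, a i = ℓ := by
    rw [Fin.sum_univ_succ]
    simpa [a] using Nat.sub_add_cancel hn
  refine ⟨_, ⟨a, ha, rfl⟩, fun j ↦ ?_⟩
  simp only [Finset.smul_sum, smul_smul]
  rw [baryCoord_sum_smul ht (by
    rw [← Finset.mul_sum, ← Nat.cast_sum, ha, inv_mul_cancel₀ (Nat.cast_ne_zero.2 hℓ)])]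
  simp [a, div_eq_inv_mul]

lemma rpow_mul_div_le_rpow {θ r d : ℝ} (hθ1 : θ ≤ 1) (hr : 0 ≤ r) (hd : 0 < d) (hrd : r ≤ d) :
    d ^ θ * (r / d) ≤ r ^ θ := by
  rcases hr.eq_or_lt with rfl | hr
  · simpa using Real.rpow_nonneg le_rfl θ
  calc d ^ θ * (r / d) ≤ d ^ θ * (r / d) ^ θ := by
        gcongr
        conv_lhs => rw [← Real.rpow_one (r / d)]
        exact Real.rpow_le_rpow_of_exponent_ge (by positivity) ((div_le_one hd).2 hrd) hθ1
    _ = r ^ θ := by rw [← Real.mul_rpow hd.le (by positivity), mul_div_cancel₀ _ hd.ne']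

-- Subtracting the affine function with gradient `a`, which interpolation reproduces, makes all
-- nodal values of order `A * diam ^ θ`.
lemma exists_abs_sub_lagrange_le {ℓ : ℕ} (hℓ : ℓ ≠ 0) {θ κ : ℝ} (hθ : 0 < θ) (hθ1 : θ < 1)
    (hκ : 0 < κ) : ∃ C > 0, ∀ {t : Fin 3 → E2}, IsShapeRegular κ t →
      ∀ {w W : E2 → ℝ} {A : ℝ} (a : E2 →L[ℝ] ℝ),
      (∀ x ∈ triSet t, ∀ y ∈ triSet t, |w x - w y - a (x - y)| ≤ A * dist x y ^ θ) →
      (∃ p : MvPolynomial (Fin 2) ℝ, p.totalDegree ≤ ℓ ∧ ∀ x ∈ triSet t, W x = pfun p x) →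
      (∀ x ∈ lagNodes ℓ t, W x = w x) → ∀ x ∈ triSet t, ∀ y ∈ triSet t,
        |(w x - W x) - (w y - W y)| ≤ C * A * dist x y ^ θ := by
  obtain ⟨L, hL, heval⟩ :=
    exists_abs_eval_sub_eval_le hℓ (isCompact_Icc (a := (0 : Fin 2 → ℝ)) (b := 1))
  refine ⟨1 + L * κ⁻¹, by positivity, fun {t} ht {w W A} a ha ⟨p, hp, hWp⟩ hnode x hx y hy ↦ ?_⟩
  have hti := ht.affineIndependent
  have hd := ht.diam_pos
  have ht₀ := vertex_mem_triSet t 0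
  have hA : 0 ≤ A := nonneg_of_mul_nonneg_left ((abs_nonneg _).trans
    (ha _ ht₀ _ (vertex_mem_triSet t 1)))
    (Real.rpow_pos_of_pos (dist_pos.2 (hti.injective.ne (by decide))) θ)
  obtain ⟨q, hqdeg, hq⟩ := exists_eval_eq_pfun_sub hℓ hp a (w (t 0)) (t 0) fun j ↦ t j.succ - t 0
  let s (x : E2) (j : Fin 2) : ℝ := baryCoord t j.succ x
  have hqs {x : E2} (hx : x ∈ triSet t) :
      MvPolynomial.eval (s x) q = W x - (w (t 0) + a (x - t 0)) := by
    have hrep := eq_add_sum_baryCoord_smul hti x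
    rw [hq, ← hrep, ← hWp x hx, ← eq_sub_of_add_eq' hrep.symm]
  have hs {x : E2} (hx : x ∈ triSet t) : s x ∈ Icc (0 : Fin 2 → ℝ) 1 :=
    ⟨fun j ↦ (mem_triSet_iff hti).1 hx _, fun j ↦ baryCoord_le_one hti hx _⟩
  have hqnode (n : Fin 2 → ℕ) (hn : ∑ j, n j ≤ ℓ) :
      |MvPolynomial.eval (fun j ↦ (n j : ℝ) / ℓ) q| ≤ A * diam (triSet t) ^ θ := by
    obtain ⟨x, hx, hxn⟩ := exists_lagNode_baryCoord_eq hℓ hti hn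
    have hxt := lagNodes_subset_triSet hℓ t hx
    rw [← funext hxn, hqs hxt, hnode x hx, ← sub_sub]
    refine (ha x hxt _ ht₀).trans ?_
    gcongr
    exact dist_le_diam_triSet hxt ht₀
  have hdist : dist (s x) (s y) ≤ κ⁻¹ * (dist x y / diam (triSet t)) :=
    (dist_pi_le_iff (by positivity)).2 fun j ↦ ht.abs_sub_le _ x y
  calc |(w x - W x) - (w y - W y)|
      = |(w x - w y - a (x - y)) - (MvPolynomial.eval (s x) q - MvPolynomial.eval (s y) q)| := by
        rw [hqs hx, hqs hy, map_sub, map_sub, map_sub]; congr 1; ring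
    _ ≤ A * dist x y ^ θ + L * (A * diam (triSet t) ^ θ) *
          (κ⁻¹ * (dist x y / diam (triSet t))) := by
        refine (abs_sub _ _).trans (add_le_add (ha x hx y hy) ?_)
        refine (heval q hqdeg _ hqnode _ (hs hx) _ (hs hy)).trans ?_
        gcongr
    _ = A * dist x y ^ θ + L * κ⁻¹ * A *
          (diam (triSet t) ^ θ * (dist x y / diam (triSet t))) := by ring
    _ ≤ A * dist x y ^ θ + L * κ⁻¹ * A * dist x y ^ θ := by
        gcongr
        exact rpow_mul_div_le_rpow hθ1.le dist_nonneg hd (dist_le_diam_triSet hx hy)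
    _ = (1 + L * κ⁻¹) * A * dist x y ^ θ := by ring

theorem exists_abs_interpolation_sub_le {ℓ : ℕ} (hℓ : ℓ ≠ 0) {θ κ : ℝ} (hθ : 0 < θ) (hθ1 : θ < 1)
    (hκ : 0 < κ) : ∃ C > 0, ∀ {t : Fin 3 → E2}, IsShapeRegular κ t →
      ∀ {w W : E2 → ℝ} {g : Fin 2 → E2 → ℝ} {M : ℝ}, ContinuousOn w (triSet t) →
      (∀ i, Measurable (g i)) → (∀ i, IntegrableOn (g i) (interior (triSet t))) →
      (∀ i, HasWeakPD (interior (triSet t)) i w (g i)) → 0 ≤ M →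
      gagliardoEnergy θ (interior (triSet t)) (gradientForm g) ≤ ENNReal.ofReal (M ^ 2) →
      (∃ p : MvPolynomial (Fin 2) ℝ, p.totalDegree ≤ ℓ ∧ ∀ x ∈ triSet t, W x = pfun p x) →
      (∀ x ∈ lagNodes ℓ t, W x = w x) → ∀ x ∈ triSet t, ∀ y ∈ triSet t,
        |(w x - W x) - (w y - W y)| ≤ C * dist x y ^ θ * M := by
  obtain ⟨C, hC, hlagrange⟩ := exists_abs_sub_lagrange_le hℓ hθ hθ1 hκ
  have hmorrey := morreyConst_pos hθ hθ1 (c := Real.pi * (κ / 3) ^ 2) (by positivity)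
  refine ⟨C * morreyConst θ (Real.pi * (κ / 3) ^ 2), by positivity,
    fun {t} ht {w W g M} hw hgm hg hweak hM hE hW hnode x hx y hy ↦ ?_⟩
  obtain ⟨a, ha⟩ := ht.isFatConvexBody.exists_abs_sub_sub_le hθ hθ1 hw hgm hg hweak hM hE
  refine (hlagrange ht a (A := morreyConst θ (Real.pi * (κ / 3) ^ 2) * M)
    (fun x hx y hy ↦ (ha x hx y hy).trans_eq (by ring)) hW hnode x hx y hy).trans_eq (by ring)

end TriangleEstimate

section InteriorCone

/-- The interior cone condition at `z`: one cone of directions, of aperture `ε` and axis `ν`,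
leads from every point of `closure Ω` near `z` into `Ω`. -/
def HasInteriorCone (Ω : Set E2) (ε : ℝ) (z : E2) : Prop :=
  ∃ ν : E2, ‖ν‖ = 1 ∧ ∃ r > 0, ∀ x ∈ closure Ω ∩ ball z r, ∀ v, ‖v - ν‖ ≤ ε →
    ∀ s ∈ Ioo 0 r, x + s • v ∈ Ω

variable {Ω : Set E2} {ε ε' : ℝ} {z : E2}

lemma HasInteriorCone.mono (h : HasInteriorCone Ω ε z) (hε : ε' ≤ ε) :
    HasInteriorCone Ω ε' z := by
  obtain ⟨ν, hν, r, hr, hcone⟩ := h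
  exact ⟨ν, hν, r, hr, fun x hx v hv ↦ hcone x hx v (hv.trans hε)⟩

lemma HasInteriorCone.eventually (h : HasInteriorCone Ω ε z) :
    ∀ᶠ y in 𝓝 z, HasInteriorCone Ω ε y := by
  obtain ⟨ν, hν, r, hr, hcone⟩ := h
  filter_upwards [ball_mem_nhds z (half_pos hr)] with y hy
  refine ⟨ν, hν, r / 2, half_pos hr, fun x hx v hv s hs ↦ hcone x ⟨hx.1, ?_⟩ v hv s
    ⟨hs.1, hs.2.trans (half_lt_self hr)⟩⟩
  exact ball_subset_ball' (by linarith [mem_ball.1 hy]) hx.2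

lemma lipschitzWith_inner_sub_comp_orthogonal {ν : E2} (hν : ‖ν‖ = 1) {L : ℝ≥0} {γ : E2 → ℝ}
    (hγ : LipschitzWith L γ) :
    LipschitzWith (1 + L) fun y ↦ inner ℝ y ν - γ (y - (inner ℝ y ν : ℝ) • ν) := by
  have hinner : LipschitzWith 1 fun y : E2 ↦ (inner ℝ y ν : ℝ) := by
    refine LipschitzWith.of_dist_le_mul fun x y ↦ ?_
    rw [Real.dist_eq, ← inner_sub_left, NNReal.coe_one, one_mul, dist_eq_norm]
    simpa [hν] using abs_real_inner_le_norm (x - y) ν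
  have horthogonal : LipschitzWith 1 fun y : E2 ↦ y - (inner ℝ y ν : ℝ) • ν := by
    refine LipschitzWith.of_dist_le_mul fun x y ↦ ?_
    have hdiff : x - (inner ℝ x ν : ℝ) • ν - (y - (inner ℝ y ν : ℝ) • ν) =
        (x - y) - (inner ℝ (x - y) ν : ℝ) • ν := by rw [inner_sub_left]; module
    rw [NNReal.coe_one, one_mul, dist_eq_norm, dist_eq_norm, hdiff]
    refine le_of_sq_le_sq ?_ (norm_nonneg _)
    rw [norm_sub_sq_real, norm_smul, inner_smul_right, hν, Real.norm_eq_abs, mul_one, sq_abs]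
    nlinarith [sq_nonneg (inner ℝ (x - y) ν : ℝ)]
  simpa using hinner.sub (hγ.comp horthogonal)

lemma HasLipschitzBoundary.exists_height (h : HasLipschitzBoundary Ω) (hz : z ∈ frontier Ω) :
    ∃ (ν : E2) (L : ℝ≥0) (φ : E2 → ℝ) (U : Set E2), ‖ν‖ = 1 ∧ LipschitzWith (1 + L) φ ∧
      (∀ y (s : ℝ), φ (y + s • ν) = φ y + s) ∧ IsOpen U ∧ z ∈ U ∧ ∀ y ∈ U, (y ∈ Ω ↔ 0 < φ y) := by
  obtain ⟨ν, L, γ, U, hν, hγ, hU, hzU, hΩ⟩ := h z hz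
  refine ⟨ν, L, fun y ↦ inner ℝ y ν - γ (y - (inner ℝ y ν : ℝ) • ν), U, hν,
    lipschitzWith_inner_sub_comp_orthogonal hν hγ, fun y s ↦ ?_, hU, hzU, fun y hy ↦ ?_⟩
  · have hinner : (inner ℝ (y + s • ν) ν : ℝ) = inner ℝ y ν + s := by
      rw [inner_add_left, real_inner_smul_left, real_inner_self_eq_norm_sq, hν]; ring
    have hproj : y + s • ν - ((inner ℝ y ν : ℝ) + s) • ν = y - (inner ℝ y ν : ℝ) • ν := by module
    simp only [hinner, hproj]
    ring
  · simpa [hy, sub_pos] using Set.ext_iff.1 hΩ y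

lemma HasLipschitzBoundary.exists_hasInteriorCone (h : HasLipschitzBoundary Ω)
    (hz : z ∈ frontier Ω) : ∃ ε > 0, HasInteriorCone Ω ε z := by
  obtain ⟨ν, L, φ, U, hν, hlip, hadd, hU, hzU, hmem⟩ := h.exists_height hz
  have hclosure : ∀ y ∈ closure Ω, y ∈ U → 0 ≤ φ y := fun y hy hyU ↦
    closure_minimal (fun p (hp : p ∈ U ∩ Ω) ↦ ((hmem p hp.1).1 hp.2).le)
      (isClosed_le continuous_const hlip.continuous) (hU.inter_closure ⟨hyU, hy⟩)
  obtain ⟨r, hr, hrU⟩ := Metric.isOpen_iff.1 hU z hzU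
  refine ⟨1 / (2 * (1 + L)), by positivity, ν, hν, r / 4, by positivity, ?_⟩
  rintro x ⟨hx, hxz⟩ v hv s ⟨hs, hsr⟩
  have hvν : ‖v - ν‖ * (1 + L) ≤ 1 / 2 := by
    calc ‖v - ν‖ * (1 + L) ≤ 1 / (2 * (1 + L)) * (1 + L) := by gcongr
      _ = 1 / 2 := by field_simp
  have hvν' : ‖v - ν‖ ≤ 1 := by nlinarith [norm_nonneg (v - ν)]
  have hv2 : ‖v‖ ≤ 2 := by linarith [norm_le_norm_sub_add v ν]
  rw [mem_ball] at hxz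
  have hxU : x ∈ U := hrU (by rw [mem_ball]; linarith)
  have hxsU : x + s • v ∈ U := hrU <| by
    have hdist : dist (x + s • v) x = s * ‖v‖ := by
      rw [dist_eq_norm, add_sub_cancel_left, norm_smul, Real.norm_of_nonneg hs.le]
    rw [mem_ball]
    nlinarith [dist_triangle (x + s • v) x z]
  have hdev : |φ (x + s • v) - φ (x + s • ν)| ≤ (1 + L) * (s * ‖v - ν‖) := by
    have hdist : dist (x + s • v) (x + s • ν) = s * ‖v - ν‖ := by
      rw [dist_add_left, dist_eq_norm, ← smul_sub, norm_smul, Real.norm_of_nonneg hs.le]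
    simpa [hdist, Real.dist_eq] using hlip.dist_le_mul (x + s • v) (x + s • ν)
  refine (hmem _ hxsU).2 ?_
  rw [hadd] at hdev
  nlinarith [hclosure x hx hxU, (abs_le.1 hdev).1]

lemma HasLipschitzBoundary.exists_forall_hasInteriorCone (h : HasLipschitzBoundary Ω)
    (hb : Bornology.IsBounded Ω) : ∃ ε > 0, ∀ z ∈ frontier Ω, HasInteriorCone Ω ε z := by
  have hcompact : IsCompact (frontier Ω) := isCompact_of_isClosed_isBounded isClosed_frontier
    (hb.closure.subset frontier_subset_closure)
  refine hcompact.induction_on (p := fun s ↦ ∃ ε > 0, ∀ z ∈ s, HasInteriorCone Ω ε z)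
    ⟨1, one_pos, by simp⟩ ?_ ?_ fun z hz ↦ ?_
  · rintro s t hst ⟨ε, hε, ht⟩
    exact ⟨ε, hε, fun z hz ↦ ht z (hst hz)⟩
  · rintro s t ⟨ε, hε, hs⟩ ⟨ε', hε', ht⟩
    refine ⟨min ε ε', lt_min hε hε', ?_⟩
    rintro z (hz | hz)
    · exact (hs z hz).mono (min_le_left _ _)
    · exact (ht z hz).mono (min_le_right _ _)
  · obtain ⟨ε, hε, hcone⟩ := h.exists_hasInteriorCone hz
    exact ⟨_, mem_nhdsWithin_of_mem_nhds hcone.eventually, ε, hε, fun y hy ↦ hy⟩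

lemma HasLipschitzBoundary.interior_closure (h : HasLipschitzBoundary Ω) (ho : IsOpen Ω) :
    interior (closure Ω) = Ω := by
  refine Subset.antisymm (fun x hx ↦ ?_) (interior_maximal subset_closure ho)
  by_contra hxΩ
  have hfrontier : x ∈ frontier Ω := by
    rw [ho.frontier_eq]; exact ⟨interior_subset hx, hxΩ⟩
  obtain ⟨ε, hε, ν, hν, r, hr, hcone⟩ := h.exists_hasInteriorCone hfrontier
  obtain ⟨δ, hδ, hδΩ⟩ := Metric.isOpen_iff.1 isOpen_interior x hx
  obtain ⟨s, hs, hsmin⟩ := exists_between (lt_min hr hδ)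
  have hdist : dist (x - s • ν) x = s := by
    rw [dist_eq_norm, sub_sub_cancel_left, norm_neg, norm_smul, hν, mul_one,
      Real.norm_of_nonneg hs.le]
  have hxs : x - s • ν + s • ν ∈ Ω := by
    refine hcone _ ⟨interior_subset (hδΩ ?_), ?_⟩ ν (by simpa using hε.le) s
      ⟨hs, hsmin.trans_le (min_le_left _ _)⟩
    · rw [mem_ball, hdist]; exact hsmin.trans_le (min_le_right _ _)
    · rw [mem_ball, hdist]; exact hsmin.trans_le (min_le_left _ _)
  exact hxΩ (by simpa using hxs)

lemma mem_of_mem_segment_of_cone {ν x c q : E2} {r k : ℝ}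
    (hcone : ∀ v, ‖v - ν‖ ≤ ε → ∀ s ∈ Ioo 0 r, x + s • v ∈ Ω) (hk : 0 ≤ k) (hkr : k < r)
    (hc : ‖c - x - k • ν‖ ≤ k * ε) (hq : q ∈ segment ℝ x c) (hqx : q ≠ x) : q ∈ Ω := by
  rw [segment_eq_image'] at hq
  obtain ⟨τ, ⟨hτ0, hτ1⟩, rfl⟩ := hq
  have hτ : 0 < τ := hτ0.lt_of_ne fun hτ ↦ hqx (by simp [← hτ])
  have hk' : 0 < k := hk.lt_of_ne fun hk ↦ hqx <| by
    have : c - x = 0 := by simpa [← hk] using hc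
    simp [this]
  have hv : ‖k⁻¹ • (c - x) - ν‖ ≤ ε := by
    have hscale : k⁻¹ • (c - x) - ν = k⁻¹ • (c - x - k • ν) := by
      rw [smul_sub _ _ (k • ν), inv_smul_smul₀ hk'.ne']
    rw [hscale, norm_smul, norm_inv, Real.norm_of_nonneg hk, inv_mul_le_iff₀ hk']
    exact hc
  have hpoint := hcone _ hv (τ * k) ⟨by positivity, by nlinarith⟩
  rwa [smul_smul, mul_assoc, mul_inv_cancel₀ hk'.ne', mul_one] at hpoint

-- The corner `y + (dist x y / ε) • ν` lies in the cones over both `x` and `y`.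
lemma HasInteriorCone.exists_corner (h : HasInteriorCone Ω ε z) (hε : 0 < ε) {r : ℝ}
    (hr : 0 < r) : ∃ δ > 0, ∀ x ∈ closure Ω ∩ ball z δ, ∀ y ∈ closure Ω ∩ ball z δ, ∃ c,
      c ∈ ball z r ∧ dist x c ≤ (1 + ε⁻¹) * dist x y ∧ dist c y ≤ (1 + ε⁻¹) * dist x y ∧
      (∀ q ∈ segment ℝ x c, q ≠ x → q ∈ Ω) ∧ ∀ q ∈ segment ℝ c y, q ≠ y → q ∈ Ω := by
  obtain ⟨ν, hν, R, hR, hcone⟩ := h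
  set ρ := min r R
  have hρ : 0 < ρ := lt_min hr hR
  have hδρ : ρ / (1 + 2 * ε⁻¹) * (1 + 2 * ε⁻¹) = ρ := by field_simp
  have hδ : 0 < ρ / (1 + 2 * ε⁻¹) := by positivity
  set δ := ρ / (1 + 2 * ε⁻¹)
  refine ⟨δ, hδ, fun x ⟨hx, hxz⟩ y ⟨hy, hyz⟩ ↦ ?_⟩
  rw [mem_ball] at hxz hyz
  have hεinv : 0 < ε⁻¹ := inv_pos.2 hε
  have hdist : dist x y < 2 * δ := by linarith [dist_triangle_right x y z]
  set k := dist x y * ε⁻¹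
  have hk : 0 ≤ k := by positivity
  have hkε : k * ε = dist x y := by simp only [k]; field_simp
  have hkδ : δ + k < ρ := by simp only [k]; nlinarith
  have hcR : ∀ p ∈ closure Ω, dist p z < δ → ∀ v, ‖v - ν‖ ≤ ε → ∀ s ∈ Ioo 0 R, p + s • v ∈ Ω :=
    fun p hp hpz ↦ hcone p ⟨hp, by rw [mem_ball]; linarith [min_le_right r R]⟩
  have hkR : k < R := by linarith [min_le_right r R]
  have hcy : dist (y + k • ν) y = k := by
    rw [dist_eq_norm, add_sub_cancel_left, norm_smul, hν, mul_one, Real.norm_of_nonneg hk]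
  refine ⟨y + k • ν, ?_, ?_, ?_, fun q hq ↦ ?_, fun q hq ↦ ?_⟩
  · rw [mem_ball]
    linarith [dist_triangle (y + k • ν) y z, min_le_left r R]
  · rw [dist_comm]
    calc dist (y + k • ν) x ≤ k + dist y x := by linarith [dist_triangle (y + k • ν) y x]
      _ = (1 + ε⁻¹) * dist x y := by rw [dist_comm]; ring
  · rw [hcy]
    nlinarith [dist_nonneg (x := x) (y := y)]
  · refine mem_of_mem_segment_of_cone (hcR x hx hxz) hk hkR ?_ hq
    rw [hkε, dist_comm, dist_eq_norm]
    exact le_of_eq (by congr 1; abel)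
  · rw [segment_symm] at hq
    exact mem_of_mem_segment_of_cone (hcR y hy hyz) hk hkR (by simpa using by positivity) hq

lemma HasLipschitzBoundary.exists_two_segment_path (h : HasLipschitzBoundary Ω) (ho : IsOpen Ω)
    (hb : Bornology.IsBounded Ω) : ∃ K > 0, ∀ z ∈ closure Ω, ∀ r > 0, ∃ δ > 0,
      ∀ x ∈ closure Ω ∩ ball z δ, ∀ y ∈ closure Ω ∩ ball z δ, ∃ c,
        segment ℝ x c ∪ segment ℝ c y ⊆ closure Ω ∩ ball z r ∧
        dist x c ≤ K * dist x y ∧ dist c y ≤ K * dist x y ∧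
        (x ≠ z → y ≠ z → z ∉ segment ℝ x y → z ∉ segment ℝ x c ∪ segment ℝ c y) := by
  obtain ⟨ε, hε, hcone⟩ := h.exists_forall_hasInteriorCone hb
  refine ⟨1 + ε⁻¹, by positivity, fun z hz r hr ↦ ?_⟩
  by_cases hzΩ : z ∈ Ω
  · obtain ⟨ρ, hρ, hρΩ⟩ := Metric.isOpen_iff.1 ho z hzΩ
    refine ⟨min ρ r, lt_min hρ hr, fun x hx y hy ↦ ⟨y, fun q hq ↦ ?_, ?_, ?_, ?_⟩⟩
    · rw [segment_same, union_singleton, insert_eq_of_mem (right_mem_segment ℝ x y)] at hq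
      have hqz := (convex_ball z _).segment_subset hx.2 hy.2 hq
      exact ⟨subset_closure (hρΩ (ball_subset_ball (min_le_left _ _) hqz)),
        ball_subset_ball (min_le_right _ _) hqz⟩
    · exact le_mul_of_one_le_left dist_nonneg (by linarith [inv_pos.2 hε])
    · rw [dist_self]; positivity
    · rintro - hyz hseg (hz | hz)
      · exact hseg hz
      · rw [segment_same] at hz
        exact hyz hz.symm
  · obtain ⟨δ, hδ, hcorner⟩ :=
      (hcone z (by rw [ho.frontier_eq]; exact ⟨hz, hzΩ⟩)).exists_corner hε hr
    refine ⟨min δ r, lt_min hδ hr, fun x ⟨hx, hxz⟩ y ⟨hy, hyz⟩ ↦ ?_⟩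
    obtain ⟨c, hc, hxc, hcy, hqx, hqy⟩ := hcorner
      x ⟨hx, ball_subset_ball (min_le_left _ _) hxz⟩ y ⟨hy, ball_subset_ball (min_le_left _ _) hyz⟩
    refine ⟨c, ?_, hxc, hcy, ?_⟩
    · refine subset_inter (fun q hq ↦ ?_) (union_subset
        ((convex_ball z r).segment_subset (ball_subset_ball (min_le_right _ _) hxz) hc)
        ((convex_ball z r).segment_subset hc (ball_subset_ball (min_le_right _ _) hyz)))
      rcases eq_or_ne q x with rfl | hx'
      · exact hx
      rcases eq_or_ne q y with rfl | hy'
      · exact hy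
      exact subset_closure (hq.elim (fun hq ↦ hqx q hq hx') fun hq ↦ hqy q hq hy')
    · rintro hx' hy' - (hq | hq)
      · exact hzΩ (hqx z hq hx'.symm)
      · exact hzΩ (hqy z hq hy'.symm)

end InteriorCone

section StarTriangulation

lemma eq_or_eq_of_segment_eq {E : Type*} [AddCommGroup E] [Module ℝ E] {a b c d : E}
    (h : segment ℝ a b = segment ℝ c d) : c = a ∨ c = b := by
  have hc : Wbtw ℝ a c b := mem_segment_iff_wbtw.1 (h ▸ left_mem_segment ℝ c d)
  have ha : a ∈ segment ℝ c d := h ▸ left_mem_segment ℝ a b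
  have hb : b ∈ segment ℝ c d := h ▸ right_mem_segment ℝ a b
  rw [segment_eq_image'] at ha hb
  obtain ⟨r, ⟨hr, -⟩, hra⟩ := ha
  obtain ⟨s, ⟨hs, -⟩, hsb⟩ := hb
  have htotal : Wbtw ℝ c a b ∨ Wbtw ℝ c b a := by
    simpa [← hra, ← hsb, add_comm] using wbtw_or_wbtw_smul_vadd_of_nonneg c (d - c) hr hs
  rcases htotal with hcab | hcba
  · exact Or.inl (hcab.swap_left_iff.1 hc)
  · exact Or.inr (hcba.swap_left_iff.1 hc.symm)

lemma baryCoord_add_smul {t : Fin 3 → E2} (ht : AffineIndependent ℝ t) (i j k : Fin 3) {a b : ℝ}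
    (hab : a + b = 1) : baryCoord t j (a • t i + b • t k) =
      a * (if j = i then 1 else 0) + b * (if j = k then 1 else 0) := by
  rw [Convex.combo_affine_apply hab, baryCoord_vertex ht, baryCoord_vertex ht, smul_eq_mul,
    smul_eq_mul]

lemma eq_or_eq_of_vertex_mem_segment {t : Fin 3 → E2} (ht : AffineIndependent ℝ t) {i j k : Fin 3}
    (h : t j ∈ segment ℝ (t i) (t k)) : j = i ∨ j = k := by
  obtain ⟨a, b, -, -, hab, hj⟩ := h
  by_contra! hne
  simpa [hj, baryCoord_vertex ht, hne.1, hne.2] using baryCoord_add_smul ht i j k hab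

namespace Triangulation

variable {Ω : Set E2} {t t' : Fin 3 → E2}

lemma exists_common_face (𝒯 : Triangulation Ω) (ht : t ∈ 𝒯.tris) (ht' : t' ∈ 𝒯.tris)
    (hne : t ≠ t') {x : E2} (hx : x ∈ triSet t) (hx' : x ∈ triSet t') :
    ∃ i k i' k', t i = t' i' ∧ t k = t' k' ∧ triSet t ∩ triSet t' = segment ℝ (t i) (t k) := by
  rcases 𝒯.conform t ht t' ht' hne with hempty | ⟨i, i', hi, hinter⟩ | ⟨i, i', hi, hinter⟩
  · exact absurd ⟨hx, hx'⟩ (hempty ▸ notMem_empty x)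
  · exact ⟨i, i, i', i', hi, hi, by rw [hinter, segment_same]⟩
  have hvertex : ∀ k', t' k' = t (i + 1) ∨ t' k' = t (i + 2) → ∃ k, t k = t' k' := by
    rintro k' (h | h)
    exacts [⟨_, h.symm⟩, ⟨_, h.symm⟩]
  obtain ⟨k, hk⟩ := hvertex (i' + 1) (eq_or_eq_of_segment_eq hi)
  obtain ⟨j, hj⟩ := hvertex (i' + 2) (eq_or_eq_of_segment_eq (hi.trans (segment_symm ℝ _ _)))
  exact ⟨k, j, i' + 1, i' + 2, hk, hj, by rw [hinter, hi, hk, hj]; rfl⟩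

lemma exists_vertex_eq (𝒯 : Triangulation Ω) (ht : t ∈ 𝒯.tris) (ht' : t' ∈ 𝒯.tris) {j' : Fin 3}
    (h : t' j' ∈ triSet t) : ∃ j, t j = t' j' := by
  rcases eq_or_ne t t' with rfl | hne
  · exact ⟨j', rfl⟩
  obtain ⟨i, k, i', k', hi, hk, hface⟩ :=
    𝒯.exists_common_face ht ht' hne h (vertex_mem_triSet t' j')
  have hmem : t' j' ∈ segment ℝ (t' i') (t' k') := by
    rw [← hi, ← hk, ← hface]
    exact ⟨h, vertex_mem_triSet t' j'⟩
  rcases eq_or_eq_of_vertex_mem_segment (𝒯.nondeg t' ht') hmem with rfl | rfl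
  exacts [⟨i, hi⟩, ⟨k, hk⟩]

lemma baryCoord_eq_of_vertex_eq (𝒯 : Triangulation Ω) (ht : t ∈ 𝒯.tris) (ht' : t' ∈ 𝒯.tris)
    {j j' : Fin 3} (hj : t j = t' j') {x : E2} (hx : x ∈ triSet t) (hx' : x ∈ triSet t') :
    baryCoord t j x = baryCoord t' j' x := by
  have hinj := (𝒯.nondeg t ht).injective
  have hinj' := (𝒯.nondeg t' ht').injective
  rcases eq_or_ne t t' with rfl | hne
  · rw [hinj hj]
  obtain ⟨i, k, i', k', hi, hk, hface⟩ := 𝒯.exists_common_face ht ht' hne hx hx'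
  obtain ⟨a, b, -, -, hab, rfl⟩ : x ∈ segment ℝ (t i) (t k) := hface ▸ ⟨hx, hx'⟩
  have hindex : ∀ {m m'}, t m = t' m' → (j = m ↔ j' = m') := fun hm ↦ by
    rw [← hinj.eq_iff, ← hinj'.eq_iff, hj, hm]
  rw [baryCoord_add_smul (𝒯.nondeg t ht) i j k hab, hi, hk,
    baryCoord_add_smul (𝒯.nondeg t' ht') i' j' k' hab]
  simp only [hindex hi, hindex hk]

lemma exists_shared_edge (𝒯 : Triangulation Ω) (ht : t ∈ 𝒯.tris) (ht' : t' ∈ 𝒯.tris)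
    (hne : t ≠ t') {j j' : Fin 3} (hj : t j = t' j') {x : E2} (hx : x ∈ triSet t)
    (hx' : x ∈ triSet t') (hxj : x ≠ t j) : ∃ k k', k ≠ j ∧ t k = t' k' := by
  obtain ⟨i, k, i', k', hi, hk, hface⟩ := 𝒯.exists_common_face ht ht' hne hx hx'
  have hxmem : x ∈ segment ℝ (t i) (t k) := hface ▸ ⟨hx, hx'⟩
  by_contra! hall
  obtain rfl : i = j := by_contra fun h ↦ hall i i' h hi
  obtain rfl : k = i := by_contra fun h ↦ hall k k' h hk
  exact hxj (by simpa [segment_same] using hxmem)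

lemma mul_diam_le_diam (𝒯 : Triangulation Ω) {κ : ℝ} (ht : t ∈ 𝒯.tris) (ht' : t' ∈ 𝒯.tris)
    (hκ : IsShapeRegular κ t) {j j' : Fin 3} (hj : t j = t' j') {x : E2} (hx : x ∈ triSet t)
    (hx' : x ∈ triSet t') (hxj : x ≠ t j) : κ * diam (triSet t) ≤ diam (triSet t') := by
  rcases eq_or_ne t t' with rfl | hne
  · exact mul_le_of_le_one_left diam_nonneg hκ.le_one
  obtain ⟨k, k', hk, hkk'⟩ := 𝒯.exists_shared_edge ht ht' hne hj hx hx' hxj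
  calc κ * diam (triSet t) ≤ dist (t j) (t k) := hκ.mul_diam_le_dist hk.symm
    _ = dist (t' j') (t' k') := by rw [hj, hkk']
    _ ≤ diam (triSet t') := dist_le_diam_triSet (vertex_mem_triSet t' j') (vertex_mem_triSet t' k')

lemma disjoint_interior (𝒯 : Triangulation Ω) (ht : t ∈ 𝒯.tris) (ht' : t' ∈ 𝒯.tris)
    (hne : t ≠ t') : Disjoint (interior (triSet t)) (triSet t') := by
  refine Set.disjoint_left.2 fun x hx hx' ↦ ?_
  have hthird : ∀ i k : Fin 3, ∃ j, j ≠ i ∧ j ≠ k := by decide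
  obtain ⟨i, k, -, -, -, -, hface⟩ :=
    𝒯.exists_common_face ht ht' hne (interior_subset hx) hx'
  obtain ⟨a, b, -, -, hab, rfl⟩ : x ∈ segment ℝ (t i) (t k) := hface ▸ ⟨interior_subset hx, hx'⟩
  obtain ⟨j, hji, hjk⟩ : ∃ j, j ≠ i ∧ j ≠ k := hthird i k
  have hpos := (mem_interior_triSet_iff (𝒯.nondeg t ht)).1 hx j
  rw [baryCoord_add_smul (𝒯.nondeg t ht) i j k hab, if_neg hji, if_neg hjk] at hpos
  simp at hpos

open Classical in
/-- The triangles of `𝒯` with vertex `z`; their union is `starZ 𝒯 z`. -/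
def star (𝒯 : Triangulation Ω) (z : E2) : Finset (Fin 3 → E2) := {t ∈ 𝒯.tris | ∃ i, t i = z}

variable {𝒯 : Triangulation Ω} {z : E2}

lemma mem_star : t ∈ 𝒯.star z ↔ t ∈ 𝒯.tris ∧ ∃ i, t i = z := by simp [star]

lemma mem_triSet_of_mem_star (ht : t ∈ 𝒯.star z) : z ∈ triSet t := by
  obtain ⟨-, i, rfl⟩ := mem_star.1 ht
  exact vertex_mem_triSet t i

lemma mem_starZ_iff {x : E2} : x ∈ starZ 𝒯 z ↔ ∃ t ∈ 𝒯.star z, x ∈ triSet t := by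
  simp only [starZ, mem_iUnion, mem_star, exists_prop, and_assoc]

lemma star_nonempty (hz : z ∈ 𝒯.verts) : (𝒯.star z).Nonempty := by
  simp only [verts, Finset.mem_biUnion, Finset.mem_insert, Finset.mem_singleton] at hz
  obtain ⟨t, ht, hzt⟩ := hz
  refine ⟨t, mem_star.2 ⟨ht, ?_⟩⟩
  rcases hzt with h | h | h
  exacts [⟨0, h.symm⟩, ⟨1, h.symm⟩, ⟨2, h.symm⟩]

lemma triSet_subset_closure (ht : t ∈ 𝒯.tris) : triSet t ⊆ closure Ω := by
  rw [← 𝒯.cover]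
  exact subset_biUnion_of_mem (u := fun t ↦ triSet t) ht

lemma starZ_subset_closure : starZ 𝒯 z ⊆ closure Ω := fun x hx ↦ by
  obtain ⟨t, ht, hxt⟩ := mem_starZ_iff.1 hx
  exact triSet_subset_closure (mem_star.1 ht).1 hxt

lemma exists_ball_subset_starZ (hz : z ∈ 𝒯.verts) :
    ∃ r > 0, closure Ω ∩ ball z r ⊆ starZ 𝒯 z := by
  classical
  obtain ⟨t', hts'⟩ := star_nonempty hz
  obtain ⟨ht', i', rfl⟩ := mem_star.1 hts'
  set A : Set E2 := ⋃ t ∈ 𝒯.tris \ 𝒯.star (t' i'), triSet t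
  have hA : IsClosed A := isClosed_biUnion_finset fun t _ ↦ (isCompact_triSet t).isClosed
  have hzA : t' i' ∉ A := by
    simp only [A, mem_iUnion, Finset.mem_sdiff, not_exists]
    rintro t ⟨ht, hts⟩ hzt
    exact hts (mem_star.2 ⟨ht, 𝒯.exists_vertex_eq ht ht' hzt⟩)
  obtain ⟨r, hr, hrA⟩ := Metric.isOpen_iff.1 hA.isOpen_compl _ hzA
  refine ⟨r, hr, fun x ⟨hx, hxz⟩ ↦ ?_⟩
  rw [← 𝒯.cover] at hx
  obtain ⟨t, ht, hxt⟩ := mem_iUnion₂.1 hx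
  exact mem_starZ_iff.2 ⟨t, by_contra fun hts ↦
    hrA hxz (mem_iUnion₂.2 ⟨t, Finset.mem_sdiff.2 ⟨ht, hts⟩, hxt⟩), hxt⟩

end Triangulation

lemma IsFatConvexBody.mul_sq_le_volume_homothety {c : ℝ} {K : Set E2} (hK : IsFatConvexBody c K)
    (z : E2) (ρ : ℝ) :
    c * ρ ^ 2 ≤ volume.real (AffineMap.homothety z (ρ / Metric.diam K) '' interior K) := by
  have hd := hK.diam_pos
  have hinterior : volume.real (interior K) = volume.real K :=
    measureReal_congr (interior_ae_eq_of_null_frontier (hK.convex.addHaar_frontier volume))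
  have hscale : volume.real (AffineMap.homothety z (ρ / Metric.diam K) '' interior K) =
      (ρ / Metric.diam K) ^ 2 * volume.real (interior K) := by
    rw [Measure.real, Measure.addHaar_image_homothety, ENNReal.toReal_mul,
      ENNReal.toReal_ofReal (abs_nonneg _), finrank_euclideanSpace, Fintype.card_fin,
      abs_of_nonneg (by positivity), Measure.real]
  rw [hscale, hinterior]
  calc c * ρ ^ 2 = (ρ / Metric.diam K) ^ 2 * (c * Metric.diam K ^ 2) := by field_simp
    _ ≤ _ := by gcongr; exact hK.mul_sq_diam_le

-- Shrinking every body towards the common point `z` to the smallest diameter `ρ` of the family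
-- packs disjoint sets of measure at least `c * ρ ^ 2` into the ball of radius `ρ`.
lemma IsFatConvexBody.card_mul_le_pi {ι : Type*} {S : Finset ι} {K : ι → Set E2} {c : ℝ}
    (hK : ∀ i ∈ S, IsFatConvexBody c (K i)) {z : E2} (hz : ∀ i ∈ S, z ∈ K i)
    (hdisj : (S : Set ι).PairwiseDisjoint fun i ↦ interior (K i)) : S.card * c ≤ Real.pi := by
  rcases S.eq_empty_or_nonempty with rfl | hS
  · simpa using Real.pi_pos.le
  obtain ⟨i₀, hi₀, hmin⟩ := S.exists_min_image (fun i ↦ Metric.diam (K i)) hS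
  set ρ := Metric.diam (K i₀)
  have hρ : 0 < ρ := (hK i₀ hi₀).diam_pos
  set Q : ι → Set E2 := fun i ↦ AffineMap.homothety z (ρ / Metric.diam (K i)) '' interior (K i)
  have hscale : ∀ i ∈ S, ρ / Metric.diam (K i) ∈ Ioc 0 1 := fun i hi ↦
    have hd := (hK i hi).diam_pos
    ⟨by positivity, (div_le_one hd).2 (hmin i hi)⟩
  have hopen : ∀ i ∈ S, IsOpen (Q i) := fun i hi ↦
    AffineMap.homothety_isOpenMap z _ (hscale i hi).1.ne' _ isOpen_interior
  have hsub : ∀ i ∈ S, Q i ⊆ interior (K i) := by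
    rintro i hi _ ⟨x, hx, rfl⟩
    rw [AffineMap.homothety_apply, vsub_eq_sub, vadd_eq_add, add_comm]
    exact (hK i hi).convex.add_smul_sub_mem_interior (hz i hi) hx (hscale i hi)
  have hball : (⋃ i ∈ S, Q i) ⊆ closedBall z ρ := by
    refine iUnion₂_subset fun i hi ↦ ?_
    rintro _ ⟨x, hx, rfl⟩
    have hd := (hK i hi).diam_pos
    rw [mem_closedBall, dist_homothety_center, Real.norm_of_nonneg (hscale i hi).1.le]
    calc ρ / Metric.diam (K i) * dist z x ≤ ρ / Metric.diam (K i) * Metric.diam (K i) := by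
          gcongr; exact (hK i hi).dist_le_diam (hz i hi) (interior_subset hx)
      _ = ρ := by field_simp
  have hvolume : S.card • (c * ρ ^ 2) ≤ Real.pi * ρ ^ 2 := calc
    S.card • (c * ρ ^ 2) ≤ ∑ i ∈ S, volume.real (Q i) := Finset.card_nsmul_le_sum _ _ _
        fun i hi ↦ (hK i hi).mul_sq_le_volume_homothety z ρ
    _ = volume.real (⋃ i ∈ S, Q i) :=
        (measureReal_biUnion_finset (fun i hi j hj hij ↦ (hdisj hi hj hij).mono (hsub i hi)
          (hsub j hj)) (fun i hi ↦ (hopen i hi).measurableSet) fun i hi ↦ measure_ne_top_of_subset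
            ((hsub i hi).trans interior_subset) (hK i hi).isCompact.measure_ne_top).symm
    _ ≤ volume.real (closedBall z ρ) :=
        measureReal_mono hball (isCompact_closedBall z ρ).measure_ne_top
    _ = Real.pi * ρ ^ 2 := by
        rw [Measure.real, EuclideanSpace.volume_closedBall_fin_two, ENNReal.toReal_mul,
          ENNReal.toReal_pow, ENNReal.toReal_ofReal hρ.le, ENNReal.toReal_ofReal Real.pi_pos.le,
          mul_comm]
  rw [nsmul_eq_mul, ← mul_assoc] at hvolume
  exact le_of_mul_le_mul_right hvolume (by positivity)

lemma Triangulation.exists_card_star_le {κ : ℝ} (hκ : 0 < κ) : ∃ N : ℕ, ∀ {Ω : Set E2}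
    (𝒯 : Triangulation Ω), (∀ t ∈ 𝒯.tris, IsShapeRegular κ t) → ∀ z, (𝒯.star z).card ≤ N := by
  have hc : 0 < Real.pi * (κ / 3) ^ 2 := by positivity
  refine ⟨⌊Real.pi / (Real.pi * (κ / 3) ^ 2)⌋₊, fun {Ω} 𝒯 hreg z ↦ Nat.le_floor ?_⟩
  rw [le_div_iff₀ hc]
  refine IsFatConvexBody.card_mul_le_pi
    (fun t ht ↦ (hreg t (mem_star.1 ht).1).isFatConvexBody) (z := z)
    (fun t ht ↦ mem_triSet_of_mem_star ht) fun t ht t' ht' hne ↦ ?_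
  exact (𝒯.disjoint_interior (mem_star.1 ht).1 (mem_star.1 ht').1 hne).mono_right interior_subset

end StarTriangulation

section Chaining

lemma abs_sub_le_card_mul_of_Icc_cover {ι : Type*} {A : ι → Set ℝ} (hA : ∀ j, IsClosed (A j))
    {f : ℝ → ℝ} {c a b : ℝ} (hab : a ≤ b) {S : Finset ι} (hcov : Icc a b ⊆ ⋃ j ∈ S, A j)
    (hosc : ∀ j ∈ S, ∀ x ∈ A j ∩ Icc a b, ∀ y ∈ A j ∩ Icc a b, |f x - f y| ≤ c) :
    |f a - f b| ≤ S.card * c := by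
  classical
  induction S using Finset.strongInductionOn generalizing a with
  | _ S ih =>
  have haI : a ∈ Icc a b := left_mem_Icc.2 hab
  obtain ⟨j, hj, haj⟩ := mem_iUnion₂.1 (hcov haI)
  have hc : 0 ≤ c := (abs_nonneg _).trans (hosc j hj a ⟨haj, haI⟩ a ⟨haj, haI⟩)
  have hcompact : IsCompact (A j ∩ Icc a b) := isCompact_Icc.inter_left (hA j)
  obtain ⟨hej, hae, heb⟩ := hcompact.sSup_mem ⟨a, haj, haI⟩
  have hlast : ∀ x ∈ A j ∩ Icc a b, x ≤ sSup (A j ∩ Icc a b) := fun x ↦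
    le_csSup hcompact.bddAbove
  set e := sSup (A j ∩ Icc a b)
  have hfe : |f a - f e| ≤ c := hosc j hj a ⟨haj, haI⟩ e ⟨hej, hae, heb⟩
  have hcard : ((S.erase j).card : ℝ) + 1 = S.card := by
    exact_mod_cast Finset.card_erase_add_one hj
  suffices hrest : |f e - f b| ≤ (S.erase j).card * c by
    rw [← hcard]
    linarith [abs_sub_le (f a) (f e) (f b)]
  rcases heb.eq_or_lt with heb' | heb'
  · rw [heb', sub_self, abs_zero]; positivity
  refine ih _ (Finset.erase_ssubset hj) heb ?_ fun k hk x hx y hy ↦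
    hosc k (Finset.mem_of_mem_erase hk) x ⟨hx.1, Icc_subset_Icc_left hae hx.2⟩ y
      ⟨hy.1, Icc_subset_Icc_left hae hy.2⟩
  rw [← closure_Ioc heb'.ne]
  refine closure_minimal (fun x hx ↦ ?_) (isClosed_biUnion_finset fun k _ ↦ hA k)
  have hxI : x ∈ Icc a b := ⟨hae.trans hx.1.le, hx.2⟩
  obtain ⟨k, hk, hxk⟩ := mem_iUnion₂.1 (hcov hxI)
  refine mem_iUnion₂.2 ⟨k, Finset.mem_erase.2 ⟨?_, hk⟩, hxk⟩
  rintro rfl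
  exact (hlast x ⟨hxk, hxI⟩).not_gt hx.1

lemma abs_sub_le_card_mul_of_segment_cover {ι : Type*} {S : Finset ι} {A : ι → Set E2}
    (hA : ∀ j, IsClosed (A j)) {F : E2 → ℝ} {x y : E2} {b : ℝ}
    (hcov : segment ℝ x y ⊆ ⋃ j ∈ S, A j)
    (hosc : ∀ j ∈ S, ∀ p ∈ A j ∩ segment ℝ x y, ∀ q ∈ A j ∩ segment ℝ x y, |F p - F q| ≤ b) :
    |F x - F y| ≤ S.card * b := by
  have hmem : ∀ s ∈ Icc (0 : ℝ) 1, lineMap x y s ∈ segment ℝ x y := fun s hs ↦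
    segment_eq_image_lineMap ℝ x y ▸ mem_image_of_mem _ hs
  have hchain := abs_sub_le_card_mul_of_Icc_cover (S := S) (f := fun s ↦ F (lineMap x y s))
    (c := b) (fun j ↦ (hA j).preimage (AffineMap.lineMap_continuous (p := x) (q := y)))
    zero_le_one
    (fun s hs ↦ by simpa only [mem_iUnion, mem_preimage] using hcov (hmem s hs))
    fun j hj s hs s' hs' ↦ hosc j hj _ ⟨hs.1, hmem s hs.2⟩ _ ⟨hs'.1, hmem s' hs'.2⟩
  simpa using hchain

lemma dist_le_of_mem_segment {E : Type*} [NormedAddCommGroup E] [NormedSpace ℝ E] {x y p q : E}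
    (hp : p ∈ segment ℝ x y) (hq : q ∈ segment ℝ x y) : dist p q ≤ dist x y := by
  rw [← convexHull_pair] at hp hq
  rw [← diam_pair (x := x) (y := y), ← convexHull_diam]
  exact dist_le_diam_of_mem (isBounded_convexHull.2 (Set.toFinite _).isBounded) hp hq

namespace Triangulation

variable {Ω : Set E2} {𝒯 : Triangulation Ω} {z : E2}

lemma abs_sub_le_card_star_mul {F : E2 → ℝ} {x c y : E2} {b d : ℝ}
    (hpath : segment ℝ x c ∪ segment ℝ c y ⊆ starZ 𝒯 z) (hxc : dist x c ≤ d) (hcy : dist c y ≤ d)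
    (hosc : ∀ t ∈ 𝒯.star z, ∀ p ∈ triSet t, ∀ q ∈ triSet t,
      p ∈ segment ℝ x c ∪ segment ℝ c y → q ∈ segment ℝ x c ∪ segment ℝ c y →
      dist p q ≤ d → |F p - F q| ≤ b) : |F x - F y| ≤ 2 * (𝒯.star z).card * b := by
  have hchain : ∀ p q, segment ℝ p q ⊆ segment ℝ x c ∪ segment ℝ c y → dist p q ≤ d →
      |F p - F q| ≤ (𝒯.star z).card * b := fun p q hseg hd ↦ by
    refine abs_sub_le_card_mul_of_segment_cover (fun t ↦ (isCompact_triSet t).isClosed)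
      (fun u hu ↦ ?_) fun t ht u hu v hv ↦ hosc t ht u hu.1 v hv.1 (hseg hu.2) (hseg hv.2)
        ((dist_le_of_mem_segment hu.2 hv.2).trans hd)
    simpa only [mem_iUnion, exists_prop] using mem_starZ_iff.1 (hpath (hseg hu))
  linarith [abs_sub_le (F x) (F c) (F y), hchain x c subset_union_left hxc,
    hchain c y subset_union_right hcy]

lemma homothety_mem_triSet {t : Fin 3 → E2} (ht : t ∈ 𝒯.star z) {s : ℝ} (hs : s ∈ Icc 0 1)
    {x : E2} (hx : x ∈ triSet t) : AffineMap.homothety z s x ∈ triSet t := by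
  rw [AffineMap.homothety_eq_lineMap]
  exact (convex_triSet t).lineMap_mem (mem_triSet_of_mem_star ht) hx hs

lemma eventually_homothety_mem_ball (x : E2) {δ : ℝ} (hδ : 0 < δ) :
    ∀ᶠ s : ℝ in 𝓝[>] 0, AffineMap.homothety z s x ∈ ball z δ := by
  have hcont : Continuous fun s : ℝ ↦ AffineMap.homothety z s x := by
    simp only [AffineMap.homothety_eq_lineMap]
    exact AffineMap.lineMap_continuous
  exact nhdsWithin_le_nhds (hcont.continuousAt.preimage_mem_nhds
    (by simpa using ball_mem_nhds z hδ))

lemma exists_path_in_starZ (ho : IsOpen Ω) (hb : Bornology.IsBounded Ω)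
    (hΩ : HasLipschitzBoundary Ω) : ∃ K > 0, ∀ (𝒯 : Triangulation Ω), ∀ z ∈ 𝒯.verts,
      ∀ x ∈ starZ 𝒯 z, ∀ y ∈ starZ 𝒯 z, ∃ s ∈ Ioc (0 : ℝ) 1, ∃ x' y' c,
        x' = AffineMap.homothety z s x ∧ y' = AffineMap.homothety z s y ∧
        segment ℝ x' c ∪ segment ℝ c y' ⊆ starZ 𝒯 z ∧
        dist x' c ≤ K * (s * dist x y) ∧ dist c y' ≤ K * (s * dist x y) ∧
        (x ≠ z → y ≠ z → z ∉ segment ℝ x y → z ∉ segment ℝ x' c ∪ segment ℝ c y') := by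
  obtain ⟨K, hK, hpath⟩ := hΩ.exists_two_segment_path ho hb
  refine ⟨K, hK, fun 𝒯 z hz x hx y hy ↦ ?_⟩
  obtain ⟨t, ht⟩ := star_nonempty hz
  obtain ⟨r, hr, hcover⟩ := exists_ball_subset_starZ hz
  obtain ⟨δ, hδ, hpath⟩ :=
    hpath z (triSet_subset_closure (mem_star.1 ht).1 (mem_triSet_of_mem_star ht)) r hr
  obtain ⟨s, ⟨hxs, hys⟩, hs⟩ := (((eventually_homothety_mem_ball x hδ).and
    (eventually_homothety_mem_ball y hδ)).and (Ioc_mem_nhdsGT one_pos)).exists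
  have hclosure : ∀ p ∈ starZ 𝒯 z, AffineMap.homothety z s p ∈ closure Ω := fun p hp ↦ by
    obtain ⟨t, ht, hpt⟩ := mem_starZ_iff.1 hp
    exact triSet_subset_closure (mem_star.1 ht).1 (homothety_mem_triSet ht ⟨hs.1.le, hs.2⟩ hpt)
  obtain ⟨c, hsub, hxc, hcy, hz⟩ := hpath _ ⟨hclosure x hx, hxs⟩ _ ⟨hclosure y hy, hys⟩
  have hdist : dist (AffineMap.homothety z s x) (AffineMap.homothety z s y) = s * dist x y := by
    simp only [AffineMap.homothety_apply, vsub_eq_sub, vadd_eq_add]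
    rw [dist_add_right, dist_smul₀, dist_sub_right, Real.norm_of_nonneg hs.1.le]
  rw [hdist] at hxc hcy
  have hinj := AffineMap.homothety_injective z hs.1.ne'
  have hfix := AffineMap.homothety_apply_same z s
  refine ⟨s, hs, _, _, c, rfl, rfl, hsub.trans hcover, hxc, hcy, fun hxz hyz hseg ↦ hz ?_ ?_ ?_⟩
  · exact fun h ↦ hxz (hinj (h.trans hfix.symm))
  · exact fun h ↦ hyz (hinj (h.trans hfix.symm))
  · rw [← image_segment]
    rintro ⟨p, hp, hpz⟩
    exact hseg (hinj (hpz.trans hfix.symm) ▸ hp)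

end Triangulation

end Chaining

section TruncatedDilation

variable {t : Fin 3 → E2} {i : Fin 3} {κ s : ℝ}

lemma dist_vertex_le (ht : AffineIndependent ℝ t) {q : E2} (hq : q ∈ triSet t) (i : Fin 3) :
    dist q (t i) ≤ diam (triSet t) * (1 - baryCoord t i q) := by
  have hterm : ∀ j, ‖baryCoord t j q • (t j - t i)‖ ≤
      diam (triSet t) * (baryCoord t j q - if j = i then baryCoord t j q else 0) := fun j ↦ by
    rw [norm_smul, Real.norm_of_nonneg ((mem_triSet_iff ht).1 hq j), ← dist_eq_norm, mul_comm]
    split_ifs with hj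
    · simp [hj]
    · rw [sub_zero]
      exact mul_le_mul_of_nonneg_right
        (dist_le_diam_triSet (vertex_mem_triSet t j) (vertex_mem_triSet t i))
        ((mem_triSet_iff ht).1 hq j)
  have hsum : ∑ j, baryCoord t j q • (t j - t i) = q - t i := by
    simp only [smul_sub, Finset.sum_sub_distrib, ← Finset.sum_smul, sum_baryCoord_smul ht,
      sum_baryCoord ht, one_smul]
  calc dist q (t i) = ‖∑ j, baryCoord t j q • (t j - t i)‖ := by rw [hsum, dist_eq_norm]
    _ ≤ _ := norm_sum_le_of_le _ fun j _ ↦ hterm j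
    _ = diam (triSet t) * (1 - baryCoord t i q) := by
        simp [← Finset.mul_sum, Finset.sum_sub_distrib, sum_baryCoord ht]

lemma baryCoord_homothety (t : Fin 3 → E2) (j : Fin 3) (z x : E2) (r : ℝ) :
    baryCoord t j (AffineMap.homothety z r x) =
      (1 - r) * baryCoord t j z + r * baryCoord t j x := by
  rw [AffineMap.homothety_eq_lineMap, AffineMap.apply_lineMap, AffineMap.lineMap_apply_ring]

/-- The dilation by `s⁻¹` about `z`, with the dilation factor reduced at the points whose image
would have gauge larger than one; here `m` is a gauge that is homogeneous about `z`. -/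
def truncatedDilation (m : E2 → ℝ) (z : E2) (s : ℝ) (p : E2) : E2 :=
  AffineMap.homothety z (max s (m p))⁻¹ p

lemma truncatedDilation_homothety (hs : 0 < s) {m : E2 → ℝ} {z x : E2}
    (hm : m (AffineMap.homothety z s x) ≤ s) :
    truncatedDilation m z s (AffineMap.homothety z s x) = x := by
  rw [truncatedDilation, max_eq_left hm, ← AffineMap.homothety_mul_apply,
    inv_mul_cancel₀ hs.ne', AffineMap.homothety_one, AffineMap.id_apply]

lemma truncatedDilation_mem (ht : AffineIndependent ℝ t) (hs : 0 < s) {m : E2 → ℝ}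
    (hm : ∀ p ∈ triSet t, m p = 1 - baryCoord t i p) {p : E2} (hp : p ∈ triSet t) :
    truncatedDilation m (t i) s p ∈ triSet t := by
  have hpos : 0 < max s (m p) := lt_max_of_lt_left hs
  rw [mem_triSet_iff ht]
  intro k
  rw [truncatedDilation, baryCoord_homothety, baryCoord_vertex ht]
  split_ifs with hk
  · subst hk
    have hle : (max s (m p))⁻¹ * m p ≤ 1 := by
      rw [inv_mul_le_iff₀ hpos, mul_one]
      exact le_max_right _ _
    rw [hm p hp] at hle ⊢
    linarith
  · have := (mem_triSet_iff ht).1 hp k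
    rw [mul_zero, zero_add]
    positivity

lemma dist_homothety_homothety_le {E : Type*} [NormedAddCommGroup E] [NormedSpace ℝ E]
    (z p q : E) {u v : ℝ} (hu : 0 < u) (hv : 0 < v) :
    dist (AffineMap.homothety z u⁻¹ p) (AffineMap.homothety z v⁻¹ q) ≤
      u⁻¹ * (dist p q + |u - v| * (dist q z / v)) := by
  have hsplit : AffineMap.homothety z u⁻¹ p - AffineMap.homothety z v⁻¹ q =
      u⁻¹ • (p - q) + (u⁻¹ - v⁻¹) • (q - z) := by
    simp only [AffineMap.homothety_apply, vsub_eq_sub, vadd_eq_add]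
    module
  have hinv : |u⁻¹ - v⁻¹| = u⁻¹ * (|u - v| / v) := by
    rw [inv_sub_inv hu.ne' hv.ne', abs_div, abs_of_pos (mul_pos hu hv), abs_sub_comm]
    field_simp
  rw [dist_eq_norm, hsplit]
  refine (norm_add_le _ _).trans_eq ?_
  rw [norm_smul, norm_smul, Real.norm_of_nonneg (inv_pos.2 hu).le, Real.norm_eq_abs, hinv,
    ← dist_eq_norm, ← dist_eq_norm]
  ring

lemma dist_truncatedDilation_le (ht : IsShapeRegular κ t) (hs : 0 < s) {m : E2 → ℝ}
    (hm : ∀ p ∈ triSet t, m p = 1 - baryCoord t i p) {p q : E2} (hp : p ∈ triSet t)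
    (hq : q ∈ triSet t) :
    dist (truncatedDilation m (t i) s p) (truncatedDilation m (t i) s q) ≤
      (1 + κ⁻¹) * s⁻¹ * dist p q := by
  have hκ := ht.pos
  have hd := ht.diam_pos
  have hu : s ≤ max s (m p) := le_max_left _ _
  have hv : 0 < max s (m q) := lt_max_of_lt_left hs
  have huv : |max s (m p) - max s (m q)| ≤ κ⁻¹ * (dist p q / diam (triSet t)) :=
    calc |max s (m p) - max s (m q)| ≤ |m p - m q| := by
          simpa only [max_comm s] using abs_max_sub_max_le_abs (m p) (m q) s
      _ = |baryCoord t i q - baryCoord t i p| := by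
          rw [hm p hp, hm q hq, sub_sub_sub_cancel_left]
      _ ≤ κ⁻¹ * (dist p q / diam (triSet t)) := by
          rw [abs_sub_comm]
          exact ht.abs_sub_le i p q
  have hqz : dist q (t i) / max s (m q) ≤ diam (triSet t) := by
    rw [div_le_iff₀ hv]
    refine (dist_vertex_le ht.affineIndependent hq i).trans ?_
    rw [← hm q hq]
    exact mul_le_mul_of_nonneg_left (le_max_right _ _) hd.le
  calc dist (truncatedDilation m (t i) s p) (truncatedDilation m (t i) s q)
      ≤ (max s (m p))⁻¹ * (dist p q + |max s (m p) - max s (m q)| *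
          (dist q (t i) / max s (m q))) :=
        dist_homothety_homothety_le _ _ _ (hs.trans_le hu) hv
    _ ≤ s⁻¹ * (dist p q + κ⁻¹ * (dist p q / diam (triSet t)) * diam (triSet t)) := by gcongr
    _ = (1 + κ⁻¹) * s⁻¹ * dist p q := by field_simp

end TruncatedDilation

section StarEstimates

lemma exists_vertex_notMem_segment {t : Fin 3 → E2} (ht : AffineIndependent ℝ t) {i : Fin 3}
    {x : E2} (hx : x ≠ t i) : ∃ k ≠ i, t i ∉ segment ℝ x (t k) := by
  obtain ⟨l, hl, hlx⟩ : ∃ l ≠ i, baryCoord t l x ≠ 0 := by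
    by_contra! h
    have hi : baryCoord t i x = 1 := by
      rw [← sum_baryCoord ht x, Finset.sum_eq_single i (fun j _ hj ↦ h j hj) (by simp)]
    rw [← sum_baryCoord_smul ht x, Finset.sum_eq_single i
      (fun j _ hj ↦ by rw [h j hj, zero_smul]) (by simp), hi, one_smul] at hx
    exact hx rfl
  obtain ⟨k, hki, hkl⟩ : ∃ k, k ≠ i ∧ k ≠ l :=
    (by decide : ∀ i l : Fin 3, ∃ k, k ≠ i ∧ k ≠ l) i l
  refine ⟨k, hki, fun hseg ↦ ?_⟩
  rw [segment_eq_image_lineMap] at hseg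
  obtain ⟨r, -, hr⟩ := hseg
  have hcoord := congrArg (baryCoord t l) hr
  rw [AffineMap.apply_lineMap, AffineMap.lineMap_apply_ring, baryCoord_vertex ht,
    baryCoord_vertex ht, if_neg hkl.symm, if_neg hl, mul_zero, add_zero, mul_eq_zero,
    or_iff_left hlx, sub_eq_zero] at hcoord
  rw [← hcoord, AffineMap.lineMap_apply_one] at hr
  exact hki (ht.injective hr)

namespace Triangulation

variable {Ω : Set E2} {κ : ℝ}

lemma exists_gauge (𝒯 : Triangulation Ω) (z : E2) :
    ∃ m : E2 → ℝ, ∀ t ∈ 𝒯.tris, ∀ i, t i = z → ∀ p ∈ triSet t, m p = 1 - baryCoord t i p := by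
  have hpt : ∀ p, ∃ a : ℝ, ∀ t ∈ 𝒯.tris, ∀ i, t i = z → p ∈ triSet t →
      a = 1 - baryCoord t i p := fun p ↦ by
    by_cases h : ∃ t ∈ 𝒯.tris, ∃ i, t i = z ∧ p ∈ triSet t
    · obtain ⟨t, ht, i, hi, hp⟩ := h
      exact ⟨1 - baryCoord t i p, fun t' ht' i' hi' hp' ↦ by
        rw [𝒯.baryCoord_eq_of_vertex_eq ht ht' (hi.trans hi'.symm) hp hp']⟩
    · exact ⟨0, fun t ht i hi hp ↦ absurd ⟨t, ht, i, hi, hp⟩ h⟩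
  choose m hm using hpt
  exact ⟨m, fun t ht i hi p ↦ hm p t ht i hi⟩

lemma exists_holder_of_holder_on_triangles (ho : IsOpen Ω) (hb : Bornology.IsBounded Ω)
    (hΩ : HasLipschitzBoundary Ω) (hκ : 0 < κ) {θ : ℝ} (hθ : 0 ≤ θ) :
    ∃ C > 0, ∀ (𝒯 : Triangulation Ω), (∀ t ∈ 𝒯.tris, IsShapeRegular κ t) → ∀ z ∈ 𝒯.verts,
      ∀ (f : E2 → ℝ) (B : ℝ), 0 ≤ B →
        (∀ t ∈ 𝒯.star z, ∀ x ∈ triSet t, ∀ y ∈ triSet t, |f x - f y| ≤ B * dist x y ^ θ) →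
        ∀ x ∈ starZ 𝒯 z, ∀ y ∈ starZ 𝒯 z, |f x - f y| ≤ C * (B * dist x y ^ θ) := by
  obtain ⟨N, hN⟩ := exists_card_star_le hκ
  obtain ⟨K, hK, hpath⟩ := exists_path_in_starZ ho hb hΩ
  refine ⟨2 * (N + 1) * ((1 + κ⁻¹) * K) ^ θ, by positivity, ?_⟩
  intro 𝒯 hreg z hz f B hB hf x hx y hy
  obtain ⟨s, ⟨hs, hs1⟩, x', y', c, rfl, rfl, hsub, hxc, hcy, -⟩ := hpath 𝒯 z hz x hx y hy
  obtain ⟨m, hm⟩ := 𝒯.exists_gauge z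
  have hdil : ∀ p ∈ starZ 𝒯 z,
      truncatedDilation m z s (AffineMap.homothety z s p) = p := fun p hp ↦ by
    obtain ⟨t, ht, hpt⟩ := mem_starZ_iff.1 hp
    obtain ⟨htT, i, hi⟩ := mem_star.1 ht
    have hind := (hreg t htT).affineIndependent
    refine truncatedDilation_homothety hs ?_
    rw [hm t htT i hi _ (homothety_mem_triSet ht ⟨hs.le, hs1⟩ hpt), ← hi, baryCoord_homothety,
      baryCoord_vertex hind, if_pos rfl]
    nlinarith [(mem_triSet_iff hind).1 hpt i]
  have hmain := abs_sub_le_card_star_mul (F := fun p ↦ f (truncatedDilation m z s p))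
    (b := B * ((1 + κ⁻¹) * K * dist x y) ^ θ) hsub hxc hcy fun t ht p hp q hq _ _ hpq ↦ by
      obtain ⟨htT, i, rfl⟩ := mem_star.1 ht
      have hmt := hm t htT i rfl
      have hind := (hreg t htT).affineIndependent
      refine (hf t ht _ (truncatedDilation_mem hind hs hmt hp) _
        (truncatedDilation_mem hind hs hmt hq)).trans ?_
      gcongr
      calc _ ≤ (1 + κ⁻¹) * s⁻¹ * dist p q := dist_truncatedDilation_le (hreg t htT) hs hmt hp hq
        _ ≤ (1 + κ⁻¹) * s⁻¹ * (K * (s * dist x y)) := by gcongr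
        _ = (1 + κ⁻¹) * K * dist x y := by field_simp
  rw [hdil x hx, hdil y hy] at hmain
  have hcard : ((𝒯.star z).card : ℝ) ≤ N + 1 :=
    (Nat.cast_le.2 (hN 𝒯 hreg z)).trans (by linarith)
  calc |f x - f y| ≤ 2 * (𝒯.star z).card * (B * ((1 + κ⁻¹) * K * dist x y) ^ θ) := hmain
    _ ≤ 2 * (N + 1) * (B * ((1 + κ⁻¹) * K * dist x y) ^ θ) := by gcongr
    _ = 2 * (N + 1) * ((1 + κ⁻¹) * K) ^ θ * (B * dist x y ^ θ) := by
        rw [Real.mul_rpow (by positivity) dist_nonneg]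
        ring

lemma exists_abs_sub_log_diam_le (𝒯 : Triangulation Ω) (hreg : ∀ t ∈ 𝒯.tris, IsShapeRegular κ t)
    (z : E2) : ∃ F : E2 → ℝ, ∀ t ∈ 𝒯.star z, ∀ p ∈ triSet t, p ≠ z →
      |F p - Real.log (diam (triSet t))| ≤ -Real.log κ := by
  have hle : ∀ t ∈ 𝒯.star z, ∀ t' ∈ 𝒯.star z, ∀ p ∈ triSet t, p ∈ triSet t' → p ≠ z →
      Real.log κ + Real.log (diam (triSet t)) ≤ Real.log (diam (triSet t')) := by
    intro t ht t' ht' p hp hp' hpz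
    obtain ⟨htT, i, rfl⟩ := mem_star.1 ht
    obtain ⟨htT', i', hi'⟩ := mem_star.1 ht'
    have hκ := (hreg t htT).pos
    have hd := (hreg t htT).diam_pos
    rw [← Real.log_mul hκ.ne' hd.ne']
    exact Real.log_le_log (by positivity)
      (𝒯.mul_diam_le_diam htT htT' (hreg t htT) hi'.symm hp hp' hpz)
  have hpt : ∀ p, ∃ a : ℝ, ∀ t ∈ 𝒯.star z, p ∈ triSet t → p ≠ z →
      |a - Real.log (diam (triSet t))| ≤ -Real.log κ := fun p ↦ by
    by_cases h : ∃ t ∈ 𝒯.star z, p ∈ triSet t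
    · obtain ⟨t, ht, hp⟩ := h
      refine ⟨Real.log (diam (triSet t)), fun t' ht' hp' hpz ↦ abs_le.2 ⟨?_, ?_⟩⟩
      · linarith [hle t' ht' t ht p hp' hp hpz]
      · linarith [hle t ht t' ht' p hp hp' hpz]
    · exact ⟨0, fun t ht hp ↦ absurd ⟨t, ht, hp⟩ h⟩
  choose F hF using hpt
  exact ⟨F, fun t ht p hp ↦ hF p t ht hp⟩

lemma log_diam_sub_log_diam_le (ho : IsOpen Ω) (hb : Bornology.IsBounded Ω)
    (hΩ : HasLipschitzBoundary Ω) {𝒯 : Triangulation Ω}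
    (hreg : ∀ t ∈ 𝒯.tris, IsShapeRegular κ t) {z : E2} (hz : z ∈ 𝒯.verts) {t t' : Fin 3 → E2}
    (ht : t ∈ 𝒯.star z) (ht' : t' ∈ 𝒯.star z) :
    Real.log (diam (triSet t')) - Real.log (diam (triSet t)) ≤
      (4 * (𝒯.star z).card + 2) * -Real.log κ := by
  obtain ⟨K, -, hpath⟩ := exists_path_in_starZ ho hb hΩ
  obtain ⟨htT, i, rfl⟩ := mem_star.1 ht
  obtain ⟨htT', i', hi'⟩ := mem_star.1 ht'
  have hind := (hreg t htT).affineIndependent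
  have hind' := (hreg t' htT').affineIndependent
  have hx : t (i + 1) ≠ t i := hind.injective.ne ((by decide : ∀ i : Fin 3, i + 1 ≠ i) i)
  obtain ⟨k, hk, hseg⟩ := exists_vertex_notMem_segment hind' (hi' ▸ hx : t (i + 1) ≠ t' i')
  obtain ⟨s, ⟨hs, hs1⟩, x', y', c, hx', hy', hsub, hxc, hcy, havoid⟩ := hpath 𝒯 (t i) hz
    (t (i + 1)) (mem_starZ_iff.2 ⟨t, ht, vertex_mem_triSet t _⟩)
    (t' k) (mem_starZ_iff.2 ⟨t', ht', vertex_mem_triSet t' _⟩)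
  have hz' := havoid hx (hi' ▸ hind'.injective.ne hk) (hi' ▸ hseg)
  have hx't : x' ∈ triSet t := hx' ▸ homothety_mem_triSet ht ⟨hs.le, hs1⟩ (vertex_mem_triSet t _)
  have hy't : y' ∈ triSet t' :=
    hy' ▸ homothety_mem_triSet ht' ⟨hs.le, hs1⟩ (vertex_mem_triSet t' _)
  obtain ⟨F, hF⟩ := 𝒯.exists_abs_sub_log_diam_le hreg (t i)
  have hne : ∀ p ∈ segment ℝ x' c ∪ segment ℝ c y', p ≠ t i := fun p hp h ↦ hz' (h ▸ hp)
  have hchain := abs_sub_le_card_star_mul (F := F) (b := 2 * -Real.log κ) hsub hxc hcy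
    fun u hu p hp q hq hp' hq' _ ↦ by
      have hFp := abs_le.1 (hF u hu p hp (hne p hp'))
      have hFq := abs_le.1 (hF u hu q hq (hne q hq'))
      exact abs_le.2 ⟨by linarith [hFp.1, hFq.2], by linarith [hFp.2, hFq.1]⟩
  have hFx := abs_le.1 (hF t ht x' hx't (hne x' (Or.inl (left_mem_segment ℝ x' c))))
  have hFy := abs_le.1 (hF t' ht' y' hy't (hne y' (Or.inr (right_mem_segment ℝ c y'))))
  linarith [hFx.2, hFy.1, (abs_le.1 hchain).1]

lemma exists_diam_le_mul_diam_of_mem_star (ho : IsOpen Ω) (hb : Bornology.IsBounded Ω)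
    (hΩ : HasLipschitzBoundary Ω) (hκ : 0 < κ) :
    ∃ C > 0, ∀ (𝒯 : Triangulation Ω), (∀ t ∈ 𝒯.tris, IsShapeRegular κ t) → ∀ z ∈ 𝒯.verts,
      ∀ t ∈ 𝒯.star z, ∀ t' ∈ 𝒯.star z, diam (triSet t') ≤ C * diam (triSet t) := by
  obtain ⟨N, hN⟩ := exists_card_star_le hκ
  refine ⟨Real.exp ((4 * N + 2) * -Real.log κ), Real.exp_pos _, ?_⟩
  intro 𝒯 hreg z hz t ht t' ht'
  have hd := (hreg t (mem_star.1 ht).1).diam_pos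
  have hd' := (hreg t' (mem_star.1 ht').1).diam_pos
  have hlog : 0 ≤ -Real.log κ :=
    neg_nonneg.2 (Real.log_nonpos hκ.le (hreg t (mem_star.1 ht).1).le_one)
  have hcard : (4 * ((𝒯.star z).card : ℝ) + 2) * -Real.log κ ≤ (4 * N + 2) * -Real.log κ := by
    gcongr
    exact hN 𝒯 hreg z
  rw [← Real.log_le_log_iff hd' (by positivity), Real.log_mul (Real.exp_pos _).ne' hd.ne',
    Real.log_exp]
  linarith [log_diam_sub_log_diam_le ho hb hΩ hreg hz ht ht']

end Triangulation

end StarEstimates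

section SobolevGradient

variable {θ : ℝ} {Ω G : Set E2} {i : Fin 2} {v : E2 → ℝ}

/-- The seminorm `|w|_{1+θ,G}` of a function `w` with weak gradient `g`. -/
def gradientSemi (θ : ℝ) (G : Set E2) (g : Fin 2 → E2 → ℝ) : ℝ :=
  √(∑ i, gagSq θ G (g i))

/-- `g` is the weak gradient of `w` on `Ω`, and its components are square integrable with finite
Gagliardo seminorm of order `θ`; for `w ∈ L²(Ω)` this says that `w ∈ H^{1+θ}(Ω)`. -/
structure HasSobolevGradient (θ : ℝ) (Ω : Set E2) (w : E2 → ℝ) (g : Fin 2 → E2 → ℝ) : Prop where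
  hasWeakPD : ∀ i, HasWeakPD Ω i w (g i)
  memLp : ∀ i, MemLp (g i) 2 (volume.restrict Ω)
  gagFin : ∀ i, GagFin θ Ω (g i)

lemma gagSq_nonneg (θ : ℝ) (G : Set E2) (v : E2 → ℝ) : 0 ≤ gagSq θ G v :=
  integral_nonneg fun _ ↦ integral_nonneg fun _ ↦ by positivity

lemma sq_gradientSemi (θ : ℝ) (G : Set E2) (g : Fin 2 → E2 → ℝ) :
    gradientSemi θ G g ^ 2 = ∑ i, gagSq θ G (g i) :=
  Real.sq_sqrt (Finset.sum_nonneg fun i _ ↦ gagSq_nonneg θ G (g i))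

lemma GagFin.mono (h : GagFin θ Ω v) (hG : G ⊆ Ω) : GagFin θ G v :=
  h.mono_measure (Measure.prod_mono (Measure.restrict_mono_set _ hG)
    (Measure.restrict_mono_set _ hG))

lemma gagliardoEnergy_gradientForm {g : Fin 2 → E2 → ℝ} (hg : ∀ i, GagFin θ G (g i)) :
    gagliardoEnergy θ G (gradientForm g) = ENNReal.ofReal (gradientSemi θ G g ^ 2) := by
  have hkernel : ∀ p : E2 × E2, gagliardoKernel θ (gradientForm g) p.1 p.2 =
      ∑ i, (g i p.1 - g i p.2) ^ 2 / dist p.1 p.2 ^ (2 + 2 * θ) := fun p ↦ by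
    rw [gagliardoKernel, sq_norm_gradientForm_sub, Finset.sum_div]
  have hint : Integrable (fun p : E2 × E2 ↦ gagliardoKernel θ (gradientForm g) p.1 p.2)
      ((volume.restrict G).prod (volume.restrict G)) := by
    simp only [hkernel]
    exact integrable_finsetSum _ fun i _ ↦ hg i
  calc gagliardoEnergy θ G (gradientForm g)
      = ∫⁻ p, ENNReal.ofReal (gagliardoKernel θ (gradientForm g) p.1 p.2)
          ∂((volume.restrict G).prod (volume.restrict G)) :=
        (lintegral_prod _ hint.aestronglyMeasurable.aemeasurable.ennreal_ofReal).symm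
    _ = ENNReal.ofReal (∫ p, gagliardoKernel θ (gradientForm g) p.1 p.2
          ∂((volume.restrict G).prod (volume.restrict G))) :=
        (ofReal_integral_eq_lintegral_ofReal hint (.of_forall fun p ↦ by
          simp only [hkernel]; exact Finset.sum_nonneg fun i _ ↦ by positivity)).symm
    _ = ENNReal.ofReal (gradientSemi θ G g ^ 2) := by
        simp only [hkernel]
        rw [integral_finsetSum _ fun i _ ↦ hg i, sq_gradientSemi]
        simp only [gagSq, integral_prod _ (hg _)]

lemma HasWeakPD.mono (hΩ : IsOpen Ω) (hG : G ⊆ Ω) {g : E2 → ℝ} (h : HasWeakPD Ω i v g) :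
    HasWeakPD G i v g := by
  intro φ hφ
  have hzero : ∀ x ∈ Ω \ G, φ x = 0 := fun x hx ↦
    image_eq_zero_of_notMem_tsupport fun hx' ↦ hx.2 (hφ.2.2 hx')
  have hzero' : ∀ x ∈ Ω \ G, pd i φ x = 0 := fun x hx ↦ by
    rw [pd, image_eq_zero_of_notMem_tsupport fun hx' ↦
      hx.2 (hφ.2.2 (tsupport_fderiv_subset ℝ hx')), zero_apply]
  rw [← setIntegral_eq_of_subset_of_forall_sdiff_eq_zero hΩ.measurableSet hG fun x hx ↦ by
      rw [hzero' x hx, mul_zero],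
    ← setIntegral_eq_of_subset_of_forall_sdiff_eq_zero hΩ.measurableSet hG fun x hx ↦ by
      rw [hzero x hx, mul_zero]]
  exact h φ ⟨hφ.1, hφ.2.1, hφ.2.2.trans hG⟩

lemma HasWeakPD.congr {g g' : E2 → ℝ} (h : HasWeakPD G i v g) (hg : g =ᵐ[volume.restrict G] g') :
    HasWeakPD G i v g' := fun φ hφ ↦ by
  rw [h φ hφ]
  exact congrArg _ (integral_congr_ae (hg.mul (ae_eq_refl φ)))

end SobolevGradient

section InterpolationError

variable {Ω : Set E2} {θ κ : ℝ} {ℓ : ℕ}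

lemma MemV.eq_on_lagNodes {𝒯 : Triangulation Ω} {w W : E2 → ℝ} (hW : MemV Ω 𝒯 ℓ W)
    (ho : IsOpen Ω) (hℓ : ℓ ≠ 0) (hw : ∀ x ∈ frontier Ω, w x = 0)
    (hnode : ∀ x ∈ nodes Ω 𝒯 ℓ, W x = w x) {t : Fin 3 → E2} (ht : t ∈ 𝒯.tris) :
    ∀ x ∈ lagNodes ℓ t, W x = w x := fun x hx ↦ by
  by_cases hxΩ : x ∈ Ω
  · exact hnode x ⟨hxΩ, t, ht, hx⟩
  · have hxf : x ∈ frontier Ω := by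
      rw [ho.frontier_eq]
      exact ⟨Triangulation.triSet_subset_closure ht (lagNodes_subset_triSet hℓ t hx), hxΩ⟩
    rw [hW.2.1 x hxf, hw x hxf]

theorem exists_abs_interpolation_sub_le_of_subset (ho : IsOpen Ω) (hb : Bornology.IsBounded Ω)
    (hℓ : ℓ ≠ 0) (hθ : 0 < θ) (hθ1 : θ < 1) (hκ : 0 < κ) :
    ∃ C > 0, ∀ (t : Fin 3 → E2), IsShapeRegular κ t → ∀ G, interior (triSet t) ⊆ G → G ⊆ Ω →
      ∀ (w : E2 → ℝ) (g : Fin 2 → E2 → ℝ) (W : E2 → ℝ), HasSobolevGradient θ Ω w g →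
      ContinuousOn w (triSet t) →
      (∃ p : MvPolynomial (Fin 2) ℝ, p.totalDegree ≤ ℓ ∧ ∀ x ∈ triSet t, W x = pfun p x) →
      (∀ x ∈ lagNodes ℓ t, W x = w x) → ∀ x ∈ triSet t, ∀ y ∈ triSet t,
        |(w x - W x) - (w y - W y)| ≤ C * dist x y ^ θ * gradientSemi θ G g := by
  obtain ⟨C, hC, hest⟩ := exists_abs_interpolation_sub_le hℓ hθ hθ1 hκ
  refine ⟨C, hC, fun t ht G htG hGΩ w g W hg hw hW hnode ↦ ?_⟩
  have : IsFiniteMeasure (volume.restrict Ω) := isFiniteMeasure_restrict.2 hb.measure_lt_top.ne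
  have hmeas : ∀ i, AEMeasurable (g i) (volume.restrict Ω) := fun i ↦ (hg.memLp i).1.aemeasurable
  have hmk : ∀ i, g i =ᵐ[volume.restrict Ω] (hmeas i).mk := fun i ↦ (hmeas i).ae_eq_mk
  have hform : gradientForm (fun i ↦ (hmeas i).mk) =ᵐ[volume.restrict Ω] gradientForm g := by
    filter_upwards [ae_all_iff.2 hmk] with x hx
    simp only [gradientForm, hx]
  have htΩ := htG.trans hGΩ
  refine hest ht hw (fun i ↦ (hmeas i).measurable_mk)
    (fun i ↦ (((hg.memLp i).integrable one_le_two).congr (hmk i)).mono_measure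
      (Measure.restrict_mono_set _ htΩ))
    (fun i ↦ ((hg.hasWeakPD i).congr (hmk i)).mono ho htΩ) (Real.sqrt_nonneg _) ?_ hW hnode
  calc gagliardoEnergy θ (interior (triSet t)) (gradientForm fun i ↦ (hmeas i).mk)
      ≤ gagliardoEnergy θ G (gradientForm fun i ↦ (hmeas i).mk) := gagliardoEnergy_mono htG _
    _ = gagliardoEnergy θ G (gradientForm g) :=
        gagliardoEnergy_congr (ae_restrict_of_ae_restrict_of_subset hGΩ hform)
    _ = ENNReal.ofReal (gradientSemi θ G g ^ 2) :=
        gagliardoEnergy_gradientForm fun i ↦ (hg.gagFin i).mono hGΩ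

theorem exists_abs_interpolation_sub_le_on_star (ho : IsOpen Ω) (hb : Bornology.IsBounded Ω)
    (hΩ : HasLipschitzBoundary Ω) (hℓ : ℓ ≠ 0) (hθ : 0 < θ) (hθ1 : θ < 1) (hκ : 0 < κ) :
    ∃ C > 0, ∀ (𝒯 : Triangulation Ω), (∀ t ∈ 𝒯.tris, IsShapeRegular κ t) →
      ∀ (w : E2 → ℝ) (g : Fin 2 → E2 → ℝ) (W : E2 → ℝ), HasSobolevGradient θ Ω w g →
      ContinuousOn w (closure Ω) → (∀ x ∈ frontier Ω, w x = 0) → MemV Ω 𝒯 ℓ W →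
      (∀ x ∈ nodes Ω 𝒯 ℓ, W x = w x) → ∀ z ∈ 𝒯.verts,
      ∀ x ∈ starZ 𝒯 z, ∀ y ∈ starZ 𝒯 z, |(w x - W x) - (w y - W y)| ≤
        C * gradientSemi θ (interior (starZ 𝒯 z)) g * dist x y ^ θ := by
  obtain ⟨C₁, hC₁, htri⟩ := exists_abs_interpolation_sub_le_of_subset ho hb hℓ hθ hθ1 hκ
  obtain ⟨C₂, hC₂, hglue⟩ :=
    Triangulation.exists_holder_of_holder_on_triangles ho hb hΩ hκ hθ.le
  refine ⟨C₂ * C₁, by positivity, fun 𝒯 hreg w g W hg hwc hw0 hW hnode z hz x hx y hy ↦ ?_⟩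
  have hstar : interior (starZ 𝒯 z) ⊆ Ω :=
    (interior_mono Triangulation.starZ_subset_closure).trans_eq (hΩ.interior_closure ho)
  set S := gradientSemi θ (interior (starZ 𝒯 z)) g
  have hS : 0 ≤ S := Real.sqrt_nonneg _
  have hlocal : ∀ t ∈ 𝒯.star z, ∀ x ∈ triSet t, ∀ y ∈ triSet t,
      |(w x - W x) - (w y - W y)| ≤ C₁ * S * dist x y ^ θ := fun t ht x hx y hy ↦ by
    have htT := (Triangulation.mem_star.1 ht).1
    rw [mul_right_comm]
    exact htri t (hreg t htT) _
      (interior_mono fun p hp ↦ Triangulation.mem_starZ_iff.2 ⟨t, ht, hp⟩) hstar w g W hg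
      (hwc.mono (Triangulation.triSet_subset_closure htT)) (hW.2.2 t htT)
      (hW.eq_on_lagNodes ho hℓ hw0 hnode htT) x hx y hy
  exact (hglue 𝒯 hreg z hz (fun x ↦ w x - W x) _ (by positivity) hlocal x hx y hy).trans_eq
    (by ring)

end InterpolationError

section MeanSquareEstimates

lemma sqrt_setIntegral_sq_le {α : Type*} [MeasurableSpace α] {μ : Measure α} {A : Set α}
    (hA : μ A ≠ ⊤) {f : α → ℝ} {Q : ℝ} (hQ : 0 ≤ Q) (hf : ∀ x ∈ A, |f x| ≤ Q) :
    √(∫ x in A, f x ^ 2 ∂μ) ≤ Q * √(μ.real A) := by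
  have hsq : ∀ x ∈ A, ‖f x ^ 2‖ ≤ Q ^ 2 := fun x hx ↦ by
    rw [norm_pow, Real.norm_eq_abs]
    exact pow_le_pow_left₀ (abs_nonneg _) (hf x hx) 2
  have hle : ∫ x in A, f x ^ 2 ∂μ ≤ Q ^ 2 * μ.real A :=
    (le_abs_self _).trans (norm_setIntegral_le_of_norm_le_const hA.lt_top hsq)
  refine (Real.sqrt_le_sqrt hle).trans_eq ?_
  rw [Real.sqrt_mul (sq_nonneg Q), Real.sqrt_sq hQ]

lemma IsShapeRegular.mul_diam_le_three_mul_hT {κ : ℝ} {t : Fin 3 → E2} (ht : IsShapeRegular κ t) :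
    κ * diam (triSet t) ≤ 3 * hT t := by
  have hfat := ht.isFatConvexBody.mul_sq_diam_le
  have hsq : (κ * diam (triSet t) / 3) ^ 2 ≤ volume.real (triSet t) := by
    nlinarith [Real.pi_gt_three, sq_nonneg (κ * diam (triSet t) / 3)]
  have hroot : κ * diam (triSet t) / 3 ≤ hT t := Real.le_sqrt_of_sq_le hsq
  linarith

lemma edgeSeg_subset_triSet (t : Fin 3 → E2) (j : Fin 3) : edgeSeg t j ⊆ triSet t :=
  (convex_triSet t).segment_subset (vertex_mem_triSet t _) (vertex_mem_triSet t _)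

namespace Triangulation

variable {Ω : Set E2} {θ κ : ℝ}

lemma exists_dist_le_mul_diam_of_mem_starZ (ho : IsOpen Ω) (hb : Bornology.IsBounded Ω)
    (hΩ : HasLipschitzBoundary Ω) (hκ : 0 < κ) :
    ∃ C > 0, ∀ (𝒯 : Triangulation Ω), (∀ t ∈ 𝒯.tris, IsShapeRegular κ t) → ∀ z ∈ 𝒯.verts,
      ∀ t ∈ 𝒯.star z, ∀ x ∈ triSet t, ∀ y ∈ starZ 𝒯 z, dist x y ≤ C * diam (triSet t) := by
  obtain ⟨C, hC, hcomp⟩ := exists_diam_le_mul_diam_of_mem_star ho hb hΩ hκ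
  refine ⟨1 + C, by positivity, fun 𝒯 hreg z hz t ht x hx y hy ↦ ?_⟩
  obtain ⟨t', ht', hyt'⟩ := mem_starZ_iff.1 hy
  calc dist x y ≤ dist x z + dist z y := dist_triangle x z y
    _ ≤ diam (triSet t) + diam (triSet t') :=
        add_le_add (dist_le_diam_triSet hx (mem_triSet_of_mem_star ht))
          (dist_le_diam_triSet (mem_triSet_of_mem_star ht') hyt')
    _ ≤ (1 + C) * diam (triSet t) := by linarith [hcomp 𝒯 hreg z hz t ht t' ht']

lemma mem_star_of_mem_triSet {𝒯 : Triangulation Ω} {z : E2} (hz : z ∈ 𝒯.verts) {t : Fin 3 → E2}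
    (ht : t ∈ 𝒯.tris) (hzt : z ∈ triSet t) : t ∈ 𝒯.star z := by
  obtain ⟨t', hts'⟩ := star_nonempty hz
  obtain ⟨ht', i', rfl⟩ := mem_star.1 hts'
  exact mem_star.2 ⟨ht, 𝒯.exists_vertex_eq ht ht' hzt⟩

theorem exists_sqrt_integral_le_of_holder (ho : IsOpen Ω) (hb : Bornology.IsBounded Ω)
    (hΩ : HasLipschitzBoundary Ω) (hκ : 0 < κ) (hθ : 0 ≤ θ) :
    ∃ C > 0, ∀ (𝒯 : Triangulation Ω), (∀ t ∈ 𝒯.tris, IsShapeRegular κ t) → ∀ z ∈ 𝒯.verts,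
      ∀ (f : E2 → ℝ) (A : ℝ), 0 ≤ A →
      (∀ x ∈ starZ 𝒯 z, ∀ y ∈ starZ 𝒯 z, |f x - f y| ≤ A * dist x y ^ θ) →
      ∀ y ∈ starZ 𝒯 z, ∀ t ∈ 𝒯.star z,
        √(∫ x in triSet t, (f x - f y) ^ 2) ≤ C * (A * hT t ^ (1 + θ)) ∧
        ∀ j, √(∫ x in edgeSeg t j, (f x - f y) ^ 2 ∂μH[1]) ≤
          C * (A * dist (t (j + 1)) (t (j + 2)) ^ (1 / 2 + θ)) := by
  obtain ⟨D, hD, hdist⟩ := exists_dist_le_mul_diam_of_mem_starZ ho hb hΩ hκ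
  refine ⟨(D * (3 / κ)) ^ θ, by positivity, fun 𝒯 hreg z hz f A hA hf y hy t ht ↦ ?_⟩
  have htr := hreg t (mem_star.1 ht).1
  have hd := htr.diam_pos
  have hbound : ∀ h, 0 < h → κ * diam (triSet t) ≤ 3 * h → ∀ x ∈ triSet t,
      |f x - f y| ≤ A * ((D * (3 / κ)) ^ θ * h ^ θ) := fun h hh hdh x hx ↦ by
    refine (hf x (mem_starZ_iff.2 ⟨t, ht, hx⟩) y hy).trans ?_
    rw [← Real.mul_rpow (by positivity) hh.le]
    have hdh' : diam (triSet t) ≤ 3 / κ * h := by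
      rwa [div_mul_eq_mul_div, le_div_iff₀' hκ]
    gcongr
    calc dist x y ≤ D * diam (triSet t) := hdist 𝒯 hreg z hz t ht x hx y hy
      _ ≤ D * (3 / κ) * h := by rw [mul_assoc]; gcongr
  refine ⟨?_, fun j ↦ ?_⟩
  · have hTd := htr.mul_diam_le_three_mul_hT
    have hT0 : 0 < hT t := by nlinarith [mul_pos hκ hd]
    calc √(∫ x in triSet t, (f x - f y) ^ 2)
        ≤ A * ((D * (3 / κ)) ^ θ * hT t ^ θ) * √(volume.real (triSet t)) :=
          sqrt_setIntegral_sq_le (isCompact_triSet t).measure_ne_top (by positivity)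
            (hbound _ hT0 hTd)
      _ = (D * (3 / κ)) ^ θ * (A * hT t ^ (1 + θ)) := by
          rw [Real.rpow_add hT0, Real.rpow_one, Measure.real, ← hT]
          ring
  · have hEd := htr.mul_diam_le_dist ((by decide : ∀ j : Fin 3, j + 1 ≠ j + 2) j)
    have hE0 : 0 < dist (t (j + 1)) (t (j + 2)) := (mul_pos hκ hd).trans_le hEd
    have hμ : μH[1] (edgeSeg t j) = edist (t (j + 1)) (t (j + 2)) := hausdorffMeasure_segment _ _
    calc √(∫ x in edgeSeg t j, (f x - f y) ^ 2 ∂μH[1])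
        ≤ A * ((D * (3 / κ)) ^ θ * dist (t (j + 1)) (t (j + 2)) ^ θ) *
            √(μH[1].real (edgeSeg t j)) :=
          sqrt_setIntegral_sq_le (hμ ▸ edist_ne_top _ _) (by positivity) fun x hx ↦
            hbound _ hE0 (by linarith) x (edgeSeg_subset_triSet t j hx)
      _ = (D * (3 / κ)) ^ θ * (A * dist (t (j + 1)) (t (j + 2)) ^ (1 / 2 + θ)) := by
          rw [Measure.real, hμ, ← dist_edist, Real.sqrt_eq_rpow, Real.rpow_add hE0]
          ring

end Triangulation

end MeanSquareEstimates

theorem interpolation_error_general {Ω : Set E2} (hΩo : IsOpen Ω) (hΩb : Bornology.IsBounded Ω)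
    (hΩl : HasLipschitzBoundary Ω) {θ : ℝ} (hθ0 : 0 < θ) (hθ : θ < 1) {ℓ : ℕ} (hℓ : 1 ≤ ℓ)
    {σ : ℝ} (hσ : 0 < σ) :
    ∃ C : ℝ, 0 < C ∧ ∀ (𝒯 : Triangulation Ω), 𝒯.angleGE σ →
      ∀ (w : E2 → ℝ) (g : Fin 2 → E2 → ℝ) (W : E2 → ℝ), HasSobolevGradient θ Ω w g →
      ContinuousOn w (closure Ω) → (∀ x ∈ frontier Ω, w x = 0) → MemV Ω 𝒯 ℓ W →
      (∀ x ∈ nodes Ω 𝒯 ℓ, W x = w x) → ∀ z ∈ 𝒯.verts,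
        (∀ x ∈ starZ 𝒯 z, ∀ y ∈ starZ 𝒯 z, |(w x - W x) - (w y - W y)| ≤
          C * dist x y ^ θ * gradientSemi θ (interior (starZ 𝒯 z)) g) ∧
        ∀ c, (∃ xz ∈ starZ 𝒯 z, c = w xz - W xz) →
          (∀ t ∈ 𝒯.tris, z ∈ triSet t → √(∫ x in triSet t, ((w x - W x) - c) ^ 2) ≤
            C * hT t ^ (1 + θ) * gradientSemi θ (interior (starZ 𝒯 z)) g) ∧
          (∀ t ∈ 𝒯.tris, ∀ j, z ∈ edgeSeg t j →
            √(∫ x in edgeSeg t j, ((w x - W x) - c) ^ 2 ∂μH[1]) ≤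
              C * dist (t (j + 1)) (t (j + 2)) ^ ((1 : ℝ) / 2 + θ) *
                gradientSemi θ (interior (starZ 𝒯 z)) g) := by
  have hκ : 0 < Real.sin (min σ 1) ^ 2 := pow_pos (sin_min_one_pos hσ) 2
  obtain ⟨C₁, hC₁, hholder⟩ := exists_abs_interpolation_sub_le_on_star hΩo hΩb hΩl
    (Nat.one_le_iff_ne_zero.1 hℓ) hθ0 hθ hκ
  obtain ⟨C₂, hC₂, hmean⟩ :=
    Triangulation.exists_sqrt_integral_le_of_holder hΩo hΩb hΩl hκ hθ0.le
  refine ⟨C₁ * (1 + C₂), by positivity, fun 𝒯 hσ𝒯 w g W hg hwc hw0 hW hnode z hz ↦ ?_⟩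
  have hreg : ∀ t ∈ 𝒯.tris, IsShapeRegular (Real.sin (min σ 1) ^ 2) t := fun t ht ↦
    (hσ𝒯 t ht).isShapeRegular hσ (𝒯.nondeg t ht)
  set S := gradientSemi θ (interior (starZ 𝒯 z)) g
  have hS : 0 ≤ S := Real.sqrt_nonneg _
  have hstar := hholder 𝒯 hreg w g W hg hwc hw0 hW hnode z hz
  have hconst : ∀ r : ℝ, 0 ≤ r → C₁ * S * r ≤ C₁ * (1 + C₂) * r * S ∧
      C₂ * (C₁ * S * r) ≤ C₁ * (1 + C₂) * r * S := fun r hr ↦ by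
    have := mul_nonneg (mul_nonneg hC₁.le hS) hr
    constructor <;> nlinarith
  refine ⟨fun x hx y hy ↦ (hstar x hx y hy).trans (hconst _ (by positivity)).1, ?_⟩
  rintro _ ⟨y, hy, rfl⟩
  have hmeanz := fun t (ht : t ∈ 𝒯.tris) (hzt : z ∈ triSet t) ↦
    hmean 𝒯 hreg z hz (fun x ↦ w x - W x) _ (by positivity) hstar y hy t
      (Triangulation.mem_star_of_mem_triSet hz ht hzt)
  exact ⟨fun t ht hzt ↦ (hmeanz t ht hzt).1.trans
      (hconst _ (Real.rpow_nonneg (Real.sqrt_nonneg _) _)).2,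
    fun t ht j hzj ↦ ((hmeanz t ht (edgeSeg_subset_triSet t j hzj)).2 j).trans
      (hconst _ (by positivity)).2⟩

/-- **Interpolation error estimates** (Lemma 3.4): with `w̃ := w − I_𝒯 w` for the
Lagrange interpolant `I_𝒯 w ∈ V_𝒯` of `w ∈ H^{1+θ}(Ω) ∩ C(Ω̄)` with `w = 0` on `∂Ω`:
for every vertex `z` and `x, y ∈ ω_z`, `|w̃(x) − w̃(y)| ≤ C |x−y|^θ |w|_{1+θ,ω_z}`, and
if `c = w̃(x^z)` for some `x^z ∈ ω_z`, then `‖w̃ − c‖_{0,T} ≤ C h_T^{1+θ} |w|_{1+θ,ω_z}`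
and `‖w̃ − c‖_{0,E} ≤ C h_E^{1/2+θ} |w|_{1+θ,ω_z}` for all triangles `T` and edges `E`
containing `z`.  Here `g i` are the weak partial derivatives of `w`. -/
theorem interpolation_error (Ω : Set E2) (hΩo : IsOpen Ω) (hΩc : IsConnected Ω)
    (hΩb : Bornology.IsBounded Ω) (hΩp : IsPolygonal Ω)
    (hΩl : HasLipschitzBoundary Ω)
    (θ : ℝ) (hθ0 : 0 < θ) (hθ : θ < 1 / 2) (ℓ : ℕ) (hℓ : 1 ≤ ℓ) (σ : ℝ) (hσ : 0 < σ) :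
    ∃ C : ℝ, 0 < C ∧ ∀ (𝒯 : Triangulation Ω), 𝒯.angleGE σ →
      ∀ (w : E2 → ℝ) (g : Fin 2 → E2 → ℝ) (W : E2 → ℝ),
        MemLp w 2 (volume.restrict Ω) →
        (∀ i, HasWeakPD Ω i w (g i)) →
        (∀ i, MemLp (g i) 2 (volume.restrict Ω)) →
        (∀ i, GagFin θ Ω (g i)) →
        ContinuousOn w (closure Ω) →
        (∀ x ∈ frontier Ω, w x = 0) →
        MemV Ω 𝒯 ℓ W →
        (∀ x ∈ nodes Ω 𝒯 ℓ, W x = w x) →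
        ∀ z ∈ 𝒯.verts,
          (∀ x ∈ starZ 𝒯 z, ∀ y ∈ starZ 𝒯 z,
            |(w x - W x) - (w y - W y)| ≤
              C * dist x y ^ θ *
                Real.sqrt (∑ i : Fin 2, gagSq θ (interior (starZ 𝒯 z)) (g i))) ∧
          ∀ (c : ℝ), (∃ xz ∈ starZ 𝒯 z, c = w xz - W xz) →
            (∀ t ∈ 𝒯.tris, z ∈ triSet t →
              Real.sqrt (∫ x in triSet t, ((w x - W x) - c) ^ 2) ≤
                C * hT t ^ (1 + θ) *
                  Real.sqrt (∑ i : Fin 2, gagSq θ (interior (starZ 𝒯 z)) (g i))) ∧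
            (∀ t ∈ 𝒯.tris, ∀ j : Fin 3, z ∈ edgeSeg t j →
              Real.sqrt (∫ x in edgeSeg t j, ((w x - W x) - c) ^ 2 ∂(μH[1])) ≤
                C * dist (t (j + 1)) (t (j + 2)) ^ ((1 : ℝ) / 2 + θ) *
                  Real.sqrt (∑ i : Fin 2, gagSq θ (interior (starZ 𝒯 z)) (g i))) := by
  obtain ⟨C, hC, hest⟩ := interpolation_error_general hΩo hΩb hΩl hθ0 (by linarith) hℓ hσ
  exact ⟨C, hC, fun 𝒯 h𝒯 w g W _ hw hg hgag ↦ hest 𝒯 h𝒯 w g W ⟨hw, hg, hgag⟩⟩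

end
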